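/- arXiv:2306.11824 — 3 statements merged into one kernel-verified Lean document; each statement's English description precedes it below -/
import Mathlib

section
/- Let H ∈ (1/2, 1), let W^H be a fractional Brownian motion with Hurst parameter H on a probability space (Ω, F, P), let x₀ ∈ ℝ and T > 0, and let b : ℝ → ℝ be measurable, locally bounded, and locally Hölder continuous with some exponent α > 2 − 1/H (i.e., on every compact set K ⊂ ℝ there exists c ≥ 0 with |b(x) − b(y)| ≤ c|x − y|^α for x, y ∈ K). Suppose the process X = (X_t)_{t∈[0,T]} has P-a.s. continuous sample paths, is adapted to the natural filtration of W^H, and satisfies X_t = x₀ + W^H_t + ∫₀^t b(X_s) ds for all 0 ≤ t ≤ T, P-a.s. Then the law of (X_t)_{t∈[0,T]} is equivalent to (mutually absolutely continuous with) the law of (x₀ + W^H_t)_{t∈[0,T]}. -/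
open MeasureTheory ProbabilityTheory Real

/-- Covariance function of fractional Brownian motion with Hurst parameter `H`,
for times `s, t ≥ 0`. -/
noncomputable def fbmCov (H s t : ℝ) : ℝ :=
  (s ^ (2 * H) + t ^ (2 * H) - |t - s| ^ (2 * H)) / 2

/-- `W` is a fractional Brownian motion with Hurst parameter `H` on `(Ω, F, P)`:
each `W t` is measurable, `P`-a.s. the sample paths are continuous on `[0, ∞)` with
`W 0 = 0`, and all finite-dimensional distributions are centered Gaussian with covariance
`fbmCov H`, expressed through one-dimensional distributions of linear combinations. -/
def IsFractionalBM {Ω : Type*} [MeasurableSpace Ω] (P : Measure Ω) (H : ℝ)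
    (W : ℝ → Ω → ℝ) : Prop :=
  (∀ t : ℝ, Measurable (W t)) ∧
  (∀ᵐ ω ∂P, ContinuousOn (fun t => W t ω) (Set.Ici 0) ∧ W 0 ω = 0) ∧
  (∀ (n : ℕ) (t : Fin n → ℝ), (∀ i, 0 ≤ t i) → ∀ c : Fin n → ℝ,
    P.map (fun ω => ∑ i, c i * W (t i) ω) =
      gaussianReal 0 (∑ i, ∑ j, c i * c j * fbmCov H (t i) (t j)).toNNReal)

/-- The law of the process `(Z t)_{t ∈ [0,T]}`: the pushforward of `P` under the map sending
`ω` to the path `t ↦ Z t ω`, as a measure on the space of functions `[0,T] → ℝ` equipped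
with the product σ-algebra. -/
noncomputable def processLaw {Ω : Type*} [MeasurableSpace Ω] (P : Measure Ω) (T : ℝ)
    (Z : ℝ → Ω → ℝ) : Measure (Set.Icc (0 : ℝ) T → ℝ) :=
  P.map (fun ω => fun t : Set.Icc (0 : ℝ) T => Z t ω)

/-!
Euler schemes with the same noise and different drifts `β₁`, `β₂` differ by a shift of the noise
which is causal: its value at a step depends on the past only. After whitening the increments of
`W` by a Cholesky factorization, the discrete Girsanov formula gives `P(A shifted) ≤ e ^ K P(A) + δ`
with `δ` governed by the mean squared Cameron–Martin norm of the shift; no integrability of the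
Girsanov density has to be known. Writing `r ^ (2H)` as a mixture of the variograms
`e ^ (-θr) - 1 + θr`, `θ > 0`, bounds this norm, uniformly in the mesh, by a fractional Sobolev
energy of order `H - 1 / 2` of `β₁ - β₂` along the scheme. As the scheme is Hölder continuous of
order `H` in mean square, the energy is finite, and small when `β₁ - β₂` is small in `C ^ a`, as
soon as `H a > H - 1 / 2`.

No drift comparison applies to `X` itself, since `b` is not Lipschitz and the Euler scheme need not
converge. But a solution with drift `b` lies between the Euler schemes with Lipschitz drifts
`β₁ ≤ b - ε` and `b + ε ≤ β₂`, because the Euler map of a Lipschitz drift is monotone for small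
mesh. If both drifts are `C ^ a` close to `b`, the laws of the two schemes nearly agree by the first
part, so a finite combination of events `x t ≤ r` has nearly the same probability for `X` as for
either scheme, and the first part compares the latter with the drift-free scheme `x₀ + W`. Such
events generate the product σ-algebra.
-/

open scoped ENNReal NNReal

/-! ### Causal shifts of the standard Gaussian measure -/

section CausalShift

/-- The standard Gaussian measure on `ℝⁿ`, the law of a discrete white noise. -/
noncomputable abbrev stdGaussianPi (n : ℕ) : Measure (Fin n → ℝ) :=
  Measure.pi fun _ => gaussianReal 0 1

/-- A map of real sequences (indexed by `ℕ` or by `Fin n`) whose `i`-th coordinate depends on the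
coordinates before `i` only: the discrete analogue of a predictable process. -/
def StrictlyCausal {ι : Type*} [LT ι] (v : (ι → ℝ) → ι → ℝ) : Prop :=
  ∀ i x y, (∀ j < i, x j = y j) → v x i = v y i

/-- The second order remainder `e⁻ˣ - 1 + x` of the exponential. -/
noncomputable def expRemainder (x : ℝ) : ℝ := exp (-x) - 1 + x

theorem expRemainder_nonneg (x : ℝ) : 0 ≤ expRemainder x := by
  have := add_one_le_exp (-x)
  unfold expRemainder
  linarith

theorem expRemainder_pos {x : ℝ} (hx : x ≠ 0) : 0 < expRemainder x := by
  have := add_one_lt_exp (neg_ne_zero.2 hx)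
  unfold expRemainder
  linarith

theorem expRemainder_le_expRemainder {x y : ℝ} (hx : 0 ≤ x) (hxy : x ≤ y) :
    expRemainder x ≤ expRemainder y := by
  have h_tangent : exp (-x) * (1 - (y - x)) ≤ exp (-y) := by
    rw [show -y = -x + -(y - x) by ring, exp_add]
    gcongr
    linarith [add_one_le_exp (-(y - x))]
  have h_le_one : exp (-x) ≤ 1 := exp_le_one_iff.2 (by linarith)
  unfold expRemainder
  nlinarith

theorem gaussianPDF_add (w a : ℝ) : gaussianPDF 0 1 (a + w) =
    gaussianPDF 0 1 a * ENNReal.ofReal (exp (-(w * a) - w ^ 2 / 2)) := by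
  simp only [gaussianPDF, gaussianPDFReal]
  rw [← ENNReal.ofReal_mul (by positivity), mul_assoc _ (rexp _) (rexp _), ← exp_add]
  congr 3
  push_cast
  ring

theorem lintegral_gaussianReal_add (w : ℝ) {g : ℝ → ℝ≥0∞} (hg : Measurable g) :
    ∫⁻ a, g (a + w) * ENNReal.ofReal (exp (-(w * a) - w ^ 2 / 2)) ∂gaussianReal 0 1
      = ∫⁻ a, g a ∂gaussianReal 0 1 := by
  rw [gaussianReal_of_var_ne_zero 0 one_ne_zero,
    lintegral_withDensity_eq_lintegral_mul _ (measurable_gaussianPDF 0 1) (by fun_prop),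
    lintegral_withDensity_eq_lintegral_mul _ (measurable_gaussianPDF 0 1) hg,
    ← lintegral_add_right_eq_self (gaussianPDF 0 1 * g) w]
  refine lintegral_congr fun a => ?_
  simp only [Pi.mul_apply, gaussianPDF_add]
  ring

theorem measurable_fin_snoc (n : ℕ) :
    Measurable fun p : (Fin n → ℝ) × ℝ => (Fin.snoc p.1 p.2 : Fin (n + 1) → ℝ) := by
  refine measurable_pi_iff.2 fun i => Fin.lastCases ?_ (fun j => ?_) i
  · simpa using measurable_snd
  · simp only [Fin.snoc_castSucc]
    fun_prop

theorem lintegral_stdGaussianPi_succ {n : ℕ} {F : (Fin (n + 1) → ℝ) → ℝ≥0∞} (hF : Measurable F) :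
    ∫⁻ x, F x ∂stdGaussianPi (n + 1) =
      ∫⁻ x, ∫⁻ a, F (Fin.snoc x a) ∂gaussianReal 0 1 ∂stdGaussianPi n := by
  have h := (measurePreserving_piFinSuccAbove (fun _ : Fin (n + 1) => gaussianReal 0 1)
    (Fin.last n)).symm
  rw [← h.lintegral_comp hF, lintegral_prod_symm]
  · simp [MeasurableEquiv.piFinSuccAbove, Fin.insertNthEquiv, Fin.insertNth_last']
  · exact (hF.comp (MeasurableEquiv.measurable _)).aemeasurable

namespace StrictlyCausal

variable {n : ℕ}

theorem neg {v : (Fin n → ℝ) → Fin n → ℝ} (hv : StrictlyCausal v) : StrictlyCausal fun x => -v x :=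
  fun i x y h => congrArg Neg.neg (hv i x y h)

theorem apply_snoc {v : (Fin (n + 1) → ℝ) → Fin (n + 1) → ℝ} (hv : StrictlyCausal v)
    (x : Fin n → ℝ) (a : ℝ) (i : Fin (n + 1)) : v (Fin.snoc x a) i = v (Fin.snoc x 0) i := by
  refine hv _ _ _ fun j hj => ?_
  obtain ⟨k, rfl⟩ := Fin.exists_castSucc_eq.2 (hj.trans_le (Fin.le_last _)).ne
  simp

theorem init {v : (Fin (n + 1) → ℝ) → Fin (n + 1) → ℝ} (hv : StrictlyCausal v) :
    StrictlyCausal fun (x : Fin n → ℝ) i => v (Fin.snoc x 0) i.castSucc := by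
  refine fun i x y hxy => hv _ _ _ fun j hj => ?_
  obtain ⟨k, rfl⟩ := Fin.exists_castSucc_eq.2 (hj.trans_le (Fin.le_last _)).ne
  simpa using hxy k (by simpa using hj)

theorem snoc_add {v : (Fin (n + 1) → ℝ) → Fin (n + 1) → ℝ} (hv : StrictlyCausal v)
    (x : Fin n → ℝ) (a : ℝ) : (Fin.snoc x a : Fin (n + 1) → ℝ) + v (Fin.snoc x a) =
      Fin.snoc (x + fun i => v (Fin.snoc x 0) i.castSucc) (a + v (Fin.snoc x 0) (Fin.last n)) := by
  ext i
  refine Fin.lastCases ?_ (fun j => ?_) i <;> simp [hv.apply_snoc x a]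

/-- Girsanov's formula in discrete time: conditionally on the first `n` coordinates the last
one is shifted by a constant. -/
theorem lintegral_add_mul_exp {v : (Fin n → ℝ) → Fin n → ℝ} (hc : StrictlyCausal v)
    (hv : Measurable v) {f : (Fin n → ℝ) → ℝ≥0∞} (hf : Measurable f) :
    ∫⁻ x, f (x + v x) * ENNReal.ofReal (exp (-(∑ i, v x i * x i) - (∑ i, v x i ^ 2) / 2))
      ∂stdGaussianPi n = ∫⁻ x, f x ∂stdGaussianPi n := by
  induction n with
  | zero =>
    refine lintegral_congr fun x => ?_
    simp [Subsingleton.elim (x + v x) x]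
  | succ n ih =>
    have h_snoc_zero : Measurable fun x : Fin n → ℝ => (Fin.snoc x (0 : ℝ) : Fin (n + 1) → ℝ) :=
      (measurable_fin_snoc n).comp (measurable_id.prodMk measurable_const)
    have h_init : Measurable fun (x : Fin n → ℝ) i => v (Fin.snoc x 0) (Fin.castSucc i) :=
      measurable_pi_iff.2 fun i => (measurable_pi_apply i.castSucc).comp (hv.comp h_snoc_zero)
    have h_inner : Measurable fun x : Fin n → ℝ => ∫⁻ a, f (Fin.snoc x a) ∂gaussianReal 0 1 :=
      (hf.comp (measurable_fin_snoc n)).lintegral_prod_right'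
    rw [lintegral_stdGaussianPi_succ (by fun_prop), lintegral_stdGaussianPi_succ hf,
      ← ih hc.init h_init h_inner]
    refine lintegral_congr fun x => ?_
    set v' : Fin n → ℝ := fun i => v (Fin.snoc x 0) i.castSucc
    set w : ℝ := v (Fin.snoc x 0) (Fin.last n)
    have hg : Measurable fun a => f (Fin.snoc (x + v') a) :=
      hf.comp ((measurable_fin_snoc n).comp (measurable_const.prodMk measurable_id))
    rw [← lintegral_gaussianReal_add w hg, ← lintegral_mul_const _ (by fun_prop)]
    refine lintegral_congr fun a => ?_
    rw [hc.snoc_add, mul_assoc, ← ENNReal.ofReal_mul (exp_nonneg _), ← exp_add]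
    simp only [hc.apply_snoc x a, Fin.sum_univ_castSucc, Fin.snoc_castSucc, Fin.snoc_last]
    congr 3
    ring

end StrictlyCausal

/-- With `D = exp (-s - q / 2)` and `E = exp (s - q / 2)` the last summand is nonnegative, and it
exceeds `1` as soon as `D < exp (-K)`. -/
theorem le_exp_mul_mul_exp_add {f s q K : ℝ} (hf0 : 0 ≤ f) (hf1 : f ≤ 1) (hK : 0 < K) :
    f + 2 / expRemainder K ≤ exp K * (f * exp (-s - q / 2)) +
      (exp (-s - q / 2) + exp (s - q / 2) + q) / expRemainder K := by
  have hκ : 0 < expRemainder K := expRemainder_pos hK.ne'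
  have hE : 1 + (s - q / 2) ≤ exp (s - q / 2) := by linarith [add_one_le_exp (s - q / 2)]
  suffices f - exp K * (f * exp (-s - q / 2)) ≤
      (exp (-s - q / 2) + exp (s - q / 2) + q - 2) / expRemainder K by
    rw [sub_div] at this
    linarith
  rcases le_total (s + q / 2) K with hsK | hsK
  · have h_one : 1 ≤ exp K * exp (-s - q / 2) := by
      rw [← exp_add]
      exact one_le_exp (by linarith)
    have hD := add_one_le_exp (-s - q / 2)
    calc f - exp K * (f * exp (-s - q / 2)) ≤ 0 := by nlinarith
      _ ≤ _ := div_nonneg (by linarith) hκ.le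
  · calc f - exp K * (f * exp (-s - q / 2)) ≤ 1 :=
        (sub_le_self _ (by positivity)).trans hf1
      _ ≤ _ := by
        have h_mono := expRemainder_le_expRemainder hK.le hsK
        rw [one_le_div hκ]
        refine h_mono.trans ?_
        rw [expRemainder, neg_add']
        linarith

theorem add_two_mul_ofReal_inv_le {f : ℝ≥0∞} {s q K : ℝ} (hf : f ≤ 1) (hq : 0 ≤ q) (hK : 0 < K) :
    f + 2 * ENNReal.ofReal (expRemainder K)⁻¹ ≤
      ENNReal.ofReal (exp K) * (f * ENNReal.ofReal (exp (-s - q / 2))) +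
        (ENNReal.ofReal (exp (-s - q / 2)) + ENNReal.ofReal (exp (s - q / 2)) + ENNReal.ofReal q) *
          ENNReal.ofReal (expRemainder K)⁻¹ := by
  have : 0 ≤ (expRemainder K)⁻¹ := inv_nonneg.2 (expRemainder_nonneg K)
  have h := ENNReal.ofReal_le_ofReal (le_exp_mul_mul_exp_add (s := s) (q := q)
    ENNReal.toReal_nonneg (ENNReal.toReal_mono ENNReal.one_ne_top hf) hK)
  simp only [div_eq_mul_inv _ (expRemainder K)] at h
  rw [ENNReal.ofReal_add (by positivity) (by positivity),
    ENNReal.ofReal_add (by positivity) (by positivity), ENNReal.ofReal_mul (by positivity),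
    ENNReal.ofReal_mul (by positivity), ENNReal.ofReal_mul (by positivity),
    ENNReal.ofReal_mul (by positivity), ENNReal.ofReal_add (by positivity) hq,
    ENNReal.ofReal_add (by positivity) (by positivity),
    ENNReal.ofReal_toReal (hf.trans_lt ENNReal.one_lt_top).ne] at h
  simpa using h

theorem StrictlyCausal.lintegral_add_le {n : ℕ} {v : (Fin n → ℝ) → Fin n → ℝ}
    (hc : StrictlyCausal v) (hv : Measurable v) {f : (Fin n → ℝ) → ℝ≥0∞} (hf : Measurable f)
    (hf1 : ∀ x, f x ≤ 1) {K : ℝ} (hK : 0 < K) :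
    ∫⁻ x, f (x + v x) ∂stdGaussianPi n ≤ ENNReal.ofReal (exp K) * ∫⁻ x, f x ∂stdGaussianPi n +
      (∫⁻ x, ENNReal.ofReal (∑ i, v x i ^ 2) ∂stdGaussianPi n) *
        ENNReal.ofReal (expRemainder K)⁻¹ := by
  set s : (Fin n → ℝ) → ℝ := fun x => ∑ i, v x i * x i
  set q : (Fin n → ℝ) → ℝ := fun x => ∑ i, v x i ^ 2
  set D : (Fin n → ℝ) → ℝ≥0∞ := fun x => ENNReal.ofReal (exp (-s x - q x / 2))
  set E : (Fin n → ℝ) → ℝ≥0∞ := fun x => ENNReal.ofReal (exp (s x - q x / 2))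
  set κ : ℝ≥0∞ := ENNReal.ofReal (expRemainder K)⁻¹
  have hs : Measurable s := by fun_prop
  have hq : Measurable q := by fun_prop
  have hD : ∫⁻ x, D x ∂stdGaussianPi n = 1 := by
    simpa using hc.lintegral_add_mul_exp hv (f := fun _ => 1) measurable_const
  have hfD : ∫⁻ x, f (x + v x) * D x ∂stdGaussianPi n = ∫⁻ x, f x ∂stdGaussianPi n :=
    hc.lintegral_add_mul_exp hv hf
  have hE : ∫⁻ x, E x ∂stdGaussianPi n = 1 := by
    simpa [E, s] using hc.neg.lintegral_add_mul_exp hv.neg (f := fun _ => 1) measurable_const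
  have h_pointwise (x : Fin n → ℝ) : f (x + v x) + 2 * κ ≤
      ENNReal.ofReal (exp K) * (f (x + v x) * D x) + (D x + E x + ENNReal.ofReal (q x)) * κ :=
    add_two_mul_ofReal_inv_le (hf1 _) (Finset.sum_nonneg fun i _ => sq_nonneg _) hK
  have h_int := lintegral_mono (μ := stdGaussianPi n) h_pointwise
  rw [lintegral_add_right _ measurable_const, lintegral_const, measure_univ, mul_one,
    lintegral_add_right _ (by fun_prop), lintegral_const_mul _ (by fun_prop), hfD,
    lintegral_mul_const _ (by fun_prop), lintegral_add_right _ (by fun_prop),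
    lintegral_add_right _ (by fun_prop), hD, hE, add_mul, one_add_one_eq_two, add_left_comm,
    add_comm _ (2 * κ)] at h_int
  exact (ENNReal.add_le_add_iff_left (by finiteness)).1 h_int

end CausalShift

/-! ### A Cameron–Martin bound for fractional Gaussian noise -/

section IncrementCov

/-- The covariance at lag `x` of the unit increments of a process `Z` with stationary increments
and variogram `f |t - s| = E (Z t - Z s) ^ 2`. -/
noncomputable def incrementCov (f : ℝ → ℝ) (x : ℝ) : ℝ :=
  (f |x + 1| + f |x - 1| - 2 * f |x|) / 2

/-- The Toeplitz quadratic form `∑ᵢⱼ dᵢ dⱼ c (i - j)` on the first `n` coordinates. -/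
noncomputable def toeplitzForm (c : ℝ → ℝ) (n : ℕ) (d : ℕ → ℝ) : ℝ :=
  ∑ i ∈ Finset.range n, ∑ j ∈ Finset.range n, d i * d j * c ((i : ℝ) - j)

/-- The covariance of fractional Gaussian noise, i.e. of the unit increments of fractional
Brownian motion. -/
noncomputable def fgnCov (H : ℝ) : ℝ → ℝ := incrementCov fun r => r ^ (2 * H)

theorem incrementCov_neg (f : ℝ → ℝ) (x : ℝ) : incrementCov f (-x) = incrementCov f x := by
  have h_add : |-x + 1| = |x - 1| := by rw [← abs_neg]; ring_nf
  have h_sub : |-x - 1| = |x + 1| := by rw [← abs_neg]; ring_nf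
  simp only [incrementCov, h_add, h_sub, abs_neg]
  ring

theorem incrementCov_sub_natCast (f : ℝ → ℝ) (i j : ℕ) :
    incrementCov f ((i : ℝ) - j) = incrementCov f (Nat.dist i j) := by
  rcases le_total i j with h | h
  · rw [Nat.dist_eq_sub_of_le h, Nat.cast_sub h, ← incrementCov_neg, neg_sub]
  · rw [Nat.dist_eq_sub_of_le_right h, Nat.cast_sub h]

theorem incrementCov_zero (f : ℝ → ℝ) : incrementCov f 0 = f 1 - f 0 := by
  simp only [incrementCov, zero_add, zero_sub, abs_neg, abs_one, abs_zero]
  ring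

theorem incrementCov_natCast_succ (f : ℝ → ℝ) (k : ℕ) :
    incrementCov f ((k + 1 : ℕ) : ℝ) = (f (k + 2) + f k - 2 * f (k + 1)) / 2 := by
  have hk : (0 : ℝ) ≤ k := k.cast_nonneg
  simp only [incrementCov, Nat.cast_add, Nat.cast_one, add_sub_cancel_right]
  rw [abs_of_nonneg hk, abs_of_nonneg (by linarith), abs_of_nonneg (by linarith), add_assoc,
    one_add_one_eq_two]

end IncrementCov

section DiscountedSums

/-- The exponentially discounted sum `∑ k ≤ i, q ^ (i - k) * φ k`, as a recursion in `i`. -/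
def discountedSum (q : ℝ) (φ : ℕ → ℝ) : ℕ → ℝ
  | 0 => φ 0
  | i + 1 => q * discountedSum q φ i + φ (i + 1)

/-- The backward difference of a sequence, with the convention `u (-1) = 0`. -/
def backwardDiff (u : ℕ → ℝ) : ℕ → ℝ
  | 0 => u 0
  | i + 1 => u (i + 1) - u i

/-- The discounted sum of the future of `d` up to time `n`, the adjoint of `discountedSum`. -/
def discountedTail (q : ℝ) (n : ℕ) (d : ℕ → ℝ) (k : ℕ) : ℝ :=
  ∑ i ∈ Finset.range n, if k ≤ i then q ^ (i - k) * d i else 0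

theorem discountedSum_eq_sum (q : ℝ) (φ : ℕ → ℝ) (i : ℕ) :
    discountedSum q φ i = ∑ k ∈ Finset.range (i + 1), q ^ (i - k) * φ k := by
  induction i with
  | zero => simp [discountedSum]
  | succ i ih =>
    rw [Finset.sum_range_succ, discountedSum, ih, Finset.mul_sum]
    simp only [tsub_self, pow_zero, one_mul, add_left_inj]
    refine Finset.sum_congr rfl fun k hk => ?_
    rw [Nat.succ_sub (Finset.mem_range_succ_iff.1 hk), pow_succ']
    ring

theorem discountedSum_one (q : ℝ) (i : ℕ) :
    (1 - q) * discountedSum q (fun _ => 1) i = 1 - q ^ (i + 1) := by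
  induction i with
  | zero => simp [discountedSum]
  | succ i ih =>
    simp only [discountedSum]
    linear_combination q * ih

@[fun_prop]
theorem continuous_discountedSum {X : Type*} [TopologicalSpace X] {q : X → ℝ} {φ : X → ℕ → ℝ}
    (hq : Continuous q) (hφ : Continuous φ) (i : ℕ) :
    Continuous fun x => discountedSum (q x) (φ x) i := by
  induction i with
  | zero => simp only [discountedSum]; fun_prop
  | succ i ih => simp only [discountedSum]; fun_prop

theorem discountedTail_succ (q : ℝ) (n : ℕ) (d : ℕ → ℝ) (k : ℕ) :
    discountedTail q (n + 1) d (k + 1) = discountedTail q n (fun i => d (i + 1)) k := by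
  simp [discountedTail, Finset.sum_range_succ']

theorem discountedTail_zero (q : ℝ) (n : ℕ) (d : ℕ → ℝ) :
    discountedTail q (n + 1) d 0 = d 0 + q * discountedTail q n (fun i => d (i + 1)) 0 := by
  simp only [discountedTail, Finset.sum_range_succ', Finset.mul_sum, zero_le, if_true, tsub_zero,
    pow_zero, one_mul, pow_succ', mul_assoc]
  rw [add_comm]

theorem sum_mul_discountedSum (q : ℝ) (n : ℕ) (d p : ℕ → ℝ) :
    ∑ i ∈ Finset.range n, d i * discountedSum q p i =
      ∑ k ∈ Finset.range n, discountedTail q n d k * p k := by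
  simp only [discountedTail, Finset.sum_mul]
  rw [Finset.sum_comm]
  refine Finset.sum_congr rfl fun i hi => ?_
  rw [Finset.mem_range] at hi
  simp only [ite_mul, zero_mul]
  rw [discountedSum_eq_sum, Finset.mul_sum, ← Finset.sum_filter]
  refine Finset.sum_congr ?_ fun k _ => by ring
  ext k
  simp only [Finset.mem_range, Finset.mem_filter]
  omega

theorem sum_mul_pow_dist_eq (q : ℝ) (n : ℕ) (d : ℕ → ℝ) :
    ∑ i ∈ Finset.range n, ∑ j ∈ Finset.range n, d i * d j * q ^ Nat.dist i j =
      (1 - q ^ 2) * ∑ k ∈ Finset.range n, discountedTail q n d k ^ 2 +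
        q ^ 2 * discountedTail q n d 0 ^ 2 := by
  induction n generalizing d with
  | zero => simp [discountedTail]
  | succ n ih =>
    have h_row : ∑ i ∈ Finset.range n, d 0 * d (i + 1) * q ^ Nat.dist 0 (i + 1) =
        d 0 * (q * discountedTail q n (fun i => d (i + 1)) 0) := by
      simp only [discountedTail, Finset.mul_sum, Nat.dist_zero_left, zero_le, if_true, tsub_zero]
      exact Finset.sum_congr rfl fun i _ => by ring
    have h_col : ∑ i ∈ Finset.range n, d (i + 1) * d 0 * q ^ Nat.dist (i + 1) 0 =
        d 0 * (q * discountedTail q n (fun i => d (i + 1)) 0) := by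
      rw [← h_row]
      exact Finset.sum_congr rfl fun i _ => by rw [Nat.dist_comm]; ring
    simp only [Finset.sum_range_succ' _ n, Nat.dist_succ_succ, discountedTail_succ,
      discountedTail_zero, Finset.sum_add_distrib, ih, h_row, h_col, Nat.dist_self]
    ring

theorem sum_sq_le_sum_discountedTail_sq {q : ℝ} (hq : 0 ≤ q) (n : ℕ) (d : ℕ → ℝ) :
    ∑ i ∈ Finset.range n, d i ^ 2 ≤
      (1 + q) ^ 2 * ∑ k ∈ Finset.range n, discountedTail q n d k ^ 2 := by
  suffices ∑ i ∈ Finset.range n, d i ^ 2 + (q + q ^ 2) * discountedTail q n d 0 ^ 2 ≤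
      (1 + q) ^ 2 * ∑ k ∈ Finset.range n, discountedTail q n d k ^ 2 from
    (le_add_of_nonneg_right (by positivity)).trans this
  induction n generalizing d with
  | zero => simp [discountedTail]
  | succ n ih =>
    have h_ih := ih fun i => d (i + 1)
    simp only [Finset.sum_range_succ' _ n, discountedTail_succ, discountedTail_zero]
    set a := discountedTail q n (fun i => d (i + 1)) 0
    nlinarith [mul_nonneg hq (sq_nonneg (d 0 + q * a + a))]

end DiscountedSums

section ExponentialVariogram

theorem toeplitzForm_incrementCov_expRemainder (θ : ℝ) (n : ℕ) (d : ℕ → ℝ) :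
    toeplitzForm (incrementCov fun r => expRemainder (θ * r)) n d =
      (1 - exp (-θ)) ^ 2 / (2 * exp (-θ)) *
        (∑ i ∈ Finset.range n, ∑ j ∈ Finset.range n, d i * d j * exp (-θ) ^ Nat.dist i j) -
      (sinh θ - θ) * ∑ i ∈ Finset.range n, d i ^ 2 := by
  have h_pow (m : ℕ) : exp (-(θ * m)) = exp (-θ) ^ m := by
    rw [← exp_nat_mul]
    congr 1
    ring
  have h_exp : exp θ = (exp (-θ))⁻¹ := by rw [exp_neg, inv_inv]
  have h_lag (k : ℕ) : incrementCov (fun r => expRemainder (θ * r)) k =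
      (1 - exp (-θ)) ^ 2 / (2 * exp (-θ)) * exp (-θ) ^ k - if k = 0 then sinh θ - θ else 0 := by
    cases k with
    | zero =>
      simp only [CharP.cast_eq_zero, incrementCov_zero, expRemainder, mul_one, mul_zero, neg_zero,
        exp_zero, pow_zero, if_true, sinh_eq, h_exp]
      field_simp
      ring
    | succ k =>
      have h_one := h_pow (k + 1)
      have h_two := h_pow (k + 2)
      push_cast at h_one h_two
      simp only [incrementCov_natCast_succ, expRemainder, h_pow, h_one, h_two, Nat.succ_ne_zero,
        if_false]
      field_simp
      ring
  have h_diag (i j : ℕ) : Nat.dist i j = 0 ↔ i = j := ⟨Nat.eq_of_dist_eq_zero, Nat.dist_eq_zero⟩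
  simp only [toeplitzForm, Finset.mul_sum, ← Finset.sum_sub_distrib]
  refine Finset.sum_congr rfl fun i hi => ?_
  simp only [incrementCov_sub_natCast, h_lag, h_diag, mul_sub, Finset.sum_sub_distrib, mul_ite,
    mul_zero, Finset.sum_ite_eq, if_pos hi]
  congr 1
  · exact Finset.sum_congr rfl fun j _ => by ring
  · ring

theorem pow_three_mul_exp_neg_le {θ : ℝ} (hθ : 0 ≤ θ) :
    θ ^ 3 * exp (-θ) / 6 ≤ θ * (1 + exp (-θ)) - 2 * (1 - exp (-θ)) := by
  set g : ℝ → ℝ := fun x => x * (1 + exp (-x)) - 2 * (1 - exp (-x)) - x ^ 3 * exp (-x) / 6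
  have h_exp (x : ℝ) : HasDerivAt (fun x => exp (-x)) (-exp (-x)) x := by
    simpa using (hasDerivAt_neg x).exp
  have h_deriv (x : ℝ) :
      HasDerivAt g (exp (-x) * (exp x - (1 + x + x ^ 2 / 2) + x ^ 3 / 6)) x := by
    have h := (((hasDerivAt_id x).mul ((h_exp x).const_add 1)).sub
      (((h_exp x).const_sub 1).const_mul 2)).sub
        (((hasDerivAt_pow 3 x).mul (h_exp x)).div_const 6)
    have h_mul : exp (-x) * exp x = 1 := by rw [← exp_add, neg_add_cancel, exp_zero]
    refine h.congr_deriv ?_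
    simp only [id]
    push_cast
    linear_combination -h_mul
  have h_mono : MonotoneOn g (Set.Ici 0) := by
    refine monotoneOn_of_deriv_nonneg (convex_Ici 0)
      (fun x _ => (h_deriv x).continuousAt.continuousWithinAt)
      (fun x _ => (h_deriv x).differentiableAt.differentiableWithinAt) fun x hx => ?_
    rw [interior_Ici, Set.mem_Ioi] at hx
    rw [(h_deriv x).deriv]
    have h_quad := quadratic_le_exp_of_nonneg hx.le
    exact mul_nonneg (exp_nonneg _) (add_nonneg (sub_nonneg.2 h_quad) (by positivity))
  have h_nonneg : 0 ≤ g θ := by simpa [g] using h_mono Set.self_mem_Ici hθ hθ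
  exact sub_nonneg.1 h_nonneg

theorem discountedTail_sq_le_toeplitzForm {θ : ℝ} (hθ : 0 < θ) (n : ℕ) (d : ℕ → ℝ) :
    θ ^ 3 * exp (-θ) / 6 * ∑ k ∈ Finset.range n, discountedTail (exp (-θ)) n d k ^ 2 ≤
      toeplitzForm (incrementCov fun r => expRemainder (θ * r)) n d := by
  have h_sinh : 0 ≤ sinh θ - θ := sub_nonneg.2 (self_le_sinh_iff.2 hθ.le)
  have h_cubic := pow_three_mul_exp_neg_le hθ.le
  have h_sum := sum_sq_le_sum_discountedTail_sq (exp_nonneg (-θ)) n d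
  rw [toeplitzForm_incrementCov_expRemainder, sum_mul_pow_dist_eq]
  have h_exp : exp θ = (exp (-θ))⁻¹ := by rw [exp_neg, inv_inv]
  rw [sinh_eq, h_exp] at h_sinh ⊢
  set q := exp (-θ)
  set A := ∑ k ∈ Finset.range n, discountedTail q n d k ^ 2
  have hq : 0 < q := exp_pos _
  have : 0 ≤ A := Finset.sum_nonneg fun _ _ => sq_nonneg _
  calc θ ^ 3 * q / 6 * A ≤ (1 + q) * (θ * (1 + q) - 2 * (1 - q)) * A := by
        have h_cubic_nonneg : 0 ≤ θ ^ 3 * q / 6 := by positivity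
        gcongr
        nlinarith
    _ = (1 - q) ^ 2 / (2 * q) * ((1 - q ^ 2) * A) -
          ((q⁻¹ - q) / 2 - θ) * ((1 + q) ^ 2 * A) := by
        field_simp
        ring
    _ ≤ _ := by
        gcongr
        exact le_add_of_nonneg_right (by positivity)

end ExponentialVariogram

section LaplaceRepresentation

theorem sq_integral_le_integral_mul_integral {α : Type*} [MeasurableSpace α] {μ : Measure α}
    {f g h : α → ℝ} (hf : Integrable f μ) (hg : Integrable g μ) (hh : Integrable h μ)
    (hf0 : 0 ≤ᵐ[μ] f) (hg0 : 0 ≤ᵐ[μ] g) (hfg : ∀ᵐ x ∂μ, h x ^ 2 ≤ f x * g x) :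
    (∫ x, h x ∂μ) ^ 2 ≤ (∫ x, f x ∂μ) * ∫ x, g x ∂μ := by
  have h_quad (s : ℝ) : 0 ≤ (∫ x, f x ∂μ) * (s * s) + (2 * ∫ x, h x ∂μ) * s + ∫ x, g x ∂μ := by
    have h_nonneg : 0 ≤ ∫ x, f x * (s * s) + h x * (2 * s) + g x ∂μ := by
      refine integral_nonneg_of_ae ?_
      filter_upwards [hf0, hg0, hfg] with x hfx hgx hfgx
      simp only [Pi.zero_apply] at hfx hgx ⊢
      rcases hfx.eq_or_lt with hfx | hfx
      · have : h x = 0 := by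
          rw [← hfx, zero_mul] at hfgx
          exact pow_eq_zero_iff two_ne_zero |>.1 (le_antisymm hfgx (sq_nonneg _))
        simpa [← hfx, this] using hgx
      · refine nonneg_of_mul_nonneg_right (a := f x) ?_ hfx
        nlinarith [sq_nonneg (f x * s + h x)]
    rw [integral_add (by fun_prop) hg, integral_add (by fun_prop) (by fun_prop),
      integral_mul_const, integral_mul_const] at h_nonneg
    linarith
  have h_discrim := discrim_le_zero h_quad
  rw [discrim] at h_discrim
  linarith

theorem integrable_toeplitzForm_incrementCov {α : Type*} [MeasurableSpace α] {μ : Measure α}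
    {g : α → ℝ → ℝ} (hg : ∀ r, 0 ≤ r → Integrable (fun x => g x r) μ) (n : ℕ) (d : ℕ → ℝ) :
    Integrable (fun x => toeplitzForm (incrementCov (g x)) n d) μ := by
  have h_abs (r : ℝ) : Integrable (fun x => g x |r|) μ := hg _ (abs_nonneg r)
  unfold toeplitzForm incrementCov
  fun_prop

theorem integral_toeplitzForm_incrementCov {α : Type*} [MeasurableSpace α] {μ : Measure α}
    {g : α → ℝ → ℝ} (hg : ∀ r, 0 ≤ r → Integrable (fun x => g x r) μ) (n : ℕ) (d : ℕ → ℝ) :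
    ∫ x, toeplitzForm (incrementCov (g x)) n d ∂μ =
      toeplitzForm (incrementCov fun r => ∫ x, g x r ∂μ) n d := by
  have h_abs (r : ℝ) : Integrable (fun x => g x |r|) μ := hg _ (abs_nonneg r)
  have h_cov (r : ℝ) : Integrable (fun x => incrementCov (g x) r) μ := by
    unfold incrementCov
    fun_prop
  have h_lag (r : ℝ) :
      ∫ x, incrementCov (g x) r ∂μ = incrementCov (fun r => ∫ x, g x r ∂μ) r := by
    simp only [incrementCov]
    rw [integral_div, integral_sub (by fun_prop) (by fun_prop),
      integral_add (by fun_prop) (by fun_prop), integral_const_mul]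
  simp only [toeplitzForm]
  rw [integral_finsetSum _ fun i _ => by fun_prop]
  refine Finset.sum_congr rfl fun i _ => ?_
  rw [integral_finsetSum _ fun j _ => by fun_prop]
  exact Finset.sum_congr rfl fun j _ => by rw [integral_const_mul, h_lag]

theorem toeplitzForm_incrementCov_mul_const (f : ℝ → ℝ) (w : ℝ) (n : ℕ) (d : ℕ → ℝ) :
    toeplitzForm (incrementCov fun r => f r * w) n d = toeplitzForm (incrementCov f) n d * w := by
  simp only [toeplitzForm, incrementCov, Finset.sum_mul]
  exact Finset.sum_congr rfl fun i _ => Finset.sum_congr rfl fun j _ => by ring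

theorem expRemainder_le_self {x : ℝ} (hx : 0 ≤ x) : expRemainder x ≤ x := by
  have : exp (-x) ≤ 1 := exp_le_one_iff.2 (neg_nonpos.2 hx)
  unfold expRemainder
  linarith

theorem expRemainder_le_sq {x : ℝ} (hx : |x| ≤ 1) : expRemainder x ≤ x ^ 2 := by
  have := le_of_abs_le (abs_exp_sub_one_sub_id_le (x := -x) (by rwa [abs_neg]))
  unfold expRemainder
  linarith

variable {H : ℝ}

theorem integrableOn_expRemainder_mul_rpow (h_half : 1 / 2 < H) (h_one : H < 1) :
    IntegrableOn (fun θ => expRemainder θ * θ ^ (-1 - 2 * H)) (Set.Ioi 0) := by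
  have h_cont : ContinuousOn (fun θ => expRemainder θ * θ ^ (-1 - 2 * H)) (Set.Ioi 0) := by
    unfold expRemainder
    exact ContinuousOn.mul (by fun_prop) fun θ hθ =>
      (continuousAt_rpow_const _ _ (Or.inl (ne_of_gt hθ))).continuousWithinAt
  have h_norm {θ : ℝ} (hθ : 0 < θ) : ‖expRemainder θ * θ ^ (-1 - 2 * H)‖ =
      expRemainder θ * θ ^ (-1 - 2 * H) :=
    norm_of_nonneg (mul_nonneg (expRemainder_nonneg θ) (rpow_nonneg hθ.le _))
  rw [← Set.Ioc_union_Ioi_eq_Ioi zero_le_one]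
  refine IntegrableOn.union ?_ ?_
  · have h_dom : IntegrableOn (fun θ : ℝ => θ ^ (1 - 2 * H)) (Set.Ioc 0 1) :=
      (intervalIntegrable_iff_integrableOn_Ioc_of_le zero_le_one).1
        (intervalIntegral.intervalIntegrable_rpow' (by linarith))
    refine Integrable.mono' h_dom
      ((h_cont.mono Set.Ioc_subset_Ioi_self).aestronglyMeasurable measurableSet_Ioc) ?_
    filter_upwards [ae_restrict_mem measurableSet_Ioc] with θ hθ
    rw [h_norm hθ.1, show 1 - 2 * H = (2 : ℕ) + (-1 - 2 * H) by push_cast; ring,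
      rpow_add hθ.1, rpow_natCast]
    gcongr
    · exact rpow_nonneg hθ.1.le _
    · exact expRemainder_le_sq (by rw [abs_of_pos hθ.1]; exact hθ.2)
  · have h_dom : IntegrableOn (fun θ : ℝ => θ ^ (-2 * H)) (Set.Ioi 1) :=
      integrableOn_Ioi_rpow_of_lt (by linarith) zero_lt_one
    refine Integrable.mono' h_dom
      ((h_cont.mono (Set.Ioi_subset_Ioi zero_le_one)).aestronglyMeasurable measurableSet_Ioi) ?_
    filter_upwards [ae_restrict_mem measurableSet_Ioi] with θ hθ
    have hθ0 : 0 < θ := zero_lt_one.trans hθ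
    rw [h_norm hθ0, show -2 * H = 1 + (-1 - 2 * H) by ring, rpow_add hθ0, rpow_one]
    gcongr
    exact expRemainder_le_self hθ0.le

/-- The normalizing constant of the representation of `r ^ (2 * H)` as a mixture of the functions
`r ↦ expRemainder (θ * r)`. -/
noncomputable def expRemainderMoment (H : ℝ) : ℝ :=
  ∫ θ in Set.Ioi 0, expRemainder θ * θ ^ (-1 - 2 * H)

theorem expRemainderMoment_nonneg (H : ℝ) : 0 ≤ expRemainderMoment H :=
  setIntegral_nonneg measurableSet_Ioi fun θ hθ =>
    mul_nonneg (expRemainder_nonneg θ) (rpow_nonneg (le_of_lt hθ) _)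

theorem expRemainder_mul_mul_rpow {r θ : ℝ} (hr : 0 < r) (hθ : 0 < θ) :
    expRemainder (θ * r) * θ ^ (-1 - 2 * H) =
      r ^ (1 + 2 * H) * (expRemainder (θ * r) * (θ * r) ^ (-1 - 2 * H)) := by
  have h_cancel : r ^ (1 + 2 * H) * r ^ (-1 - 2 * H) = 1 := by
    rw [← rpow_add hr, show 1 + 2 * H + (-1 - 2 * H) = 0 by ring, rpow_zero]
  rw [mul_rpow hθ.le hr.le]
  linear_combination -(expRemainder (θ * r) * θ ^ (-1 - 2 * H)) * h_cancel

theorem integrableOn_expRemainder_mul_mul_rpow (h_half : 1 / 2 < H) (h_one : H < 1) {r : ℝ}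
    (hr : 0 ≤ r) :
    IntegrableOn (fun θ => expRemainder (θ * r) * θ ^ (-1 - 2 * H)) (Set.Ioi 0) := by
  rcases hr.eq_or_lt with rfl | hr
  · simp [expRemainder]
  · have h_scale : Set.EqOn (fun θ => expRemainder (θ * r) * θ ^ (-1 - 2 * H))
        (fun θ => r ^ (1 + 2 * H) * (expRemainder (θ * r) * (θ * r) ^ (-1 - 2 * H)))
        (Set.Ioi 0) := fun θ hθ => expRemainder_mul_mul_rpow hr hθ
    rw [integrableOn_congr_fun h_scale measurableSet_Ioi]
    have h_dilate : IntegrableOn (fun θ => expRemainder (θ * r) * (θ * r) ^ (-1 - 2 * H))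
        (Set.Ioi 0) := by
      rw [integrableOn_Ioi_comp_mul_right_iff (fun θ => expRemainder θ * θ ^ (-1 - 2 * H)) 0 hr,
        zero_mul]
      exact integrableOn_expRemainder_mul_rpow h_half h_one
    exact h_dilate.const_mul _

theorem integral_expRemainder_mul_mul_rpow (hH : 0 < H) {r : ℝ} (hr : 0 ≤ r) :
    ∫ θ in Set.Ioi 0, expRemainder (θ * r) * θ ^ (-1 - 2 * H) =
      r ^ (2 * H) * expRemainderMoment H := by
  rcases hr.eq_or_lt with rfl | hr
  · simp [expRemainder, zero_rpow (by positivity : 2 * H ≠ 0)]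
  · rw [setIntegral_congr_fun measurableSet_Ioi fun θ hθ => expRemainder_mul_mul_rpow hr hθ,
      integral_const_mul,
      integral_comp_mul_right_Ioi (fun θ => expRemainder θ * θ ^ (-1 - 2 * H)) 0 hr, zero_mul,
      smul_eq_mul, ← mul_assoc, add_comm, rpow_add hr, rpow_one, mul_assoc (r ^ (2 * H)),
      mul_inv_cancel₀ hr.ne', mul_one]
    rfl

theorem integrableOn_toeplitzForm_mul_rpow (h_half : 1 / 2 < H) (h_one : H < 1) (n : ℕ)
    (d : ℕ → ℝ) : IntegrableOn (fun θ =>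
      toeplitzForm (incrementCov fun r => expRemainder (θ * r)) n d * θ ^ (-1 - 2 * H))
      (Set.Ioi 0) := by
  simp only [← toeplitzForm_incrementCov_mul_const]
  exact integrable_toeplitzForm_incrementCov
    (fun r => integrableOn_expRemainder_mul_mul_rpow h_half h_one) n d

theorem integral_toeplitzForm_mul_rpow (h_half : 1 / 2 < H) (h_one : H < 1) (n : ℕ)
    (d : ℕ → ℝ) : ∫ θ in Set.Ioi 0,
      toeplitzForm (incrementCov fun r => expRemainder (θ * r)) n d * θ ^ (-1 - 2 * H) =
      toeplitzForm (fgnCov H) n d * expRemainderMoment H := by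
  simp only [← toeplitzForm_incrementCov_mul_const, fgnCov]
  rw [integral_toeplitzForm_incrementCov
    fun r => integrableOn_expRemainder_mul_mul_rpow h_half h_one]
  simp only [toeplitzForm, incrementCov,
    integral_expRemainder_mul_mul_rpow (one_half_pos.trans h_half) (abs_nonneg _)]

theorem hasDerivAt_one_sub_mul_discountedSum (φ : ℕ → ℝ) (i : ℕ) (q : ℝ) :
    HasDerivAt (fun q => (1 - q) * discountedSum q φ i)
      (-discountedSum q (backwardDiff (discountedSum q φ)) i) q := by
  induction i with
  | zero =>
    simpa [discountedSum, backwardDiff] using ((hasDerivAt_id q).const_sub 1).mul_const (φ 0)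
  | succ i ih =>
    have h := ((hasDerivAt_id q).mul ih).add
      (((hasDerivAt_id q).const_sub 1).mul_const (φ (i + 1)))
    have h_rec : (fun q => (1 - q) * discountedSum q φ (i + 1)) =
        fun q => q * ((1 - q) * discountedSum q φ i) + (1 - q) * φ (i + 1) := by
      ext q
      simp only [discountedSum]
      ring
    rw [h_rec]
    refine h.congr_deriv ?_
    simp only [discountedSum, backwardDiff, id]
    ring

@[fun_prop]
theorem continuous_backwardDiff_discountedSum (φ : ℕ → ℝ) :
    Continuous fun q => backwardDiff (discountedSum q φ) := by
  refine continuous_pi fun i => ?_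
  cases i <;> simp only [backwardDiff] <;> fun_prop

theorem integrableOn_exp_neg_mul_discountedSum (φ : ℕ → ℝ) (i : ℕ) :
    IntegrableOn (fun θ => exp (-θ) *
      discountedSum (exp (-θ)) (backwardDiff (discountedSum (exp (-θ)) φ)) i) (Set.Ioi 0) := by
  have h_cont : Continuous fun q => discountedSum q (backwardDiff (discountedSum q φ)) i := by
    fun_prop
  obtain ⟨B, hB⟩ := isCompact_Icc.exists_bound_of_continuousOn
    (s := Set.Icc (0 : ℝ) 1) h_cont.continuousOn
  have h_exp : IntegrableOn (fun θ : ℝ => exp (-θ) * B) (Set.Ioi 0) :=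
    (integrableOn_exp_neg_Ioi 0).mul_const B
  have h_comp := h_cont.comp (by fun_prop : Continuous fun θ : ℝ => exp (-θ))
  refine Integrable.mono' h_exp
    ((by fun_prop : Continuous fun θ : ℝ => exp (-θ)).mul h_comp).aestronglyMeasurable ?_
  filter_upwards [ae_restrict_mem measurableSet_Ioi] with θ hθ
  rw [norm_mul, norm_of_nonneg (exp_nonneg _)]
  gcongr
  exact hB _ ⟨exp_nonneg _, exp_le_one_iff.2 (neg_nonpos.2 (le_of_lt hθ))⟩

theorem integral_exp_neg_mul_discountedSum (φ : ℕ → ℝ) (i : ℕ) :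
    ∫ θ in Set.Ioi 0, exp (-θ) *
      discountedSum (exp (-θ)) (backwardDiff (discountedSum (exp (-θ)) φ)) i = φ i := by
  have h_deriv (θ : ℝ) := (hasDerivAt_one_sub_mul_discountedSum φ i (exp (-θ))).comp θ
    (hasDerivAt_neg θ).exp
  have h_tendsto : Filter.Tendsto (fun θ => (1 - exp (-θ)) * discountedSum (exp (-θ)) φ i)
      Filter.atTop (nhds (φ i)) := by
    have h_cont : Continuous fun q => (1 - q) * discountedSum q φ i := by fun_prop
    have h_zero : (1 - 0) * discountedSum 0 φ i = φ i := by cases i <;> simp [discountedSum]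
    simpa only [h_zero, Function.comp_def] using
      (h_cont.tendsto 0).comp tendsto_exp_neg_atTop_nhds_zero
  have h_ftc := integral_Ioi_of_hasDerivAt_of_tendsto' (a := 0)
    (fun θ _ => (h_deriv θ).congr_deriv (by ring))
    (integrableOn_exp_neg_mul_discountedSum φ i) h_tendsto
  simpa using h_ftc

theorem backwardDiff_discountedSum_sq_le {q : ℝ} (hq0 : 0 ≤ q) (hq1 : q ≤ 1) (φ : ℕ → ℝ)
    (i : ℕ) : backwardDiff (discountedSum q φ) i ^ 2 ≤ 2 * (q ^ (2 * i) * φ i ^ 2) +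
      2 * ((1 - q) * ∑ j ∈ Finset.range i, q ^ (i - 1 - j) * (φ i - φ j) ^ 2) := by
  cases i with
  | zero =>
    simp only [backwardDiff, discountedSum, mul_zero, pow_zero, one_mul, Finset.range_zero,
      Finset.sum_empty, add_zero]
    linarith [sq_nonneg (φ 0)]
  | succ i =>
    rw [Nat.add_sub_cancel]
    set S := ∑ j ∈ Finset.range (i + 1), q ^ (i - j) * (φ (i + 1) - φ j)
    set S₂ := ∑ j ∈ Finset.range (i + 1), q ^ (i - j) * (φ (i + 1) - φ j) ^ 2
    set G := discountedSum q (fun _ => 1) i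
    have hG : (1 - q) * G = 1 - q ^ (i + 1) := discountedSum_one q i
    have h_sum : S = G * φ (i + 1) - discountedSum q φ i := by
      simp only [S, G, discountedSum_eq_sum, Finset.sum_mul, ← Finset.sum_sub_distrib]
      exact Finset.sum_congr rfl fun j _ => by ring
    have h_diff : backwardDiff (discountedSum q φ) (i + 1) =
        q ^ (i + 1) * φ (i + 1) + (1 - q) * S := by
      simp only [h_sum, backwardDiff, discountedSum]
      linear_combination -φ (i + 1) * hG
    have h_cauchy : S ^ 2 ≤ G * S₂ := by
      simp only [G, discountedSum_eq_sum, mul_one]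
      exact Finset.sum_sq_le_sum_mul_sum_of_sq_le_mul _ (fun _ _ => by positivity)
        (fun _ _ => by positivity) fun _ _ => by ring_nf; rfl
    have hS₂ : 0 ≤ S₂ := Finset.sum_nonneg fun _ _ => by positivity
    have h_sq : ((1 - q) * S) ^ 2 ≤ (1 - q) * S₂ := by
      have h_le_one : (1 - q) * G ≤ 1 := hG.trans_le (sub_le_self 1 (by positivity))
      have : 0 ≤ 1 - q := sub_nonneg.2 hq1
      calc ((1 - q) * S) ^ 2 = (1 - q) ^ 2 * S ^ 2 := by ring
        _ ≤ (1 - q) ^ 2 * (G * S₂) := by gcongr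
        _ = (1 - q) * G * ((1 - q) * S₂) := by ring
        _ ≤ 1 * ((1 - q) * S₂) := by gcongr
        _ = (1 - q) * S₂ := one_mul _
    calc backwardDiff (discountedSum q φ) (i + 1) ^ 2
        ≤ 2 * ((q ^ (i + 1) * φ (i + 1)) ^ 2 + ((1 - q) * S) ^ 2) := h_diff ▸ add_sq_le
      _ ≤ 2 * ((q ^ (i + 1) * φ (i + 1)) ^ 2 + (1 - q) * S₂) := by gcongr
      _ = 2 * (q ^ (2 * (i + 1)) * φ (i + 1) ^ 2) + 2 * ((1 - q) * S₂) := by ring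

end LaplaceRepresentation

section FractionalEnergy

variable {H : ℝ}

/-- A discrete fractional Sobolev energy of order `H - 1 / 2` of the first `n` values of `φ`; up to
a constant it dominates the Cameron–Martin norm of fractional Gaussian noise. -/
noncomputable def fractionalEnergy (H : ℝ) (n : ℕ) (φ : ℕ → ℝ) : ℝ :=
  ∑ i ∈ Finset.range n, (φ i ^ 2 * ((i : ℝ) + 1) ^ (1 - 2 * H) +
    ∑ j ∈ Finset.range i, (φ i - φ j) ^ 2 * ((i : ℝ) - j) ^ (-(2 * H)))

/-- The contribution of the discount rate `θ` to `fractionalEnergy`, obtained by writing the powers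
in its definition as Gamma integrals. -/
noncomputable def energyDensity (H : ℝ) (n : ℕ) (φ : ℕ → ℝ) (θ : ℝ) : ℝ :=
  ∑ i ∈ Finset.range n, (φ i ^ 2 * (θ ^ (2 * H - 1 - 1) * exp (-(((i : ℝ) + 1) * θ))) +
    ∑ j ∈ Finset.range i, (φ i - φ j) ^ 2 * (θ ^ (2 * H - 1) * exp (-(((i : ℝ) - j) * θ))))

theorem fractionalEnergy_nonneg (H : ℝ) (n : ℕ) (φ : ℕ → ℝ) : 0 ≤ fractionalEnergy H n φ := by
  refine Finset.sum_nonneg fun i _ => add_nonneg (by positivity) (Finset.sum_nonneg fun j hj => ?_)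
  have : (j : ℝ) ≤ i := mod_cast (Finset.mem_range.1 hj).le
  exact mul_nonneg (sq_nonneg _) (rpow_nonneg (sub_nonneg.2 this) _)

theorem energyDensity_nonneg (H : ℝ) (n : ℕ) (φ : ℕ → ℝ) {θ : ℝ} (hθ : 0 ≤ θ) :
    0 ≤ energyDensity H n φ θ := by
  unfold energyDensity
  positivity

theorem integrableOn_rpow_mul_exp_neg_mul {a r : ℝ} (ha : 0 < a) (hr : 0 < r) :
    IntegrableOn (fun t : ℝ => t ^ (a - 1) * exp (-(r * t))) (Set.Ioi 0) := by
  simpa using integrableOn_rpow_mul_exp_neg_mul_rpow (p := 1) (by linarith) one_pos hr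

theorem integrableOn_energyDensity (h_half : 1 / 2 < H) (n : ℕ) (φ : ℕ → ℝ) :
    IntegrableOn (energyDensity H n φ) (Set.Ioi 0) := by
  refine integrable_finsetSum _ fun i _ => Integrable.add ?_
    (integrable_finsetSum _ fun j hj => ?_)
  · exact (integrableOn_rpow_mul_exp_neg_mul (by linarith) (by positivity)).const_mul _
  · have : (j : ℝ) < i := mod_cast Finset.mem_range.1 hj
    exact (integrableOn_rpow_mul_exp_neg_mul (by linarith) (sub_pos.2 this)).const_mul _

theorem integral_energyDensity_le (h_half : 1 / 2 < H) (n : ℕ) (φ : ℕ → ℝ) :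
    ∫ θ in Set.Ioi 0, energyDensity H n φ θ ≤
      (Gamma (2 * H - 1) + Gamma (2 * H)) * fractionalEnergy H n φ := by
  have h_gamma₁ : 0 < Gamma (2 * H - 1) := Gamma_pos_of_pos (by linarith)
  have h_gamma₂ : 0 < Gamma (2 * H) := Gamma_pos_of_pos (by linarith)
  have h_lag {i j : ℕ} (hj : j ∈ Finset.range i) : (0 : ℝ) < (i : ℝ) - j :=
    sub_pos.2 (mod_cast Finset.mem_range.1 hj)
  have h_diag (i : ℕ) : IntegrableOn (fun θ : ℝ =>
      φ i ^ 2 * (θ ^ (2 * H - 1 - 1) * exp (-(((i : ℝ) + 1) * θ)))) (Set.Ioi 0) :=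
    (integrableOn_rpow_mul_exp_neg_mul (by linarith) (by positivity)).const_mul _
  have h_off (i : ℕ) : ∀ j ∈ Finset.range i, IntegrableOn (fun θ : ℝ =>
      (φ i - φ j) ^ 2 * (θ ^ (2 * H - 1) * exp (-(((i : ℝ) - j) * θ)))) (Set.Ioi 0) :=
    fun j hj => (integrableOn_rpow_mul_exp_neg_mul (by linarith) (h_lag hj)).const_mul _
  unfold energyDensity fractionalEnergy
  refine (integral_finsetSum _ fun i _ =>
    (h_diag i).add (integrable_finsetSum _ (h_off i))).trans_le ?_
  rw [Finset.mul_sum]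
  refine Finset.sum_le_sum fun i _ => ?_
  rw [integral_add' (h_diag i) (integrable_finsetSum _ (h_off i)), integral_finsetSum _ (h_off i),
    integral_const_mul, integral_rpow_mul_exp_neg_mul_Ioi (by linarith) (by positivity), mul_add,
    Finset.mul_sum]
  refine add_le_add ?_ (Finset.sum_le_sum fun j hj => ?_)
  · rw [one_div, inv_rpow (by positivity), ← rpow_neg (by positivity), neg_sub, ← mul_assoc,
      mul_comm (Gamma _ + _)]
    gcongr
    linarith
  · rw [integral_const_mul, integral_rpow_mul_exp_neg_mul_Ioi (by linarith) (h_lag hj), one_div,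
      inv_rpow (h_lag hj).le, ← rpow_neg (h_lag hj).le, ← mul_assoc, mul_comm (Gamma _ + _)]
    have := rpow_nonneg (h_lag hj).le (-(2 * H))
    gcongr
    linarith

theorem mul_sum_backwardDiff_sq_le_energyDensity {θ : ℝ} (hθ : 0 < θ) (n : ℕ) (φ : ℕ → ℝ) :
    θ ^ (2 * H - 2) * exp (-θ) *
        ∑ k ∈ Finset.range n, backwardDiff (discountedSum (exp (-θ)) φ) k ^ 2 ≤
      2 * energyDensity H n φ θ := by
  have h_pow (m : ℕ) : exp (-((m : ℝ) * θ)) = exp (-θ) ^ m := by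
    rw [← exp_nat_mul]
    congr 1
    ring
  have h_rpow : θ ^ (2 * H - 1) = θ ^ (2 * H - 2) * θ := by
    rw [← rpow_add_one hθ.ne']
    congr 1
    ring
  have hq0 : 0 ≤ exp (-θ) := exp_nonneg _
  have hq1 : exp (-θ) ≤ 1 := exp_le_one_iff.2 (neg_nonpos.2 hθ.le)
  have h_one_sub : 1 - exp (-θ) ≤ θ := by linarith [add_one_le_exp (-θ)]
  unfold energyDensity
  rw [Finset.mul_sum, Finset.mul_sum]
  refine Finset.sum_le_sum fun i _ => ?_
  have h_diag : exp (-θ) * exp (-θ) ^ (2 * i) ≤ exp (-(((i : ℝ) + 1) * θ)) := by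
    rw [← pow_succ', ← Nat.cast_succ, h_pow]
    exact pow_le_pow_of_le_one hq0 hq1 (by omega)
  have h_off {j : ℕ} (hj : j ∈ Finset.range i) :
      exp (-(((i : ℝ) - j) * θ)) = exp (-θ) * exp (-θ) ^ (i - 1 - j) := by
    rw [Finset.mem_range] at hj
    rw [← pow_succ', ← Nat.cast_sub hj.le, h_pow]
    congr 1
    omega
  calc θ ^ (2 * H - 2) * exp (-θ) * backwardDiff (discountedSum (exp (-θ)) φ) i ^ 2
      ≤ θ ^ (2 * H - 2) * exp (-θ) * (2 * (exp (-θ) ^ (2 * i) * φ i ^ 2) + 2 * (θ *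
          ∑ j ∈ Finset.range i, exp (-θ) ^ (i - 1 - j) * (φ i - φ j) ^ 2)) := by
        gcongr
        refine (backwardDiff_discountedSum_sq_le hq0 hq1 φ i).trans ?_
        gcongr
    _ = 2 * (φ i ^ 2 * (θ ^ (2 * H - 1 - 1) * (exp (-θ) * exp (-θ) ^ (2 * i))) +
          ∑ j ∈ Finset.range i, (φ i - φ j) ^ 2 *
            (θ ^ (2 * H - 1) * exp (-(((i : ℝ) - j) * θ)))) := by
        rw [h_rpow, sub_sub, one_add_one_eq_two, mul_add, mul_add]
        simp only [Finset.mul_sum]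
        congr 1
        · ring
        · exact Finset.sum_congr rfl fun j hj => by rw [h_off hj]; ring
    _ ≤ _ := by gcongr

theorem sq_sum_exp_neg_mul_discountedSum_le {θ : ℝ} (hθ : 0 < θ) (n : ℕ) (d φ : ℕ → ℝ) :
    (∑ i ∈ Finset.range n, d i * (exp (-θ) *
        discountedSum (exp (-θ)) (backwardDiff (discountedSum (exp (-θ)) φ)) i)) ^ 2 ≤
      toeplitzForm (incrementCov fun r => expRemainder (θ * r)) n d * θ ^ (-1 - 2 * H) *
        (12 * energyDensity H n φ θ) := by
  have h_cov := discountedTail_sq_le_toeplitzForm hθ n d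
  have h_energy := mul_sum_backwardDiff_sq_le_energyDensity (H := H) hθ n φ
  set q := exp (-θ)
  set p := backwardDiff (discountedSum q φ)
  have h_rpow : θ ^ (-1 - 2 * H) * θ ^ 3 * θ ^ (2 * H - 2) = 1 := by
    rw [← rpow_natCast θ 3, ← rpow_add hθ, ← rpow_add hθ]
    push_cast
    rw [show -1 - 2 * H + 3 + (2 * H - 2) = 0 by ring, rpow_zero]
  calc (∑ i ∈ Finset.range n, d i * (q * discountedSum q p i)) ^ 2
      = q ^ 2 * (∑ k ∈ Finset.range n, discountedTail q n d k * p k) ^ 2 := by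
        simp only [mul_left_comm _ q, ← Finset.mul_sum, sum_mul_discountedSum, mul_pow]
    _ ≤ q ^ 2 * ((∑ k ∈ Finset.range n, discountedTail q n d k ^ 2) *
          ∑ k ∈ Finset.range n, p k ^ 2) := by
        gcongr
        exact Finset.sum_mul_sq_le_sq_mul_sq _ _ _
    _ = θ ^ 3 * q / 6 * (∑ k ∈ Finset.range n, discountedTail q n d k ^ 2) * θ ^ (-1 - 2 * H) *
          (6 * (θ ^ (2 * H - 2) * q * ∑ k ∈ Finset.range n, p k ^ 2)) := by
        linear_combination -(q ^ 2 * (∑ k ∈ Finset.range n, discountedTail q n d k ^ 2) *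
          ∑ k ∈ Finset.range n, p k ^ 2) * h_rpow
    _ ≤ toeplitzForm (incrementCov fun r => expRemainder (θ * r)) n d * θ ^ (-1 - 2 * H) *
          (6 * (2 * energyDensity H n φ θ)) := by
        gcongr
        have : 0 ≤ θ ^ 3 * q / 6 * ∑ k ∈ Finset.range n, discountedTail q n d k ^ 2 := by
          positivity
        exact mul_nonneg (this.trans h_cov) (rpow_nonneg hθ.le _)
    _ = _ := by ring

theorem exists_sq_sum_mul_le_toeplitzForm_fgnCov (h_half : 1 / 2 < H) (h_one : H < 1) :
    ∃ C : ℝ, 0 ≤ C ∧ ∀ (n : ℕ) (d φ : ℕ → ℝ), (∑ i ∈ Finset.range n, d i * φ i) ^ 2 ≤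
      C * toeplitzForm (fgnCov H) n d * fractionalEnergy H n φ := by
  have h_gamma : 0 ≤ Gamma (2 * H - 1) + Gamma (2 * H) :=
    add_nonneg (Gamma_nonneg_of_nonneg (by linarith)) (Gamma_nonneg_of_nonneg (by linarith))
  refine ⟨12 * (Gamma (2 * H - 1) + Gamma (2 * H)) * expRemainderMoment H,
    mul_nonneg (by positivity) (expRemainderMoment_nonneg H), fun n d φ => ?_⟩
  have h_int (i : ℕ) := (integrableOn_exp_neg_mul_discountedSum φ i).const_mul (d i)
  have h_form_nonneg (θ : ℝ) (hθ : 0 < θ) : 0 ≤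
      toeplitzForm (incrementCov fun r => expRemainder (θ * r)) n d * θ ^ (-1 - 2 * H) :=
    mul_nonneg ((by positivity : (0 : ℝ) ≤ _).trans (discountedTail_sq_le_toeplitzForm hθ n d))
      (rpow_nonneg hθ.le _)
  have h_sq := sq_integral_le_integral_mul_integral
    (integrableOn_toeplitzForm_mul_rpow h_half h_one n d)
    ((integrableOn_energyDensity h_half n φ).const_mul 12)
    (integrable_finsetSum (Finset.range n) fun i _ => h_int i)
    (ae_restrict_of_forall_mem measurableSet_Ioi h_form_nonneg)
    (ae_restrict_of_forall_mem measurableSet_Ioi fun θ hθ =>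
      mul_nonneg (by norm_num) (energyDensity_nonneg H n φ (le_of_lt hθ)))
    (ae_restrict_of_forall_mem measurableSet_Ioi fun θ hθ =>
      sq_sum_exp_neg_mul_discountedSum_le hθ n d φ)
  rw [integral_toeplitzForm_mul_rpow h_half h_one, integral_const_mul,
    integral_finsetSum _ fun i _ => h_int i] at h_sq
  simp only [integral_const_mul, integral_exp_neg_mul_discountedSum] at h_sq
  have h_nonneg : 0 ≤ toeplitzForm (fgnCov H) n d * expRemainderMoment H := by
    rw [← integral_toeplitzForm_mul_rpow h_half h_one]
    exact setIntegral_nonneg measurableSet_Ioi h_form_nonneg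
  calc _ ≤ _ := h_sq
    _ ≤ toeplitzForm (fgnCov H) n d * expRemainderMoment H *
        (12 * ((Gamma (2 * H - 1) + Gamma (2 * H)) * fractionalEnergy H n φ)) := by
        gcongr
        exact integral_energyDensity_le h_half n φ
    _ = _ := by ring

end FractionalEnergy

/-! ### Causal shifts of fractional Brownian increments -/

section CausalShiftOfGaussian

open Matrix

theorem measure_ext_of_map_dotProduct {ι : Type*} [Fintype ι] {μ ν : Measure (ι → ℝ)}
    [IsFiniteMeasure μ] [IsFiniteMeasure ν]
    (h : ∀ c : ι → ℝ, μ.map (c ⬝ᵥ ·) = ν.map (c ⬝ᵥ ·)) : μ = ν := by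
  classical
  refine Measure.ext_of_charFunDual (funext fun L => ?_)
  have hL : (L : (ι → ℝ) → ℝ) = ((fun i => L fun j => if i = j then 1 else 0) ⬝ᵥ ·) := by
    ext x
    simpa [dotProduct, mul_comm] using LinearMap.pi_apply_eq_sum_univ L.toLinearMap x
  rw [charFunDual_eq_charFun_map_one, charFunDual_eq_charFun_map_one, hL, h]

theorem map_dotProduct_stdGaussianPi {n : ℕ} (c : Fin n → ℝ) :
    (stdGaussianPi n).map (c ⬝ᵥ ·) = gaussianReal 0 (c ⬝ᵥ c).toNNReal := by
  have h_meas : Measurable fun x : Fin n → ℝ => c ⬝ᵥ x := by unfold dotProduct; fun_prop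
  have := Measure.isProbabilityMeasure_map (μ := stdGaussianPi n) h_meas.aemeasurable
  refine Measure.ext_of_charFun (funext fun t => ?_)
  have h_char := charFun_stdGaussian (E := EuclideanSpace ℝ (Fin n)) (WithLp.toLp 2 (t • c))
  rw [← map_pi_eq_stdGaussian, charFun_apply, integral_map (by fun_prop) (by fun_prop)] at h_char
  rw [charFun_gaussianReal, charFun_apply, integral_map h_meas.aemeasurable (by fun_prop)]
  have h_nonneg : 0 ≤ c ⬝ᵥ c := Finset.sum_nonneg fun i _ => mul_self_nonneg (c i)
  have h_norm : ‖WithLp.toLp 2 (t • c)‖ ^ 2 = t ^ 2 * (c ⬝ᵥ c) := by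
    rw [EuclideanSpace.real_norm_sq_eq]
    simp [dotProduct, Finset.mul_sum, mul_pow, ← sq]
  have h_inner (x : Fin n → ℝ) : inner ℝ (WithLp.toLp 2 x) (WithLp.toLp 2 (t • c)) =
      inner ℝ (c ⬝ᵥ x) t := by
    rw [EuclideanSpace.inner_toLp_toLp]
    simp [smul_dotProduct]
  simp only [h_inner] at h_char
  rw [h_char, ← Complex.ofReal_pow, h_norm]
  simp [Real.coe_toNNReal _ h_nonneg, neg_div, mul_comm]

theorem exists_cholesky {n : ℕ} {S : Matrix (Fin n) (Fin n) ℝ} (hS : S.PosDef) :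
    ∃ L R : Matrix (Fin n) (Fin n) ℝ, L.IsLowerTriangular ∧ R.IsLowerTriangular ∧
      L * R = 1 ∧ L * Lᵀ = S := by
  have hA : IsUnit (LDL.lowerInv hS) := isUnit_of_invertible _
  have hD : (LDL.diag hS).PosDef := by
    rw [LDL.diag_eq_lowerInv_conj]
    exact (IsUnit.posDef_star_right_conjugate_iff hA).2 hS
  have h_pos (i : Fin n) : 0 < LDL.diagEntries hS i := by
    simpa [LDL.diag] using hD.diag_pos (i := i)
  have h_sqrt (i : Fin n) : √(LDL.diagEntries hS i) ≠ 0 := (sqrt_pos.2 (h_pos i)).ne'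
  have hA_lower : (LDL.lowerInv hS).IsLowerTriangular := fun i j hij =>
    LDL.lowerInv_triangular hS hij
  have hL_lower : (LDL.lower hS).IsLowerTriangular :=
    blockTriangular_inv_of_blockTriangular hA_lower
  have h_cancel : LDL.lower hS * LDL.lowerInv hS = 1 := inv_mul_of_invertible _
  refine ⟨LDL.lower hS * diagonal fun i => √(LDL.diagEntries hS i),
    (diagonal fun i => (√(LDL.diagEntries hS i))⁻¹) * LDL.lowerInv hS,
    hL_lower.mul (blockTriangular_diagonal _), (blockTriangular_diagonal _).mul hA_lower, ?_, ?_⟩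
  · rw [Matrix.mul_assoc, ← Matrix.mul_assoc (diagonal _), diagonal_mul_diagonal]
    simp [h_sqrt, h_cancel]
  · rw [transpose_mul, diagonal_transpose, Matrix.mul_assoc, ← Matrix.mul_assoc (diagonal _),
      diagonal_mul_diagonal, ← Matrix.mul_assoc]
    simp only [mul_self_sqrt (h_pos _).le]
    exact LDL.lower_conj_diag hS

theorem mulVec_apply_congr_of_isLowerTriangular {n : ℕ} {A : Matrix (Fin n) (Fin n) ℝ}
    (hA : A.IsLowerTriangular) {x y : Fin n → ℝ} {i : Fin n} (hxy : ∀ j ≤ i, x j = y j) :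
    (A *ᵥ x) i = (A *ᵥ y) i := by
  simp only [mulVec, dotProduct]
  refine Finset.sum_congr rfl fun j _ => ?_
  rcases lt_or_ge i j with hij | hji
  · simp [hA hij]
  · rw [hxy j hji]

theorem StrictlyCausal.mulVec_comp_mulVec {n : ℕ} {u : (Fin n → ℝ) → Fin n → ℝ}
    (hu : StrictlyCausal u) {L R : Matrix (Fin n) (Fin n) ℝ} (hL : L.IsLowerTriangular)
    (hR : R.IsLowerTriangular) : StrictlyCausal fun x => R *ᵥ u (L *ᵥ x) :=
  fun _ _ _ hxy => mulVec_apply_congr_of_isLowerTriangular hR fun j hji => hu j _ _ fun _ hkj =>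
    mulVec_apply_congr_of_isLowerTriangular hL fun l hlk =>
      hxy l (hlk.trans_lt (hkj.trans_le hji))

theorem ofReal_sum_sq_mulVec_le_of_sq_dotProduct_le {n : ℕ} {L R : Matrix (Fin n) (Fin n) ℝ}
    (hRL : R * L = 1) {u : Fin n → ℝ} {E : ℝ}
    (huE : ∀ d, (d ⬝ᵥ u) ^ 2 ≤ (d ᵥ* L) ⬝ᵥ (d ᵥ* L) * E) :
    ENNReal.ofReal (∑ i, (R *ᵥ u) i ^ 2) ≤ ENNReal.ofReal E := by
  set v := R *ᵥ u
  -- Duality: test the bound `huE` against the vector that represents `v` itself.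
  have h_rep : (v ᵥ* R) ᵥ* L = v := by rw [vecMul_vecMul, hRL, vecMul_one]
  have h_sq : v ⬝ᵥ v * (v ⬝ᵥ v) ≤ v ⬝ᵥ v * E := by
    simpa only [h_rep, ← dotProduct_mulVec, sq] using huE (v ᵥ* R)
  have h_eq : ∑ i, v i ^ 2 = v ⬝ᵥ v := by simp only [dotProduct, sq]
  have h_nonneg : 0 ≤ v ⬝ᵥ v := Finset.sum_nonneg fun i _ => mul_self_nonneg (v i)
  rw [h_eq]
  rcases h_nonneg.eq_or_lt with h | h
  · simp [← h]
  · exact ENNReal.ofReal_le_ofReal (le_of_mul_le_mul_left h_sq h)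

theorem StrictlyCausal.lintegral_add_le_of_sq_dotProduct_le {n : ℕ} {μ : Measure (Fin n → ℝ)}
    [IsFiniteMeasure μ] {S : Matrix (Fin n) (Fin n) ℝ} (hS : S.PosDef)
    (hμ : ∀ c : Fin n → ℝ, μ.map (c ⬝ᵥ ·) = gaussianReal 0 (c ⬝ᵥ S *ᵥ c).toNNReal)
    {u : (Fin n → ℝ) → Fin n → ℝ} (hc : StrictlyCausal u) (hu : Measurable u)
    {E : (Fin n → ℝ) → ℝ} (hE : Measurable E)
    (huE : ∀ x d, (d ⬝ᵥ u x) ^ 2 ≤ (d ⬝ᵥ S *ᵥ d) * E x)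
    {f : (Fin n → ℝ) → ℝ≥0∞} (hf : Measurable f) (hf1 : ∀ x, f x ≤ 1) {K : ℝ} (hK : 0 < K) :
    ∫⁻ x, f (x + u x) ∂μ ≤ ENNReal.ofReal (exp K) * ∫⁻ x, f x ∂μ +
      (∫⁻ x, ENNReal.ofReal (E x) ∂μ) * ENNReal.ofReal (expRemainder K)⁻¹ := by
  obtain ⟨L, R, hL, hR, hLR, rfl⟩ := exists_cholesky hS
  have h_meas (A : Matrix (Fin n) (Fin n) ℝ) : Measurable (A *ᵥ · : (Fin n → ℝ) → Fin n → ℝ) :=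
    (Continuous.matrix_mulVec continuous_const continuous_id).measurable
  have h_dot (c : Fin n → ℝ) : Measurable (c ⬝ᵥ · : (Fin n → ℝ) → ℝ) := by
    unfold dotProduct; fun_prop
  have h_form (d : Fin n → ℝ) : d ⬝ᵥ (L * Lᵀ) *ᵥ d = (d ᵥ* L) ⬝ᵥ (d ᵥ* L) := by
    rw [← mulVec_mulVec, dotProduct_mulVec, mulVec_transpose]
  have hμL : μ = (stdGaussianPi n).map (L *ᵥ ·) := by
    refine measure_ext_of_map_dotProduct fun c => ?_
    rw [hμ, h_form, Measure.map_map (h_dot c) (h_meas L), ← map_dotProduct_stdGaussianPi]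
    simp only [Function.comp_def, dotProduct_mulVec]
  have h_cancel (y : Fin n → ℝ) : L *ᵥ R *ᵥ y = y := by rw [mulVec_mulVec, hLR, one_mulVec]
  have h_energy (x : Fin n → ℝ) : ENNReal.ofReal (∑ i, (R *ᵥ u (L *ᵥ x)) i ^ 2) ≤
      ENNReal.ofReal (E (L *ᵥ x)) :=
    ofReal_sum_sq_mulVec_le_of_sq_dotProduct_le (mul_eq_one_comm.1 hLR) fun d =>
      h_form d ▸ huE (L *ᵥ x) d
  rw [hμL, lintegral_map (by fun_prop) (h_meas L), lintegral_map hf (h_meas L),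
    lintegral_map (by fun_prop) (h_meas L)]
  calc _ = ∫⁻ x, f (L *ᵥ (x + R *ᵥ u (L *ᵥ x))) ∂stdGaussianPi n := by
        simp only [mulVec_add, h_cancel]
    _ ≤ _ := (hc.mulVec_comp_mulVec hL hR).lintegral_add_le
        ((h_meas R).comp (hu.comp (h_meas L))) (hf.comp (h_meas L)) (fun _ => hf1 _) hK
    _ ≤ _ := add_le_add le_rfl (mul_le_mul_left (lintegral_mono h_energy) _)

end CausalShiftOfGaussian

section FractionalBM

open Matrix

variable {Ω : Type*} {H : ℝ} {W : ℝ → Ω → ℝ}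

/-- The increments of the process `W` along the grid of mesh `h`. -/
def gridIncrement (W : ℝ → Ω → ℝ) (h : ℝ) (ω : Ω) (i : ℕ) : ℝ :=
  W ((i + 1) * h) ω - W (i * h) ω

/-- The covariance matrix of the first `n` increments of fractional Brownian motion along the grid
of mesh `h`. -/
noncomputable def gridCovMatrix (H : ℝ) (n : ℕ) (h : ℝ) : Matrix (Fin n) (Fin n) ℝ :=
  Matrix.of fun i j => h ^ (2 * H) * fgnCov H ((i : ℕ) - (j : ℕ) : ℝ)

theorem dotProduct_gridCovMatrix_mulVec (H : ℝ) (n : ℕ) (h : ℝ) (d : ℕ → ℝ) :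
    (fun i : Fin n => d i) ⬝ᵥ gridCovMatrix H n h *ᵥ (fun i : Fin n => d i) =
      h ^ (2 * H) * toeplitzForm (fgnCov H) n d := by
  simp only [toeplitzForm, dotProduct, mulVec, gridCovMatrix, Matrix.of_apply, Finset.sum_range,
    Finset.mul_sum]
  exact Finset.sum_congr rfl fun i _ => Finset.sum_congr rfl fun j _ => by ring

theorem exists_eq_comp_finVal {n : ℕ} (d : Fin n → ℝ) :
    ∃ d' : ℕ → ℝ, (fun i : Fin n => d' i) = d :=
  Fin.val_injective.surjective_comp_right d

theorem posDef_gridCovMatrix (h_half : 1 / 2 < H) (h_one : H < 1) (n : ℕ) {h : ℝ} (hh : 0 < h) :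
    (gridCovMatrix H n h).PosDef := by
  obtain ⟨C, hC, h_bound⟩ := exists_sq_sum_mul_le_toeplitzForm_fgnCov h_half h_one
  refine Matrix.PosDef.of_dotProduct_mulVec_pos ?_ fun x hx => ?_
  · ext i j
    simp only [Matrix.conjTranspose_apply, gridCovMatrix, Matrix.of_apply, star_trivial]
    rw [fgnCov, ← incrementCov_neg, neg_sub]
  obtain ⟨d, rfl⟩ := exists_eq_comp_finVal x
  rw [star_trivial, dotProduct_gridCovMatrix_mulVec]
  refine mul_pos (rpow_pos_of_pos hh _) (not_le.1 fun h_neg => hx ?_)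
  have h_zero : (∑ i ∈ Finset.range n, d i * d i) ^ 2 ≤ 0 := (h_bound n d d).trans
    (mul_nonpos_of_nonpos_of_nonneg (mul_nonpos_of_nonneg_of_nonpos hC h_neg)
      (fractionalEnergy_nonneg H n d))
  have h_sum := pow_eq_zero_iff two_ne_zero |>.1 (h_zero.antisymm (sq_nonneg _))
  rw [Finset.sum_eq_zero_iff_of_nonneg fun i _ => mul_self_nonneg (d i)] at h_sum
  ext i
  simpa using h_sum i (Finset.mem_range.2 i.2)

theorem fbmCov_gridIncrement (H : ℝ) {h : ℝ} (hh : 0 < h) (x y : ℝ) :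
    fbmCov H ((x + 1) * h) ((y + 1) * h) - fbmCov H ((x + 1) * h) (y * h)
      - fbmCov H (x * h) ((y + 1) * h) + fbmCov H (x * h) (y * h) =
    h ^ (2 * H) * fgnCov H (x - y) := by
  have h_scale (z : ℝ) : |z * h| ^ (2 * H) = h ^ (2 * H) * |z| ^ (2 * H) := by
    rw [abs_mul, abs_of_pos hh, mul_rpow (abs_nonneg _) hh.le, mul_comm]
  simp only [fbmCov, fgnCov, incrementCov, ← sub_mul, h_scale]
  rw [show y + 1 - (x + 1) = -(x - y) by ring, show y - (x + 1) = -(x - y + 1) by ring,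
    show y + 1 - x = -(x - y - 1) by ring, show y - x = -(x - y) by ring]
  simp only [abs_neg]
  ring

variable [MeasurableSpace Ω] {P : Measure Ω}

theorem IsFractionalBM.map_sum_mul (hW : IsFractionalBM P H W) {ι : Type*} [Fintype ι] {t : ι → ℝ}
    (ht : ∀ i, 0 ≤ t i) (c : ι → ℝ) : P.map (fun ω => ∑ i, c i * W (t i) ω) =
      gaussianReal 0 (∑ i, ∑ j, c i * c j * fbmCov H (t i) (t j)).toNNReal := by
  let e := Fintype.equivFin ι
  have h := hW.2.2 _ (t ∘ e.symm) (fun i => ht _) (c ∘ e.symm)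
  simp only [Function.comp_apply] at h
  rw [← e.symm.sum_comp fun i => ∑ j, c i * c j * fbmCov H (t i) (t j)]
  simp only [← e.symm.sum_comp fun j => c _ * c j * fbmCov H (t _) (t j),
    ← e.symm.sum_comp fun i => c i * W (t i) _]
  exact h

theorem IsFractionalBM.map_dotProduct_gridIncrement (hW : IsFractionalBM P H W) (n : ℕ) {h : ℝ}
    (hh : 0 < h) (c : Fin n → ℝ) :
    P.map (fun ω => c ⬝ᵥ fun i : Fin n => gridIncrement W h ω i) =
      gaussianReal 0 (c ⬝ᵥ gridCovMatrix H n h *ᵥ c).toNNReal := by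
  have h_law := hW.map_sum_mul (ι := Fin n × Bool)
    (t := fun p => if p.2 then ((p.1 : ℕ) + 1 : ℝ) * h else ((p.1 : ℕ) : ℝ) * h)
    (by rintro ⟨i, _ | _⟩ <;> simp only [Bool.false_eq_true, if_true, if_false] <;> positivity)
    fun p => if p.2 then c p.1 else -c p.1
  simp only [Fintype.sum_prod_type, Fintype.sum_bool, if_true, Bool.false_eq_true, if_false]
    at h_law
  convert h_law using 2
  · ext ω
    simp only [dotProduct, gridIncrement]
    exact Finset.sum_congr rfl fun i _ => by ring
  · simp only [dotProduct, mulVec, gridCovMatrix, Matrix.of_apply, Finset.mul_sum,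
      ← fbmCov_gridIncrement H hh, ← Finset.sum_add_distrib]
    congr 1
    exact Finset.sum_congr rfl fun i _ => Finset.sum_congr rfl fun j _ => by ring

theorem IsFractionalBM.measurable_gridIncrement (hW : IsFractionalBM P H W) (h : ℝ) (i : ℕ) :
    Measurable fun ω => gridIncrement W h ω i :=
  (hW.1 _).sub (hW.1 _)

theorem measurable_fractionalEnergy {X : Type*} [MeasurableSpace X] (n : ℕ) {φ : X → ℕ → ℝ}
    (hφ : ∀ i, Measurable fun x => φ x i) : Measurable fun x => fractionalEnergy H n (φ x) := by
  unfold fractionalEnergy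
  fun_prop

theorem fractionalEnergy_congr {n : ℕ} {φ ψ : ℕ → ℝ} (h : ∀ i < n, φ i = ψ i) :
    fractionalEnergy H n φ = fractionalEnergy H n ψ := by
  refine Finset.sum_congr rfl fun i hi => ?_
  rw [Finset.mem_range] at hi
  rw [h i hi]
  refine congrArg _ (Finset.sum_congr rfl fun j hj => ?_)
  rw [h j ((Finset.mem_range.1 hj).trans hi)]

theorem IsFractionalBM.exists_lintegral_gridIncrement_add_le_fin [IsProbabilityMeasure P]
    (hW : IsFractionalBM P H W) (h_half : 1 / 2 < H) (h_one : H < 1) :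
    ∃ C : ℝ, 0 ≤ C ∧ ∀ (n : ℕ) {h : ℝ}, 0 < h → ∀ {u : (Fin n → ℝ) → ℕ → ℝ},
      StrictlyCausal (fun x (i : Fin n) => u x i) → (∀ i, Measurable fun x => u x i) →
      ∀ {f : (Fin n → ℝ) → ℝ≥0∞}, Measurable f → (∀ x, f x ≤ 1) → ∀ {K : ℝ}, 0 < K →
      let ξ ω (i : Fin n) := gridIncrement W h ω i
      ∫⁻ ω, f (fun i => ξ ω i + u (ξ ω) i) ∂P ≤
        ENNReal.ofReal (exp K) * ∫⁻ ω, f (ξ ω) ∂P +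
        (∫⁻ ω, ENNReal.ofReal (C * h ^ (-(2 * H)) * fractionalEnergy H n (u (ξ ω))) ∂P) *
          ENNReal.ofReal (expRemainder K)⁻¹ := by
  obtain ⟨C, hC, h_bound⟩ := exists_sq_sum_mul_le_toeplitzForm_fgnCov h_half h_one
  refine ⟨C, hC, fun n h hh u hc hu f hf hf1 K hK => ?_⟩
  intro ξ
  have hξ : Measurable ξ := measurable_pi_iff.2 fun i => hW.measurable_gridIncrement h i
  have hu' : Measurable fun x (i : Fin n) => u x i := measurable_pi_iff.2 fun i => hu i
  have h_energy := (measurable_fractionalEnergy (H := H) n hu).const_mul (C * h ^ (-(2 * H)))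
  have := Measure.isProbabilityMeasure_map (μ := P) hξ.aemeasurable
  have h_shift := hc.lintegral_add_le_of_sq_dotProduct_le (μ := P.map ξ)
    (posDef_gridCovMatrix h_half h_one n hh) (fun c => ?_) hu' h_energy (fun x d => ?_) hf hf1 hK
  · rwa [lintegral_map (by fun_prop) hξ, lintegral_map hf hξ,
      lintegral_map h_energy.ennreal_ofReal hξ] at h_shift
  · rw [← hW.map_dotProduct_gridIncrement n hh c, Measure.map_map _ hξ]
    · rfl
    · unfold dotProduct; fun_prop
  · obtain ⟨d, rfl⟩ := exists_eq_comp_finVal d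
    have h_cancel : h ^ (2 * H) * h ^ (-(2 * H)) = 1 := by rw [← rpow_add hh]; simp
    rw [dotProduct_gridCovMatrix_mulVec]
    calc _ ≤ _ := by simpa only [dotProduct, Finset.sum_range] using h_bound n d (u x)
      _ = (h ^ (2 * H) * h ^ (-(2 * H))) *
          (C * toeplitzForm (fgnCov H) n d * fractionalEnergy H n (u x)) := by
        rw [h_cancel, one_mul]
      _ = _ := by ring

/-- The finite statement applies after padding finite sequences with zeros: by causality neither the
shift nor the test function sees the padding. -/
theorem IsFractionalBM.exists_lintegral_gridIncrement_add_le [IsProbabilityMeasure P]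
    (hW : IsFractionalBM P H W) (h_half : 1 / 2 < H) (h_one : H < 1) :
    ∃ C : ℝ, 0 ≤ C ∧ ∀ (n : ℕ) {h : ℝ}, 0 < h → ∀ {u : (ℕ → ℝ) → ℕ → ℝ},
      StrictlyCausal u → (∀ i, Measurable fun x => u x i) → ∀ {f : (ℕ → ℝ) → ℝ≥0∞},
      Measurable f → DependsOn f (Set.Iio n) → (∀ x, f x ≤ 1) → ∀ {K : ℝ}, 0 < K →
      ∫⁻ ω, f (gridIncrement W h ω + u (gridIncrement W h ω)) ∂P ≤
        ENNReal.ofReal (exp K) * ∫⁻ ω, f (gridIncrement W h ω) ∂P +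
        (∫⁻ ω, ENNReal.ofReal (C * h ^ (-(2 * H)) *
          fractionalEnergy H n (u (gridIncrement W h ω))) ∂P) *
            ENNReal.ofReal (expRemainder K)⁻¹ := by
  obtain ⟨C, hC, h_fin⟩ := hW.exists_lintegral_gridIncrement_add_le_fin h_half h_one
  refine ⟨C, hC, fun n h hh u hc hu f hf hfn hf1 K hK => ?_⟩
  let pad (x : Fin n → ℝ) : ℕ → ℝ := Function.extend Fin.val x 0
  have h_pad_val (x : Fin n → ℝ) (i : Fin n) : pad x i = x i := Fin.val_injective.extend_apply _ _ _
  have h_pad (x : ℕ → ℝ) {i : ℕ} (hi : i < n) : pad (fun j => x j) i = x i := h_pad_val _ ⟨i, hi⟩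
  have h_pad_meas : Measurable pad := by
    refine measurable_pi_iff.2 fun i => ?_
    by_cases hi : i < n
    · have (x : Fin n → ℝ) : pad x i = x ⟨i, hi⟩ := h_pad_val x ⟨i, hi⟩
      simpa only [this] using measurable_pi_apply _
    · have (x : Fin n → ℝ) : pad x i = 0 :=
        Function.extend_apply' _ _ _ fun ⟨j, hj⟩ => hi (hj ▸ j.2)
      simp only [this, measurable_const]
  have h_u (x : ℕ → ℝ) {i : ℕ} (hi : i < n) : u (pad fun j => x j) i = u x i :=
    hc i _ _ fun j hj => h_pad x (hj.trans hi)
  have h := h_fin n hh (u := fun x => u (pad x)) (f := fun x => f (pad x))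
    (fun i x y hxy => hc i _ _ fun j hj => ?_) (fun i => (hu i).comp h_pad_meas)
    (hf.comp h_pad_meas) (fun _ => hf1 _) hK
  · refine (lintegral_congr fun ω => ?_).trans_le (h.trans_eq ?_)
    · refine hfn fun i hi => ?_
      rw [h_pad_val _ ⟨i, hi⟩, h_u _ hi, Pi.add_apply]
    · congr 2
      · exact congrArg _ (funext fun ω => hfn fun i hi => h_pad _ hi)
      · exact lintegral_congr fun ω => by rw [fractionalEnergy_congr fun i hi => h_u _ hi]
  · rw [h_pad_val _ ⟨j, hj.trans i.2⟩, h_pad_val _ ⟨j, hj.trans i.2⟩]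
    exact hxy _ hj

end FractionalBM

/-! ### The Euler scheme -/

section EnergyBound

variable {H : ℝ}

theorem sum_range_add_one_rpow_neg_le {s : ℝ} (hs0 : 0 ≤ s) (hs1 : s < 1) (n : ℕ) :
    ∑ k ∈ Finset.range n, ((k : ℝ) + 1) ^ (-s) ≤ (1 - s)⁻¹ * (n : ℝ) ^ (1 - s) := by
  have hs : 0 < 1 - s := sub_pos.2 hs1
  induction n with
  | zero => simp [zero_rpow hs.ne']
  | succ k ih =>
    have hk : (0 : ℝ) < k + 1 := by positivity
    have h_bernoulli : (k / (k + 1) : ℝ) ^ (1 - s) ≤ 1 - (1 - s) / (k + 1) := by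
      have h := rpow_one_add_le_one_add_mul_self (s := -(1 / (k + 1) : ℝ)) (p := 1 - s)
        (neg_le_neg (div_le_one_of_le₀ (by simp) hk.le)) hs.le (by linarith)
      convert h using 1
      · congr 1
        field_simp
        ring
      · ring
    have h_split : ((k : ℝ) + 1) ^ (1 - s) = (k + 1) * ((k : ℝ) + 1) ^ (-s) := by
      rw [sub_eq_add_neg, rpow_add hk, rpow_one]
    rw [div_rpow (by positivity) hk.le, div_le_iff₀ (by positivity), sub_mul, div_mul_eq_mul_div,
      h_split, one_mul, ← mul_assoc, mul_right_comm, mul_div_assoc, div_self hk.ne'] at h_bernoulli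
    rw [Finset.sum_range_succ, Nat.cast_succ, h_split]
    rw [inv_mul_eq_div, le_div_iff₀ hs] at ih ⊢
    linarith

theorem sum_range_sub_rpow_neg_le {s : ℝ} (hs0 : 0 ≤ s) (hs1 : s < 1) {i n : ℕ} (hin : i ≤ n) :
    ∑ j ∈ Finset.range i, ((i : ℝ) - j) ^ (-s) ≤ (1 - s)⁻¹ * (n : ℝ) ^ (1 - s) := by
  have h_reflect := Finset.sum_range_reflect (fun k : ℕ => ((k : ℝ) + 1) ^ (-s)) i
  have h_term : ∀ j ∈ Finset.range i, ((i : ℝ) - j) ^ (-s) =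
      (((i - 1 - j : ℕ) : ℝ) + 1) ^ (-s) := by
    intro j hj
    have hji := Finset.mem_range.1 hj
    rw [← Nat.cast_add_one, show i - 1 - j + 1 = i - j by omega, Nat.cast_sub hji.le]
  have : 0 ≤ (1 - s)⁻¹ := inv_nonneg.2 (sub_nonneg.2 hs1.le)
  rw [Finset.sum_congr rfl h_term, h_reflect]
  exact (sum_range_add_one_rpow_neg_le hs0 hs1 i).trans (by gcongr)

variable {Ω : Type*} [MeasurableSpace Ω] {P : Measure Ω}

theorem lintegral_ofReal_sq_le_of_eLpNorm_le {f : Ω → ℝ} {r : ℝ} (hr : 0 ≤ r)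
    (hf : eLpNorm f 2 P ≤ ENNReal.ofReal r) :
    ∫⁻ ω, ENNReal.ofReal (f ω ^ 2) ∂P ≤ ENNReal.ofReal (r ^ 2) := by
  have h_pow := eLpNorm_nnreal_pow_eq_lintegral (f := f) (μ := P) (p := 2) two_ne_zero
  calc ∫⁻ ω, ENNReal.ofReal (f ω ^ 2) ∂P = eLpNorm f 2 P ^ 2 := by
        simp only [NNReal.coe_two, ENNReal.rpow_two, ENNReal.coe_ofNat] at h_pow
        simp only [h_pow, ← ofReal_norm, norm_eq_abs, ← ENNReal.ofReal_pow (abs_nonneg _), sq_abs]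
    _ ≤ ENNReal.ofReal r ^ 2 := by gcongr
    _ = ENNReal.ofReal (r ^ 2) := (ENNReal.ofReal_pow hr 2).symm

theorem ofReal_sum_sq_mul_add_sum_sq_mul (n : ℕ) (c : ℕ → ℝ) (d : ℕ → ℕ → ℝ) {w : ℕ → ℝ}
    {κ : ℕ → ℕ → ℝ} (hw : ∀ i, 0 ≤ w i) (hκ : ∀ i, ∀ j ∈ Finset.range i, 0 ≤ κ i j) :
    ENNReal.ofReal (∑ i ∈ Finset.range n,
      (c i ^ 2 * w i + ∑ j ∈ Finset.range i, d i j ^ 2 * κ i j)) =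
    ∑ i ∈ Finset.range n, (ENNReal.ofReal (c i ^ 2) * ENNReal.ofReal (w i) +
      ∑ j ∈ Finset.range i, ENNReal.ofReal (d i j ^ 2) * ENNReal.ofReal (κ i j)) := by
  have h_diag (i : ℕ) : 0 ≤ c i ^ 2 * w i := mul_nonneg (sq_nonneg _) (hw i)
  have h_off (i : ℕ) : ∀ j ∈ Finset.range i, 0 ≤ d i j ^ 2 * κ i j :=
    fun j hj => mul_nonneg (sq_nonneg _) (hκ i j hj)
  rw [ENNReal.ofReal_sum_of_nonneg fun i _ => add_nonneg (h_diag i) (Finset.sum_nonneg (h_off i))]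
  refine Finset.sum_congr rfl fun i _ => ?_
  rw [ENNReal.ofReal_add (h_diag i) (Finset.sum_nonneg (h_off i)),
    ENNReal.ofReal_mul (sq_nonneg _), ENNReal.ofReal_sum_of_nonneg (h_off i)]
  exact congrArg _ (Finset.sum_congr rfl fun j _ => ENNReal.ofReal_mul (sq_nonneg _))

theorem lintegral_fractionalEnergy_le_ofReal {n : ℕ} {φ : Ω → ℕ → ℝ}
    (hφ : ∀ i, Measurable fun ω => φ ω i) {a : ℕ → ℝ} {b : ℕ → ℕ → ℝ} (ha : ∀ i, 0 ≤ a i)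
    (hb : ∀ i, ∀ j < i, 0 ≤ b i j)
    (hφa : ∀ i < n, eLpNorm (fun ω => φ ω i) 2 P ≤ ENNReal.ofReal (a i))
    (hφb : ∀ i < n, ∀ j < i, eLpNorm (fun ω => φ ω i - φ ω j) 2 P ≤ ENNReal.ofReal (b i j)) :
    ∫⁻ ω, ENNReal.ofReal (fractionalEnergy H n (φ ω)) ∂P ≤
      ENNReal.ofReal (∑ i ∈ Finset.range n, (a i ^ 2 * ((i : ℝ) + 1) ^ (1 - 2 * H) +
        ∑ j ∈ Finset.range i, b i j ^ 2 * ((i : ℝ) - j) ^ (-(2 * H)))) := by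
  have h_lag {i j : ℕ} (hj : j ∈ Finset.range i) : 0 ≤ ((i : ℝ) - j) ^ (-(2 * H)) :=
    rpow_nonneg (sub_nonneg.2 (mod_cast (Finset.mem_range.1 hj).le)) _
  have h_weight (i : ℕ) : 0 ≤ ((i : ℝ) + 1) ^ (1 - 2 * H) := by positivity
  have h_sum (c : ℕ → ℝ) (d : ℕ → ℕ → ℝ) :=
    ofReal_sum_sq_mul_add_sum_sq_mul n c d h_weight fun i j hj => h_lag (i := i) (j := j) hj
  have h_energy (ω : Ω) := h_sum (φ ω) fun i j => φ ω i - φ ω j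
  simp only [fractionalEnergy, h_energy, h_sum]
  rw [lintegral_finsetSum _ fun i _ => by fun_prop]
  refine Finset.sum_le_sum fun i hi => ?_
  rw [lintegral_add_left (by fun_prop), lintegral_mul_const _ (by fun_prop),
    lintegral_finsetSum _ fun j _ => by fun_prop]
  have hin := Finset.mem_range.1 hi
  gcongr with j hj
  · exact lintegral_ofReal_sq_le_of_eLpNorm_le (ha i) (hφa i hin)
  · have hji := Finset.mem_range.1 hj
    rw [lintegral_mul_const _ (by fun_prop)]
    gcongr
    exact lintegral_ofReal_sq_le_of_eLpNorm_le (hb i j hji) (hφb i hin j hji)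

theorem lintegral_fractionalEnergy_le (h_half : 1 / 2 < H) (h_one : H < 1) {γ : ℝ} (hγ : γ ≤ H)
    (hγH : 2 * H - 2 * γ < 1) {n : ℕ} {φ : Ω → ℕ → ℝ} (hφ : ∀ i, Measurable fun ω => φ ω i)
    {A B : ℝ} (hA : 0 ≤ A) (hB : 0 ≤ B)
    (hφA : ∀ i < n, eLpNorm (fun ω => φ ω i) 2 P ≤ ENNReal.ofReal A)
    (hφB : ∀ i < n, ∀ j < i,
      eLpNorm (fun ω => φ ω i - φ ω j) 2 P ≤ ENNReal.ofReal (B * ((i : ℝ) - j) ^ γ)) :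
    ∫⁻ ω, ENNReal.ofReal (fractionalEnergy H n (φ ω)) ∂P ≤
      ENNReal.ofReal (A ^ 2 * ((2 - 2 * H)⁻¹ * (n : ℝ) ^ (2 - 2 * H)) +
        B ^ 2 * ((1 - (2 * H - 2 * γ))⁻¹ * (n : ℝ) ^ (2 - (2 * H - 2 * γ)))) := by
  have h_lag {i j : ℕ} (hj : j < i) : (0 : ℝ) < (i : ℝ) - j := sub_pos.2 (mod_cast hj)
  refine (lintegral_fractionalEnergy_le_ofReal hφ (fun _ => hA)
    (fun i j hj => mul_nonneg hB (rpow_nonneg (h_lag hj).le γ)) hφA hφB).trans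
    (ENNReal.ofReal_le_ofReal ?_)
  have h_off : ∀ i ∈ Finset.range n,
      ∑ j ∈ Finset.range i, (B * ((i : ℝ) - j) ^ γ) ^ 2 * ((i : ℝ) - j) ^ (-(2 * H)) ≤
        B ^ 2 * ((1 - (2 * H - 2 * γ))⁻¹ * (n : ℝ) ^ (1 - (2 * H - 2 * γ))) := by
    intro i hi
    have h_term : ∀ j ∈ Finset.range i, (B * ((i : ℝ) - j) ^ γ) ^ 2 * ((i : ℝ) - j) ^ (-(2 * H)) =
        B ^ 2 * ((i : ℝ) - j) ^ (-(2 * H - 2 * γ)) := by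
      intro j hj
      have h := h_lag (Finset.mem_range.1 hj)
      rw [mul_pow, ← rpow_mul_natCast h.le, mul_assoc, ← rpow_add h]
      push_cast
      ring_nf
    rw [Finset.sum_congr rfl h_term, ← Finset.mul_sum]
    gcongr
    exact sum_range_sub_rpow_neg_le (by linarith) hγH (Finset.mem_range.1 hi).le
  have h_diag := sum_range_add_one_rpow_neg_le (s := 2 * H - 1) (by linarith) (by linarith) n
  rw [neg_sub, show 1 - (2 * H - 1) = 2 - 2 * H by ring] at h_diag
  have h_pow : (n : ℝ) ^ (2 - (2 * H - 2 * γ)) = n * (n : ℝ) ^ (1 - (2 * H - 2 * γ)) := by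
    rw [← rpow_one_add' n.cast_nonneg (by linarith)]
    ring_nf
  rw [Finset.sum_add_distrib, ← Finset.mul_sum]
  refine add_le_add (by gcongr) ((Finset.sum_le_sum h_off).trans_eq ?_)
  rw [Finset.sum_const, Finset.card_range, nsmul_eq_mul, h_pow]
  ring

end EnergyBound

section EulerPath

variable {x₀ h : ℝ} {β : ℝ → ℝ}

/-- The Euler scheme of mesh `h` for `dy = β(y) dt + dξ` started at `x₀`, as a function of the
sequence `ξ` of increments of the driving noise. -/
noncomputable def eulerPath (x₀ h : ℝ) (β : ℝ → ℝ) (ξ : ℕ → ℝ) : ℕ → ℝ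
  | 0 => x₀
  | i + 1 => eulerPath x₀ h β ξ i + h * β (eulerPath x₀ h β ξ i) + ξ i

theorem strictlyCausal_eulerPath (x₀ h : ℝ) (β : ℝ → ℝ) : StrictlyCausal (eulerPath x₀ h β) := by
  intro i x y hxy
  induction i with
  | zero => rfl
  | succ i ih => simp only [eulerPath, ih fun j hj => hxy j (hj.trans i.lt_succ_self),
      hxy i i.lt_succ_self]

theorem measurable_eulerPath (hβ : Measurable β) : Measurable (eulerPath x₀ h β) := by
  refine measurable_pi_iff.2 fun i => ?_
  induction i with
  | zero => exact measurable_const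
  | succ i ih => exact (ih.add ((hβ.comp ih).const_mul h)).add (measurable_pi_apply i)

theorem eulerPath_add_drift (x₀ h : ℝ) (β₁ β₂ : ℝ → ℝ) (ξ : ℕ → ℝ) :
    eulerPath x₀ h β₂ (ξ + fun i => h * (β₁ (eulerPath x₀ h β₁ ξ i) - β₂ (eulerPath x₀ h β₁ ξ i))) =
      eulerPath x₀ h β₁ ξ := by
  ext i
  induction i with
  | zero => rfl
  | succ i ih =>
    simp only [eulerPath, ih, Pi.add_apply]
    ring

theorem abs_eulerPath_gridIncrement_sub_le {Ω : Type*} (W : ℝ → Ω → ℝ) (ω : Ω) {M : ℝ}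
    (hβ : ∀ x, |β x| ≤ M) (hh : 0 ≤ h) {i j : ℕ} (hji : j ≤ i) :
    |eulerPath x₀ h β (gridIncrement W h ω) i - eulerPath x₀ h β (gridIncrement W h ω) j -
      (W (i * h) ω - W (j * h) ω)| ≤ M * ((i - j) * h) := by
  induction i, hji using Nat.le_induction with
  | base => simp
  | succ i _ ih =>
    have h_drift : |h * β (eulerPath x₀ h β (gridIncrement W h ω) i)| ≤ h * M := by
      rw [abs_mul, abs_of_nonneg hh]
      gcongr
      exact hβ _
    rw [abs_le] at ih h_drift ⊢
    simp only [eulerPath, gridIncrement]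
    push_cast
    constructor <;> linarith

end EulerPath

section DriftChange

variable {Ω : Type*} [MeasurableSpace Ω] {P : Measure Ω} {H : ℝ} {W : ℝ → Ω → ℝ}

theorem eLpNorm_id_gaussianReal_two (v : ℝ≥0) :
    eLpNorm id 2 (gaussianReal 0 v) = ENNReal.ofReal √v := by
  have h_pow :=
    eLpNorm_nnreal_pow_eq_lintegral (f := id) (μ := gaussianReal 0 v) (p := 2) two_ne_zero
  have h_var := (memLp_id_gaussianReal (μ := 0) (v := v) 2).ofReal_variance_eq
  simp only [NNReal.coe_two, ENNReal.rpow_two, ENNReal.coe_ofNat] at h_pow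
  simp only [variance_id_gaussianReal, evariance, id, integral_id_gaussianReal, sub_zero]
    at h_var h_pow
  rw [← h_var, ← sq_sqrt v.coe_nonneg, ENNReal.ofReal_pow (sqrt_nonneg _)] at h_pow
  exact (ENNReal.pow_right_strictMono two_ne_zero).injective h_pow

theorem IsFractionalBM.eLpNorm_sub_two (hW : IsFractionalBM P H W) (hH : 0 < H) {s t : ℝ}
    (hs : 0 ≤ s) (ht : 0 ≤ t) :
    eLpNorm (fun ω => W t ω - W s ω) 2 P = ENNReal.ofReal (|t - s| ^ H) := by
  have h_law := hW.map_sum_mul (ι := Bool) (t := fun k => if k then t else s)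
    (by rintro (_ | _) <;> simpa) fun k => if k then 1 else -1
  simp only [Fintype.sum_bool, if_true, Bool.false_eq_true, if_false] at h_law
  have h_fun : (fun ω => 1 * W t ω + -1 * W s ω) = fun ω => W t ω - W s ω := by
    ext ω
    ring
  have h_cov : 1 * 1 * fbmCov H t t + 1 * -1 * fbmCov H t s +
      (-1 * 1 * fbmCov H s t + -1 * -1 * fbmCov H s s) = (|t - s| ^ H) ^ 2 := by
    rw [← rpow_mul_natCast (abs_nonneg _)]
    simp only [fbmCov, sub_self, abs_zero, zero_rpow (by positivity : 2 * H ≠ 0), abs_sub_comm s t]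
    push_cast
    ring_nf
  have h_norm := eLpNorm_id_gaussianReal_two ((|t - s| ^ H) ^ 2).toNNReal
  rw [h_fun, h_cov] at h_law
  rw [← h_law, eLpNorm_map_measure (by fun_prop) (f := fun ω => W t ω - W s ω)
      ((hW.1 t).sub (hW.1 s)).aemeasurable,
    coe_toNNReal _ (by positivity), sqrt_sq (by positivity)] at h_norm
  exact h_norm

variable [IsProbabilityMeasure P]

theorem eLpNorm_sub_comp_le_of_holder {g : ℝ → ℝ} {a c : ℝ} (ha0 : 0 < a) (ha1 : a ≤ 1)
    (hg : ∀ x y, |g x - g y| ≤ c * |x - y| ^ a) {X Y : Ω → ℝ}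
    (hXY : AEStronglyMeasurable (fun ω => X ω - Y ω) P) (p : ℝ≥0∞) :
    eLpNorm (fun ω => g (X ω) - g (Y ω)) p P ≤
      ENNReal.ofReal c * eLpNorm (fun ω => X ω - Y ω) p P ^ a := by
  calc eLpNorm (fun ω => g (X ω) - g (Y ω)) p P
      ≤ ENNReal.ofReal c * eLpNorm (fun ω => ‖X ω - Y ω‖ ^ a) p P :=
        eLpNorm_le_mul_eLpNorm_of_ae_le_mul (.of_forall fun ω => by
          simpa [abs_of_nonneg (rpow_nonneg (abs_nonneg _) a)] using hg (X ω) (Y ω)) p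
    _ = ENNReal.ofReal c * eLpNorm (fun ω => X ω - Y ω) (p * ENNReal.ofReal a) P ^ a := by
        rw [eLpNorm_norm_rpow _ ha0]
    _ ≤ _ := by
        gcongr
        refine eLpNorm_le_eLpNorm_of_exponent_le ?_ hXY
        exact mul_le_of_le_one_right' (ENNReal.ofReal_le_one.2 ha1)

theorem IsFractionalBM.eLpNorm_eulerPath_sub_le (hW : IsFractionalBM P H W) (hH0 : 0 < H)
    (hH1 : H < 1) {x₀ h M T : ℝ} {β : ℝ → ℝ} (hβ : ∀ x, |β x| ≤ M) (hh : 0 ≤ h) {i j : ℕ}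
    (hji : j ≤ i) (hT : (i - j) * h ≤ T) (hβm : Measurable β) :
    eLpNorm (fun ω => eulerPath x₀ h β (gridIncrement W h ω) i -
      eulerPath x₀ h β (gridIncrement W h ω) j) 2 P ≤
        ENNReal.ofReal ((1 + M * T ^ (1 - H)) * ((i - j) * h) ^ H) := by
  set τ : ℝ := (i - j) * h
  set D : Ω → ℝ := fun ω => W (i * h) ω - W (j * h) ω
  set Y : ℕ → Ω → ℝ := fun i ω => eulerPath x₀ h β (gridIncrement W h ω) i
  have hτ : 0 ≤ τ := mul_nonneg (sub_nonneg.2 (mod_cast hji)) hh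
  have hM : 0 ≤ M := (abs_nonneg _).trans (hβ 0)
  have h_noise : eLpNorm D 2 P = ENNReal.ofReal (τ ^ H) := by
    rw [hW.eLpNorm_sub_two hH0 (by positivity) (by positivity), ← sub_mul, abs_of_nonneg hτ]
  have h_drift : eLpNorm (fun ω => Y i ω - Y j ω - D ω) 2 P ≤ ENNReal.ofReal (M * τ) := by
    simpa using eLpNorm_le_of_ae_bound (μ := P) (p := 2) (.of_forall fun ω =>
      abs_eulerPath_gridIncrement_sub_le (x₀ := x₀) W ω hβ hh hji)
  have hY (i : ℕ) : Measurable (Y i) := measurable_pi_iff.1 ((measurable_eulerPath hβm).comp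
    (measurable_pi_iff.2 (hW.measurable_gridIncrement h))) i
  have hD : Measurable D := (hW.1 _).sub (hW.1 _)
  have h_pow : M * τ ≤ M * T ^ (1 - H) * τ ^ H := by
    have : τ = τ ^ (1 - H) * τ ^ H := by rw [← rpow_add_of_nonneg hτ] <;> simp [hH0.le, hH1.le]
    calc M * τ = M * (τ ^ (1 - H) * τ ^ H) := by rw [← this]
      _ ≤ M * (T ^ (1 - H) * τ ^ H) := by gcongr
      _ = _ := by ring
  calc eLpNorm (fun ω => Y i ω - Y j ω) 2 P
      = eLpNorm (D + fun ω => Y i ω - Y j ω - D ω) 2 P := by congr 1; ext ω; simp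
    _ ≤ eLpNorm D 2 P + eLpNorm (fun ω => Y i ω - Y j ω - D ω) 2 P :=
        eLpNorm_add_le hD.aestronglyMeasurable
          (((hY i).sub (hY j)).sub hD).aestronglyMeasurable one_le_two
    _ ≤ ENNReal.ofReal (τ ^ H) + ENNReal.ofReal (M * T ^ (1 - H) * τ ^ H) := by
        rw [h_noise]
        gcongr
        exact h_drift.trans (ENNReal.ofReal_le_ofReal h_pow)
    _ = _ := by
        have hT0 : 0 ≤ T := hτ.trans hT
        rw [← ENNReal.ofReal_add (by positivity) (by positivity)]
        ring_nf

theorem IsFractionalBM.eLpNorm_comp_eulerPath_sub_le (hW : IsFractionalBM P H W) (hH0 : 0 < H)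
    (hH1 : H < 1) {x₀ h M T : ℝ} {β : ℝ → ℝ} (hβ : Measurable β) (hβM : ∀ x, |β x| ≤ M)
    (hh : 0 ≤ h) {i j : ℕ} (hji : j ≤ i) (hT : (i - j) * h ≤ T) {g : ℝ → ℝ} {a c : ℝ} (ha0 : 0 < a)
    (ha1 : a ≤ 1) (hc : 0 ≤ c) (hg : ∀ x y, |g x - g y| ≤ c * |x - y| ^ a) :
    eLpNorm (fun ω => g (eulerPath x₀ h β (gridIncrement W h ω) i) -
      g (eulerPath x₀ h β (gridIncrement W h ω) j)) 2 P ≤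
        ENNReal.ofReal
          (c * ((1 + M * T ^ (1 - H)) ^ a * h ^ (H * a)) * ((i : ℝ) - j) ^ (H * a)) := by
  have hξ := measurable_pi_iff.2 (hW.measurable_gridIncrement h)
  have hY (i : ℕ) := measurable_pi_iff.1 ((measurable_eulerPath (x₀ := x₀) (h := h) hβ).comp hξ) i
  have hM : 0 ≤ M := (abs_nonneg _).trans (hβM 0)
  have hlag : 0 ≤ (i : ℝ) - j := sub_nonneg.2 (mod_cast hji)
  have hT0 : 0 ≤ T := (mul_nonneg hlag hh).trans hT
  refine (eLpNorm_sub_comp_le_of_holder ha0 ha1 hg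
    ((hY i).sub (hY j)).aestronglyMeasurable 2).trans ?_
  calc _ ≤ ENNReal.ofReal c *
        ENNReal.ofReal ((1 + M * T ^ (1 - H)) * (((i : ℝ) - j) * h) ^ H) ^ a := by
        gcongr
        exact hW.eLpNorm_eulerPath_sub_le hH0 hH1 hβM hh hji hT hβ
    _ = _ := by
        rw [ENNReal.ofReal_rpow_of_nonneg (by positivity) ha0.le, ← ENNReal.ofReal_mul hc,
          mul_rpow (by positivity) (by positivity), ← rpow_mul (by positivity),
          mul_rpow hlag hh]
        ring_nf

theorem rpow_mul_energy_scaling {h T A B C D a H : ℝ} {n : ℕ} (hh : 0 < h) (hn : n * h = T) :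
    h ^ (-(2 * H)) * ((h * A) ^ 2 * (C * (n : ℝ) ^ (2 - 2 * H)) +
      (h * (B * h ^ (H * a))) ^ 2 * (D * (n : ℝ) ^ (2 - (2 * H - 2 * (H * a))))) =
    C * T ^ (2 - 2 * H) * A ^ 2 + D * T ^ (2 - (2 * H - 2 * (H * a))) * B ^ 2 := by
  have h_diag : h ^ (2 - 2 * H) = h ^ (-(2 * H)) * h ^ 2 := by
    rw [← rpow_natCast, ← rpow_add hh]
    push_cast
    ring_nf
  have h_off : h ^ (2 - (2 * H - 2 * (H * a))) = h ^ (-(2 * H)) * h ^ 2 * (h ^ (H * a)) ^ 2 := by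
    rw [← h_diag, ← rpow_mul_natCast hh.le, ← rpow_add hh]
    push_cast
    ring_nf
  rw [← hn, mul_rpow n.cast_nonneg hh.le, mul_rpow n.cast_nonneg hh.le, h_diag, h_off]
  ring

theorem IsFractionalBM.lintegral_fractionalEnergy_eulerPath_le (hW : IsFractionalBM P H W)
    (h_half : 1 / 2 < H) (h_one : H < 1) {a : ℝ} (ha0 : 0 < a) (ha1 : a ≤ 1)
    (haH : 2 * H - 2 * (H * a) < 1) {x₀ h T M m c : ℝ} {β g : ℝ → ℝ} {n : ℕ} (hh : 0 < h)
    (hn : n * h = T) (hβ : Measurable β) (hβM : ∀ x, |β x| ≤ M) (hg : Measurable g) (hc : 0 ≤ c)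
    (hgm : ∀ x, |g x| ≤ m) (hgc : ∀ x y, |g x - g y| ≤ c * |x - y| ^ a) :
    ∫⁻ ω, ENNReal.ofReal (fractionalEnergy H n
      (fun i => h * g (eulerPath x₀ h β (gridIncrement W h ω) i))) ∂P ≤
        ENNReal.ofReal ((h * m) ^ 2 * ((2 - 2 * H)⁻¹ * (n : ℝ) ^ (2 - 2 * H)) +
          (h * (c * (1 + M * T ^ (1 - H)) ^ a * h ^ (H * a))) ^ 2 *
            ((1 - (2 * H - 2 * (H * a)))⁻¹ * (n : ℝ) ^ (2 - (2 * H - 2 * (H * a))))) := by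
  have hm : 0 ≤ m := (abs_nonneg _).trans (hgm 0)
  have hM : 0 ≤ M := (abs_nonneg _).trans (hβM 0)
  have hT : 0 ≤ T := hn ▸ by positivity
  set Y : ℕ → Ω → ℝ := fun i ω => eulerPath x₀ h β (gridIncrement W h ω) i
  have hY (i : ℕ) : Measurable (Y i) := measurable_pi_iff.1 ((measurable_eulerPath hβ).comp
    (measurable_pi_iff.2 (hW.measurable_gridIncrement h))) i
  have h_const_mul (f : Ω → ℝ) : eLpNorm (fun ω => h * f ω) 2 P =
      ENNReal.ofReal h * eLpNorm f 2 P := by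
    rw [← enorm_of_nonneg hh.le]
    exact eLpNorm_const_smul h f 2 P
  refine lintegral_fractionalEnergy_le h_half h_one (γ := H * a) (by nlinarith) haH
    (fun i => ((hg.comp (hY i)).const_mul h)) (by positivity) (by positivity)
    (fun i _ => ?_) fun i hi j hj => ?_
  · rw [h_const_mul, ENNReal.ofReal_mul hh.le]
    gcongr
    simpa using eLpNorm_le_of_ae_bound (μ := P) (p := 2) (.of_forall fun ω => hgm (Y i ω))
  · have hτ : ((i : ℝ) - j) * h ≤ T := by
      rw [← hn]
      gcongr
      linarith [(Nat.cast_le (α := ℝ)).2 hi.le, j.cast_nonneg (α := ℝ)]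
    simp only [← mul_sub]
    rw [h_const_mul, mul_assoc h, ENNReal.ofReal_mul hh.le, mul_assoc c]
    gcongr
    exact hW.eLpNorm_comp_eulerPath_sub_le (by linarith) h_one hβ hβM hh.le hj.le hτ ha0 ha1 hc hgc

theorem IsFractionalBM.exists_lintegral_fractionalEnergy_eulerPath_le (hW : IsFractionalBM P H W)
    (h_half : 1 / 2 < H) (h_one : H < 1) {a : ℝ} (ha0 : 0 < a) (ha1 : a ≤ 1)
    (haH : 2 * H - 2 * (H * a) < 1) {T : ℝ} (hT : 0 ≤ T) (M : ℝ) :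
    ∃ C : ℝ, 0 ≤ C ∧ ∀ (n : ℕ) {h : ℝ}, 0 < h → n * h = T → ∀ (x₀ : ℝ) {β g : ℝ → ℝ},
      Measurable β → (∀ x, |β x| ≤ M) → Measurable g → ∀ {m c : ℝ}, 0 ≤ c → (∀ x, |g x| ≤ m) →
      (∀ x y, |g x - g y| ≤ c * |x - y| ^ a) →
      ∫⁻ ω, ENNReal.ofReal (h ^ (-(2 * H)) * fractionalEnergy H n
        (fun i => h * g (eulerPath x₀ h β (gridIncrement W h ω) i))) ∂P ≤
          ENNReal.ofReal (C * (m ^ 2 + c ^ 2)) := by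
  set L : ℝ := (1 + |M| * T ^ (1 - H)) ^ a
  set C₁ : ℝ := (2 - 2 * H)⁻¹ * T ^ (2 - 2 * H)
  set C₂ : ℝ := (1 - (2 * H - 2 * (H * a)))⁻¹ * T ^ (2 - (2 * H - 2 * (H * a)))
  have hC₁ : 0 ≤ C₁ := mul_nonneg (inv_nonneg.2 (by linarith)) (by positivity)
  have hC₂ : 0 ≤ C₂ := mul_nonneg (inv_nonneg.2 (by linarith)) (by positivity)
  refine ⟨C₁ + C₂ * L ^ 2, by positivity, fun n h hh hn x₀ β g hβ hβM hg m c hc hgm hgc => ?_⟩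
  have h_energy := hW.lintegral_fractionalEnergy_eulerPath_le h_half h_one ha0 ha1 haH (x₀ := x₀)
    hh hn hβ (fun x => (hβM x).trans (le_abs_self M)) hg hc hgm hgc
  simp only [ENNReal.ofReal_mul (rpow_nonneg hh.le (-(2 * H)))]
  rw [lintegral_const_mul' _ _ ENNReal.ofReal_ne_top]
  refine (mul_le_mul_right h_energy _).trans ?_
  rw [← ENNReal.ofReal_mul (by positivity), rpow_mul_energy_scaling hh hn]
  refine ENNReal.ofReal_le_ofReal ?_
  have h_cross : 0 ≤ C₁ * c ^ 2 + C₂ * L ^ 2 * m ^ 2 := by positivity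
  linarith

theorem IsFractionalBM.exists_lintegral_eulerPath_le (hW : IsFractionalBM P H W)
    (h_half : 1 / 2 < H) (h_one : H < 1) {a : ℝ} (ha0 : 0 < a) (ha1 : a ≤ 1)
    (haH : 2 * H - 2 * (H * a) < 1) {T : ℝ} (hT : 0 ≤ T) (M : ℝ) :
    ∃ C : ℝ, 0 ≤ C ∧ ∀ (n : ℕ) {h : ℝ}, 0 < h → n * h = T → ∀ (x₀ : ℝ) {β₁ β₂ : ℝ → ℝ},
      Measurable β₁ → Measurable β₂ → (∀ x, |β₁ x| ≤ M) → ∀ {m c : ℝ}, 0 ≤ c →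
      (∀ x, |β₁ x - β₂ x| ≤ m) →
      (∀ x y, |(β₁ x - β₂ x) - (β₁ y - β₂ y)| ≤ c * |x - y| ^ a) →
      ∀ {G : (ℕ → ℝ) → ℝ≥0∞}, Measurable G → DependsOn G (Set.Iic n) → (∀ y, G y ≤ 1) →
      ∀ {K : ℝ}, 0 < K →
      ∫⁻ ω, G (eulerPath x₀ h β₁ (gridIncrement W h ω)) ∂P ≤
        ENNReal.ofReal (exp K) * ∫⁻ ω, G (eulerPath x₀ h β₂ (gridIncrement W h ω)) ∂P +
        ENNReal.ofReal (C * (m ^ 2 + c ^ 2)) * ENNReal.ofReal (expRemainder K)⁻¹ := by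
  obtain ⟨C₁, hC₁, h_shift⟩ := hW.exists_lintegral_gridIncrement_add_le h_half h_one
  obtain ⟨C₂, hC₂, h_energy⟩ :=
    hW.exists_lintegral_fractionalEnergy_eulerPath_le h_half h_one ha0 ha1 haH hT M
  refine ⟨C₁ * C₂, by positivity, fun n h hh hn x₀ β₁ β₂ hβ₁ hβ₂ hM m c hc hm hhol G hG hGn hG1 K hK
    => ?_⟩
  have hY₁ := measurable_eulerPath (x₀ := x₀) (h := h) hβ₁
  have hY₂ := measurable_eulerPath (x₀ := x₀) (h := h) hβ₂
  have h_diff : Measurable fun x => β₁ x - β₂ x := hβ₁.sub hβ₂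
  have h := h_shift n hh (f := fun ξ => G (eulerPath x₀ h β₂ ξ))
    (u := fun ξ i => h * (β₁ (eulerPath x₀ h β₁ ξ i) - β₂ (eulerPath x₀ h β₁ ξ i)))
    (fun i ξ η hξη => by simp only [strictlyCausal_eulerPath x₀ h β₁ i ξ η hξη])
    (fun i => (h_diff.comp (measurable_pi_iff.1 hY₁ i)).const_mul h) (hG.comp hY₂)
    (fun ξ η hξη => hGn fun i hi => strictlyCausal_eulerPath x₀ h β₂ i ξ η
      fun j hj => hξη j (hj.trans_le hi)) (fun _ => hG1 _) hK
  simp only [eulerPath_add_drift] at h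
  refine h.trans (add_le_add le_rfl (mul_le_mul_left ?_ _))
  simp only [mul_assoc C₁, ENNReal.ofReal_mul hC₁]
  rw [lintegral_const_mul' _ _ ENNReal.ofReal_ne_top]
  gcongr
  exact h_energy n hh hn x₀ hβ₁ hM h_diff hc hm hhol

end DriftChange

/-! ### Lipschitz brackets of a Hölder drift -/

section SupConvolution

variable {f : ℝ → ℝ} {M c a : ℝ} {L : ℝ≥0}

/-- The sup-convolution of `f` with slope `L`, the least `L`-Lipschitz majorant of a bounded `f`.
The supremum runs over displacements so that translations of `f` act visibly. -/
noncomputable def supConvolution (f : ℝ → ℝ) (L : ℝ≥0) (x : ℝ) : ℝ := ⨆ z, (f (x + z) - L * |z|)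

theorem le_supConvolution (hf : ∀ x, |f x| ≤ M) (x z : ℝ) :
    f (x + z) - L * |z| ≤ supConvolution f L x := by
  refine le_ciSup (f := fun z => f (x + z) - L * |z|) ⟨M, ?_⟩ z
  rintro _ ⟨w, rfl⟩
  exact (sub_le_self _ (by positivity)).trans ((le_abs_self _).trans (hf _))

theorem self_le_supConvolution (hf : ∀ x, |f x| ≤ M) (x : ℝ) : f x ≤ supConvolution f L x := by
  simpa using le_supConvolution (L := L) hf x 0

theorem lipschitzWith_supConvolution (hf : ∀ x, |f x| ≤ M) :
    LipschitzWith L (supConvolution f L) := by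
  refine LipschitzWith.of_le_add_mul L fun x y => ciSup_le fun z => ?_
  have h_le := le_supConvolution (L := L) hf y (z + (x - y))
  rw [show y + (z + (x - y)) = x + z by ring] at h_le
  have h_tri := mul_le_mul_of_nonneg_left (abs_add_le z (x - y)) L.coe_nonneg
  rw [dist_eq]
  linarith

theorem abs_supConvolution_sub_le (hf : ∀ x, |f x| ≤ M)
    (hfc : ∀ x y, |f x - f y| ≤ c * |x - y| ^ a) (x y : ℝ) :
    |supConvolution f L x - supConvolution f L y| ≤ c * |x - y| ^ a := by
  have h_le (x y : ℝ) : supConvolution f L x ≤ supConvolution f L y + c * |x - y| ^ a := by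
    refine ciSup_le fun z => ?_
    have h_hol := (le_abs_self _).trans (hfc (x + z) (y + z))
    rw [add_sub_add_right_eq_sub] at h_hol
    linarith [le_supConvolution (L := L) hf y z]
  have h_swap := h_le y x
  rw [abs_sub_comm] at h_swap
  exact abs_sub_le_iff.2 ⟨by linarith [h_le x y], by linarith⟩

theorem supConvolution_le_add {r ε : ℝ} (hf : ∀ x, |f x| ≤ M) (hc : 0 ≤ c) (ha : 0 ≤ a)
    (hfc : ∀ x y, |f x - f y| ≤ c * |x - y| ^ a) (hr : c * r ^ a ≤ ε) (hε : 0 ≤ ε)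
    (hL : 2 * M ≤ L * r) (x : ℝ) : supConvolution f L x ≤ f x + ε := by
  refine ciSup_le fun z => ?_
  rcases le_total |z| r with hz | hz
  · have h_hol := (le_abs_self _).trans (hfc (x + z) x)
    rw [add_sub_cancel_left] at h_hol
    have h_pow : c * |z| ^ a ≤ c * r ^ a := by gcongr
    have h_slope : 0 ≤ L * |z| := by positivity
    linarith
  · have h_slope : (L : ℝ) * r ≤ L * |z| := by gcongr
    linarith [(abs_le.1 (hf (x + z))).2, (abs_le.1 (hf x)).1]

end SupConvolution

theorem exists_pos_mul_rpow_le {c a ε : ℝ} (ha : 0 < a) (hε : 0 < ε) :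
    ∃ r > 0, c * r ^ a ≤ ε := by
  have h_cont : Filter.Tendsto (fun r : ℝ => c * r ^ a) (nhdsWithin 0 (Set.Ioi 0)) (nhds 0) := by
    have h := ((continuous_id.rpow_const fun _ => Or.inr ha.le).const_mul c).tendsto (0 : ℝ)
    simp only [id, zero_rpow ha.ne', mul_zero] at h
    exact h.mono_left nhdsWithin_le_nhds
  obtain ⟨r, hr, hr0⟩ :=
    ((h_cont.eventually (ge_mem_nhds hε)).and self_mem_nhdsWithin).exists
  exact ⟨r, hr0, hr⟩

theorem exists_lipschitz_bracket {f : ℝ → ℝ} {M c a ε : ℝ} (hf : ∀ x, |f x| ≤ M) (hc : 0 ≤ c)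
    (ha : 0 < a) (hfc : ∀ x y, |f x - f y| ≤ c * |x - y| ^ a) (hε : 0 < ε) :
    ∃ (L : ℝ≥0) (β₁ β₂ : ℝ → ℝ), LipschitzWith L β₁ ∧ LipschitzWith L β₂ ∧
      (∀ x y, |β₁ x - β₁ y| ≤ c * |x - y| ^ a) ∧ (∀ x y, |β₂ x - β₂ y| ≤ c * |x - y| ^ a) ∧
      (∀ x, β₁ x ∈ Set.Icc (f x - 2 * ε) (f x - ε)) ∧
      ∀ x, β₂ x ∈ Set.Icc (f x + ε) (f x + 2 * ε) := by
  obtain ⟨r, hr, hcr⟩ := exists_pos_mul_rpow_le (c := c) ha hε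
  have hM : 0 ≤ M := (abs_nonneg _).trans (hf 0)
  set L : ℝ≥0 := (2 * M / r).toNNReal
  have hL : 2 * M ≤ L * r := by
    rw [coe_toNNReal _ (by positivity), div_mul_cancel₀ _ hr.ne']
  have h_neg (x : ℝ) : |-f x| ≤ M := (abs_neg _).trans_le (hf x)
  have h_neg_hol (x y : ℝ) : |-f x - -f y| ≤ c * |x - y| ^ a := by
    rw [neg_sub_neg, abs_sub_comm]
    exact hfc x y
  refine ⟨L, fun x => -supConvolution (fun y => -f y) L x - ε, fun x => supConvolution f L x + ε,
    ?_, ?_, fun x y => ?_, fun x y => ?_, fun x => ⟨?_, ?_⟩, fun x => ⟨?_, ?_⟩⟩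
  · simpa using (lipschitzWith_supConvolution h_neg).neg.sub (LipschitzWith.const ε)
  · simpa using (lipschitzWith_supConvolution hf).add (LipschitzWith.const ε)
  · rw [sub_sub_sub_cancel_right, neg_sub_neg, abs_sub_comm]
    exact abs_supConvolution_sub_le h_neg h_neg_hol x y
  · rw [add_sub_add_right_eq_sub]
    exact abs_supConvolution_sub_le hf hfc x y
  · linarith [supConvolution_le_add h_neg hc ha.le h_neg_hol hcr hε.le hL x]
  · linarith [self_le_supConvolution (L := L) h_neg x]
  · linarith [self_le_supConvolution (L := L) hf x]
  · linarith [supConvolution_le_add hf hc ha.le hfc hcr hε.le hL x]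

theorem le_mul_rpow_of_le_of_le_mul_rpow {u A B r a₁ a₂ : ℝ} (hu : 0 ≤ u) (hA : u ≤ A)
    (hB : u ≤ B * r ^ a₁) (hB0 : 0 ≤ B) (hr : 0 ≤ r) (ha₂ : 0 < a₂) (ha : a₂ < a₁) :
    u ≤ A ^ (1 - a₂ / a₁) * B ^ (a₂ / a₁) * r ^ a₂ := by
  have ha₁ : 0 < a₁ := ha₂.trans ha
  have hθ : 0 < a₂ / a₁ := by positivity
  have hθ1 : a₂ / a₁ < 1 := (div_lt_one ha₁).2 ha
  calc u = u ^ (1 - a₂ / a₁) * u ^ (a₂ / a₁) := by rw [← rpow_add' hu (by simp)]; simp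
    _ ≤ A ^ (1 - a₂ / a₁) * (B * r ^ a₁) ^ (a₂ / a₁) :=
      mul_le_mul (rpow_le_rpow hu hA (by linarith)) (rpow_le_rpow hu hB hθ.le)
        (by positivity) (rpow_nonneg (hu.trans hA) _)
    _ = A ^ (1 - a₂ / a₁) * B ^ (a₂ / a₁) * r ^ a₂ := by
      rw [mul_rpow hB0 (by positivity), ← rpow_mul hr, mul_div_cancel₀ _ ha₁.ne', mul_assoc]

section LocallyHolder

variable {b : ℝ → ℝ} {α : ℝ}

theorem continuous_of_locally_holder (hα : 0 < α)
    (hb : ∀ K : Set ℝ, IsCompact K → ∃ c : ℝ, 0 ≤ c ∧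
      ∀ x ∈ K, ∀ y ∈ K, |b x - b y| ≤ c * |x - y| ^ α) : Continuous b := by
  refine continuous_iff_continuousAt.2 fun x => ?_
  obtain ⟨c, -, hc⟩ := hb (Set.Icc (x - 1) (x + 1)) isCompact_Icc
  have h_lim : Filter.Tendsto (fun y => c * |y - x| ^ α) (nhds x) (nhds 0) := by
    have h : Continuous fun y => c * |y - x| ^ α := by fun_prop (disch := exact hα.le)
    simpa [zero_rpow hα.ne'] using h.tendsto x
  refine tendsto_iff_dist_tendsto_zero.2 (squeeze_zero' (.of_forall fun y => dist_nonneg) ?_ h_lim)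
  filter_upwards [Icc_mem_nhds (sub_one_lt x) (lt_add_one x)] with y hy
  exact hc y hy x ⟨by linarith, by linarith⟩

theorem exists_clamp_holder {a R : ℝ} (hR : 0 ≤ R) (ha : 0 < a) (haα : a < α)
    (hb : ∀ K : Set ℝ, IsCompact K → ∃ c : ℝ, 0 ≤ c ∧
      ∀ x ∈ K, ∀ y ∈ K, |b x - b y| ≤ c * |x - y| ^ α) :
    ∃ (f : ℝ → ℝ) (M c : ℝ), 0 ≤ c ∧ (∀ x, |f x| ≤ M) ∧
      (∀ x y, |f x - f y| ≤ c * |x - y| ^ a) ∧ ∀ x, |x| ≤ R → f x = b x := by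
  obtain ⟨c, hc, h_hol⟩ := hb (Set.Icc (-R) R) isCompact_Icc
  obtain ⟨M, hM⟩ := isCompact_Icc.exists_bound_of_continuousOn
    (continuous_of_locally_holder (ha.trans haα) hb).continuousOn (s := Set.Icc (-R) R)
  set p : ℝ → Set.Icc (-R) R := Set.projIcc (-R) R (by linarith)
  have hp_lip (x y : ℝ) : |(p x : ℝ) - p y| ≤ |x - y| := Set.abs_projIcc_sub_projIcc _
  have hp_dist (x y : ℝ) : |(p x : ℝ) - p y| ≤ 2 * R :=
    abs_sub_le_iff.2 ⟨by linarith [(p x).2.2, (p y).2.1], by linarith [(p x).2.1, (p y).2.2]⟩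
  refine ⟨fun x => b (p x), M, c * (2 * R) ^ (α - a), by positivity, fun x => hM _ (p x).2,
    fun x y => (h_hol _ (p x).2 _ (p y).2).trans ?_, fun x hx => ?_⟩
  · have h_split : |(p x : ℝ) - p y| ^ α = |(p x : ℝ) - p y| ^ (α - a) * |(p x : ℝ) - p y| ^ a := by
      rw [← rpow_add' (abs_nonneg _) (by linarith), sub_add_cancel]
    rw [mul_assoc, h_split]
    refine mul_le_mul_of_nonneg_left (mul_le_mul ?_ ?_ (by positivity) (by positivity)) hc
    · exact rpow_le_rpow (abs_nonneg _) (hp_dist x y) (sub_nonneg.2 haα.le)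
    · exact rpow_le_rpow (abs_nonneg _) (hp_lip x y) ha.le
  · simp only [p, Set.projIcc_of_mem _ (abs_le.1 hx)]

end LocallyHolder

/-! ### Sandwiching the solution between two Euler schemes -/

section Comparison

variable {x₀ h : ℝ} {β₁ β₂ : ℝ → ℝ} {ξ : ℕ → ℝ}

theorem eulerPath_mono (hh : 0 ≤ h) (hβ₂ : Monotone fun y => y + h * β₂ y)
    (hle : ∀ x, β₁ x ≤ β₂ x) (i : ℕ) : eulerPath x₀ h β₁ ξ i ≤ eulerPath x₀ h β₂ ξ i := by
  induction i with
  | zero => exact le_rfl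
  | succ i ih =>
    have h_drift := mul_le_mul_of_nonneg_left (hle (eulerPath x₀ h β₁ ξ i)) hh
    have h_mono := hβ₂ ih
    simp only [eulerPath] at h_mono ⊢
    linarith

theorem eulerPath_le_and_le_eulerPath {x : ℕ → ℝ} {n : ℕ} {p : ℕ → Prop} (hx₀ : x 0 = x₀)
    (hβ₁ : Monotone fun y => y + h * β₁ y) (hβ₂ : Monotone fun y => y + h * β₂ y)
    (hx : ∀ i < n, p i → x i + h * β₁ (x i) + ξ i ≤ x (i + 1) ∧
      x (i + 1) ≤ x i + h * β₂ (x i) + ξ i)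
    (hp : ∀ i < n, eulerPath x₀ h β₁ ξ i ≤ x i → x i ≤ eulerPath x₀ h β₂ ξ i → p i) :
    ∀ i ≤ n, eulerPath x₀ h β₁ ξ i ≤ x i ∧ x i ≤ eulerPath x₀ h β₂ ξ i := by
  intro i hi
  induction i with
  | zero => simp [eulerPath, hx₀]
  | succ i ih =>
    obtain ⟨h_low, h_up⟩ := ih (by lia)
    obtain ⟨h_step_low, h_step_up⟩ := hx i hi (hp i hi h_low h_up)
    have h_low' := hβ₁ h_low
    have h_up' := hβ₂ h_up
    simp only [eulerPath] at h_low' h_up' ⊢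
    constructor <;> linarith

theorem monotone_add_mul_of_lipschitzWith {β : ℝ → ℝ} {L : ℝ≥0} (hβ : LipschitzWith L β)
    (hh : 0 ≤ h) (hhL : h * L ≤ 1) : Monotone fun y => y + h * β y := by
  intro x y hxy
  have h_lip := (le_abs_self _).trans (hβ.dist_le_mul x y)
  rw [dist_comm, dist_eq, abs_of_nonneg (sub_nonneg.2 hxy)] at h_lip
  have h_step := mul_le_mul_of_nonneg_left h_lip hh
  have h_small := mul_le_mul_of_nonneg_right hhL (sub_nonneg.2 hxy)
  simp only
  linarith

theorem eulerPath_zero_drift_gridIncrement {Ω : Type*} (W : ℝ → Ω → ℝ) (ω : Ω) (i : ℕ) :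
    eulerPath x₀ h (fun _ => 0) (gridIncrement W h ω) i = x₀ + (W (i * h) ω - W 0 ω) := by
  induction i with
  | zero => simp [eulerPath]
  | succ i ih =>
    simp only [eulerPath, ih, gridIncrement]
    push_cast
    ring

theorem exists_abs_intervalIntegral_sub_mul_le {f : ℝ → ℝ} {S T ε : ℝ}
    (hf : ContinuousOn f (Set.Icc S T)) (hε : 0 < ε) :
    ∃ η > 0, ∀ s ∈ Set.Icc S T, ∀ t ∈ Set.Icc s T, t - s ≤ η →
      |(∫ r in s..t, f r) - (t - s) * f s| ≤ ε * (t - s) := by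
  obtain ⟨η, hη, hfη⟩ := Metric.uniformContinuousOn_iff_le.1
    (isCompact_Icc.uniformContinuousOn_of_continuous hf) ε hε
  refine ⟨η, hη, fun s hs t ht hst => ?_⟩
  have h_sub : Set.uIcc s t ⊆ Set.Icc S T := Set.uIcc_subset_Icc hs ⟨hs.1.trans ht.1, ht.2⟩
  have h_eq : (∫ r in s..t, f r) - (t - s) * f s = ∫ r in s..t, (f r - f s) := by
    rw [intervalIntegral.integral_sub (hf.mono h_sub).intervalIntegrable
      intervalIntegrable_const, intervalIntegral.integral_const, smul_eq_mul]
  rw [h_eq, ← norm_eq_abs, ← abs_of_nonneg (sub_nonneg.2 ht.1)]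
  refine intervalIntegral.norm_integral_le_of_norm_le_const fun r hr => ?_
  rw [Set.uIoc_of_le ht.1] at hr
  refine hfη r ⟨hs.1.trans hr.1.le, hr.2.trans ht.2⟩ s hs ?_
  rw [dist_eq, abs_of_nonneg (sub_nonneg.2 hr.1.le)]
  linarith [hr.2]

end Comparison

theorem eventually_mesh_mul_le_one (T : ℝ) (L : ℝ≥0) :
    ∀ᶠ n : ℕ in Filter.atTop, T / n * L ≤ 1 :=
  ((tendsto_const_div_atTop_nhds_zero_nat T).mul_const (L : ℝ)).eventually_le_const (by simp)

theorem exists_abs_sub_euler_step_le {x w b : ℝ → ℝ} {x₀ T ε : ℝ} (hb : Continuous b)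
    (hx : ContinuousOn x (Set.Icc 0 T))
    (hx_eq : ∀ t ∈ Set.Icc (0 : ℝ) T, x t = x₀ + w t + ∫ s in (0 : ℝ)..t, b (x s)) (hε : 0 < ε) :
    ∃ η > 0, ∀ s ∈ Set.Icc 0 T, ∀ t ∈ Set.Icc s T, t - s ≤ η →
      |x t - (x s + (t - s) * b (x s) + (w t - w s))| ≤ ε * (t - s) := by
  have hbx : ContinuousOn (fun s => b (x s)) (Set.Icc 0 T) := hb.comp_continuousOn hx
  obtain ⟨η, hη, h_cons⟩ := exists_abs_intervalIntegral_sub_mul_le hbx hε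
  refine ⟨η, hη, fun s hs t ht hst => ?_⟩
  have ht' : t ∈ Set.Icc 0 T := ⟨hs.1.trans ht.1, ht.2⟩
  have h_int (r : ℝ) (hr : r ∈ Set.Icc 0 T) :
      IntervalIntegrable (fun s => b (x s)) volume 0 r :=
    (hbx.mono (Set.uIcc_subset_Icc ⟨le_rfl, hr.1.trans hr.2⟩ hr)).intervalIntegrable
  convert h_cons s hs t ht hst using 2
  rw [← intervalIntegral.integral_interval_sub_left (h_int t ht') (h_int s hs), hx_eq t ht']
  linarith [hx_eq s hs]

theorem eventually_eulerPath_le_and_le_eulerPath {x w b β₁ β₂ : ℝ → ℝ} {x₀ T ε R : ℝ} {L : ℝ≥0}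
    (hT : 0 < T) (hε : 0 < ε) (hb : Continuous b) (hx : ContinuousOn x (Set.Icc 0 T))
    (hw₀ : w 0 = 0) (hx_eq : ∀ t ∈ Set.Icc (0 : ℝ) T, x t = x₀ + w t + ∫ s in (0 : ℝ)..t, b (x s))
    (hβ₁ : LipschitzWith L β₁) (hβ₂ : LipschitzWith L β₂)
    (hb₁ : ∀ y, |y| ≤ R → β₁ y ≤ b y - ε) (hb₂ : ∀ y, |y| ≤ R → b y + ε ≤ β₂ y) :
    ∀ᶠ n : ℕ in Filter.atTop, ∀ ξ : ℕ → ℝ,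
      (∀ i, ξ i = w ((i + 1) * (T / n)) - w (i * (T / n))) →
      (∀ i ≤ n, eulerPath x₀ (T / n) β₁ ξ i ≤ x (i * (T / n)) →
        x (i * (T / n)) ≤ eulerPath x₀ (T / n) β₂ ξ i → |x (i * (T / n))| ≤ R) →
      ∀ i ≤ n, eulerPath x₀ (T / n) β₁ ξ i ≤ x (i * (T / n)) ∧
        x (i * (T / n)) ≤ eulerPath x₀ (T / n) β₂ ξ i := by
  obtain ⟨η, hη, h_step⟩ := exists_abs_sub_euler_step_le hb hx hx_eq hε
  filter_upwards [(tendsto_const_div_atTop_nhds_zero_nat T).eventually_le_const hη,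
    eventually_mesh_mul_le_one T L, Filter.eventually_gt_atTop 0] with n hnη hnL hn ξ hξ h_bdd
  have hh : 0 < T / n := by positivity
  refine eulerPath_le_and_le_eulerPath (x := fun i => x (i * (T / n))) (p := fun i =>
    |x (i * (T / n))| ≤ R) ?_ (monotone_add_mul_of_lipschitzWith hβ₁ hh.le hnL)
    (monotone_add_mul_of_lipschitzWith hβ₂ hh.le hnL) (fun i hi hiR => ?_)
    fun i hi => h_bdd i hi.le
  · simpa [hw₀] using hx_eq 0 ⟨le_rfl, hT.le⟩
  have hs_add : (i + 1) * (T / n) - i * (T / n) = T / n := by ring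
  have h_end : (i + 1) * (T / n) ≤ T := by
    rw [← le_div_iff₀ hh, div_div_cancel₀ hT.ne']
    exact_mod_cast hi
  have h_close := h_step (i * (T / n)) ⟨by positivity, by linarith⟩ ((i + 1) * (T / n))
    ⟨by linarith, h_end⟩ (by linarith)
  rw [hs_add, abs_le] at h_close
  have h_low := mul_le_mul_of_nonneg_left (hb₁ _ hiR) hh.le
  have h_up := mul_le_mul_of_nonneg_left (hb₂ _ hiR) hh.le
  rw [hξ]
  push_cast
  constructor <;> linarith [h_close.1, h_close.2]

/-! ### Comparison of Euler laws with Hölder close drifts -/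

section HolderNorm

variable {a m : ℝ} {g : ℝ → ℝ}

/-- `g` is bounded by `m` and `a`-Hölder continuous with constant `m`, i.e. its `C^a` norm, taken
as the maximum of sup norm and Hölder seminorm, is at most `m`. -/
def HolderNormLE (a m : ℝ) (g : ℝ → ℝ) : Prop :=
  (∀ x, |g x| ≤ m) ∧ ∀ x y, |g x - g y| ≤ m * |x - y| ^ a

theorem HolderNormLE.mono {m' : ℝ} (hg : HolderNormLE a m g) (hm : m ≤ m') :
    HolderNormLE a m' g :=
  ⟨fun x => (hg.1 x).trans hm, fun x y => (hg.2 x y).trans (by gcongr)⟩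

theorem HolderNormLE.neg (hg : HolderNormLE a m g) : HolderNormLE a m fun x => -g x := by
  refine ⟨fun x => (abs_neg _).trans_le (hg.1 x), fun x y => ?_⟩
  rw [neg_sub_neg, abs_sub_comm]
  exact hg.2 x y

theorem HolderNormLE.of_holder {c a₁ a₂ : ℝ} (hm : ∀ x, |g x| ≤ m) (hc : 0 ≤ c)
    (hgc : ∀ x y, |g x - g y| ≤ c * |x - y| ^ a₁) (ha₂ : 0 < a₂) (ha : a₂ < a₁) :
    HolderNormLE a₂ (max m ((2 * m) ^ (1 - a₂ / a₁) * c ^ (a₂ / a₁))) g := by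
  refine ⟨fun x => (hm x).trans (le_max_left _ _), fun x y => ?_⟩
  have h_osc : |g x - g y| ≤ 2 * m := by
    linarith [abs_sub (g x) (g y), hm x, hm y]
  exact (le_mul_rpow_of_le_of_le_mul_rpow (abs_nonneg _) h_osc (hgc x y) hc (abs_nonneg _) ha₂
    ha).trans (by gcongr; exact le_max_right _ _)

end HolderNorm

theorem exists_holderNorm_lipschitz_bracket {f : ℝ → ℝ} {M c a₁ a₂ : ℝ} (hf : ∀ x, |f x| ≤ M)
    (hc : 0 ≤ c) (ha₂ : 0 < a₂) (ha : a₂ < a₁) (hfc : ∀ x y, |f x - f y| ≤ c * |x - y| ^ a₁) :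
    ∃ D, 0 ≤ D ∧ ∀ η > 0, ∃ ε > 0, ∃ (L : ℝ≥0) (β₁ β₂ : ℝ → ℝ),
      LipschitzWith L β₁ ∧ LipschitzWith L β₂ ∧ HolderNormLE a₂ D β₂ ∧
      HolderNormLE a₂ η (fun x => β₂ x - β₁ x) ∧
      (∀ x, β₁ x ≤ f x - ε) ∧ ∀ x, f x + ε ≤ β₂ x := by
  have hM : 0 ≤ M := (abs_nonneg _).trans (hf 0)
  refine ⟨_, (by positivity : 0 ≤ M + 2).trans (le_max_left _ ((2 * (M + 2)) ^ (1 - a₂ / a₁) *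
    c ^ (a₂ / a₁))), fun η hη => ?_⟩
  have hθ : 0 < 1 - a₂ / a₁ := sub_pos.2 ((div_lt_one (ha₂.trans ha)).2 ha)
  obtain ⟨r, hr, hrη⟩ := exists_pos_mul_rpow_le (c := (2 * c) ^ (a₂ / a₁)) hθ hη
  set ε := min 1 (min (r / 8) (η / 4))
  have hε : 0 < ε := by positivity
  have hε1 : ε ≤ 1 := min_le_left _ _
  have hεr : ε ≤ r / 8 := (min_le_right _ _).trans (min_le_left _ _)
  have hεη : ε ≤ η / 4 := (min_le_right _ _).trans (min_le_right _ _)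
  obtain ⟨L, β₁, β₂, hL₁, hL₂, hc₁, hc₂, h_low, h_up⟩ :=
    exists_lipschitz_bracket hf hc (ha₂.trans ha) hfc hε
  refine ⟨ε, hε, L, β₁, β₂, hL₁, hL₂, .of_holder (fun x => abs_le.2 ?_) hc hc₂ ha₂ ha,
    (HolderNormLE.of_holder (m := 4 * ε) (c := 2 * c) (fun x => abs_le.2 ?_) (by positivity)
      (fun x y => ?_) ha₂ ha).mono (max_le ?_ ?_), fun x => (h_low x).2, fun x => (h_up x).1⟩
  · constructor <;> linarith [(h_up x).1, (h_up x).2, abs_le.1 (hf x)]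
  · constructor <;> linarith [(h_up x).1, (h_up x).2, (h_low x).1, (h_low x).2]
  · rw [sub_sub_sub_comm]
    linarith [abs_sub (β₂ x - β₂ y) (β₁ x - β₁ y), hc₁ x y, hc₂ x y]
  · linarith
  · rw [mul_comm]
    refine le_trans ?_ hrη
    gcongr
    linarith [hθ]

section EulerGrid

variable {Ω : Type*} [MeasurableSpace Ω] {P : Measure Ω} {H : ℝ} {W : ℝ → Ω → ℝ}

/-- The Euler scheme for `dX = β(X) dt + dW` on `[0, T]` with `n` steps, as a random vector. -/
noncomputable def eulerGrid (W : ℝ → Ω → ℝ) (x₀ T : ℝ) (β : ℝ → ℝ) (n : ℕ) (ω : Ω)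
    (i : Fin (n + 1)) : ℝ :=
  eulerPath x₀ (T / n) β (gridIncrement W (T / n) ω) i

theorem IsFractionalBM.measurable_eulerGrid (hW : IsFractionalBM P H W) {β : ℝ → ℝ}
    (hβ : Measurable β) (x₀ T : ℝ) (n : ℕ) : Measurable (eulerGrid W x₀ T β n) :=
  measurable_pi_iff.2 fun i => (measurable_pi_iff.1 ((measurable_eulerPath hβ).comp
    (measurable_pi_iff.2 fun j => hW.measurable_gridIncrement (T / n) j)) i)

variable [IsProbabilityMeasure P]

theorem IsFractionalBM.exists_measure_eulerGrid_le (hW : IsFractionalBM P H W)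
    (h_half : 1 / 2 < H) (h_one : H < 1) {a : ℝ} (ha0 : 0 < a) (ha1 : a ≤ 1)
    (haH : 2 * H - 2 * (H * a) < 1) {T : ℝ} (hT : 0 < T) (M : ℝ) :
    ∃ C : ℝ, 0 ≤ C ∧ ∀ {n : ℕ}, n ≠ 0 → ∀ (x₀ : ℝ) {β₁ β₂ : ℝ → ℝ}, Measurable β₁ →
      Measurable β₂ → (∀ x, |β₁ x| ≤ M) → ∀ {m : ℝ}, HolderNormLE a m (fun x => β₁ x - β₂ x) →
      ∀ {A : Set (Fin (n + 1) → ℝ)}, MeasurableSet A → ∀ {K : ℝ}, 0 < K →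
      P {ω | eulerGrid W x₀ T β₁ n ω ∈ A} ≤
        ENNReal.ofReal (exp K) * P {ω | eulerGrid W x₀ T β₂ n ω ∈ A} +
        ENNReal.ofReal (C * m ^ 2) * ENNReal.ofReal (expRemainder K)⁻¹ := by
  obtain ⟨C, hC, h_main⟩ := hW.exists_lintegral_eulerPath_le h_half h_one ha0 ha1 haH hT.le M
  refine ⟨2 * C, by positivity, fun {n} hn x₀ β₁ β₂ hβ₁ hβ₂ hM m hm A hA K hK => ?_⟩
  have hm0 : 0 ≤ m := (abs_nonneg _).trans (hm.1 0)
  have hn' : (0 : ℝ) < n := by positivity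
  set G : (ℕ → ℝ) → ℝ≥0∞ := fun y => A.indicator 1 fun i : Fin (n + 1) => y i
  have hG : Measurable G := (measurable_one.indicator hA).comp
    (measurable_pi_iff.2 fun i => measurable_pi_apply _)
  have hG_dep : DependsOn G (Set.Iic n) := fun y z hyz =>
    congrArg (A.indicator 1) (funext fun i => hyz i (Nat.lt_succ_iff.1 i.2))
  have h_event {β : ℝ → ℝ} (hβ : Measurable β) : P {ω | eulerGrid W x₀ T β n ω ∈ A} =
      ∫⁻ ω, G (eulerPath x₀ (T / n) β (gridIncrement W (T / n) ω)) ∂P :=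
    (lintegral_indicator_one (hW.measurable_eulerGrid hβ x₀ T n hA)).symm
  rw [h_event hβ₁, h_event hβ₂, show 2 * C * m ^ 2 = C * (m ^ 2 + m ^ 2) by ring]
  exact h_main n (by positivity) (mul_div_cancel₀ T hn'.ne') x₀ hβ₁ hβ₂ hM hm0 hm.1 hm.2
    hG hG_dep (fun y => Set.indicator_le (fun _ _ => le_rfl) _) hK

theorem tendsto_expRemainder_atTop : Filter.Tendsto expRemainder Filter.atTop Filter.atTop :=
  Filter.tendsto_atTop_mono (f := fun x => x - 1)
    (fun x => by unfold expRemainder; linarith [exp_pos (-x)])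
    (Filter.tendsto_atTop_add_const_right _ _ Filter.tendsto_id)

theorem IsFractionalBM.exists_measure_eulerGrid_le_mul_add (hW : IsFractionalBM P H W)
    (h_half : 1 / 2 < H) (h_one : H < 1) {a : ℝ} (ha0 : 0 < a) (ha1 : a ≤ 1)
    (haH : 2 * H - 2 * (H * a) < 1) {T : ℝ} (hT : 0 < T) (M m : ℝ) {τ : ℝ≥0∞} (hτ : τ ≠ 0) :
    ∃ C : ℝ≥0∞, C ≠ ∞ ∧ ∀ {n : ℕ}, n ≠ 0 → ∀ (x₀ : ℝ) {β₁ β₂ : ℝ → ℝ}, Measurable β₁ →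
      Measurable β₂ → (∀ x, |β₁ x| ≤ M) → HolderNormLE a m (fun x => β₁ x - β₂ x) →
      ∀ {A : Set (Fin (n + 1) → ℝ)}, MeasurableSet A →
      P {ω | eulerGrid W x₀ T β₁ n ω ∈ A} ≤ C * P {ω | eulerGrid W x₀ T β₂ n ω ∈ A} + τ := by
  obtain ⟨C, -, h_main⟩ := hW.exists_measure_eulerGrid_le h_half h_one ha0 ha1 haH hT M
  have h_lim : Filter.Tendsto
      (fun K => ENNReal.ofReal (C * m ^ 2) * ENNReal.ofReal (expRemainder K)⁻¹)
      Filter.atTop (nhds 0) := by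
    simpa using ENNReal.Tendsto.const_mul
      (ENNReal.tendsto_ofReal tendsto_expRemainder_atTop.inv_tendsto_atTop)
      (Or.inr (ENNReal.ofReal_ne_top (r := C * m ^ 2)))
  obtain ⟨K, hKτ, hK⟩ := ((h_lim.eventually_le_const hτ.bot_lt).and
    (Filter.eventually_gt_atTop 0)).exists
  exact ⟨ENNReal.ofReal (exp K), ENNReal.ofReal_ne_top, fun hn x₀ _ _ hβ₁ hβ₂ hM hm _ hA =>
    (h_main hn x₀ hβ₁ hβ₂ hM hm hA hK).trans (by gcongr)⟩

theorem IsFractionalBM.exists_measure_eulerGrid_le_add (hW : IsFractionalBM P H W)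
    (h_half : 1 / 2 < H) (h_one : H < 1) {a : ℝ} (ha0 : 0 < a) (ha1 : a ≤ 1)
    (haH : 2 * H - 2 * (H * a) < 1) {T : ℝ} (hT : 0 < T) (M : ℝ) {δ : ℝ≥0∞} (hδ : δ ≠ 0) :
    ∃ m > 0, ∀ {n : ℕ}, n ≠ 0 → ∀ (x₀ : ℝ) {β₁ β₂ : ℝ → ℝ}, Measurable β₁ →
      Measurable β₂ → (∀ x, |β₁ x| ≤ M) → HolderNormLE a m (fun x => β₁ x - β₂ x) →
      ∀ {A : Set (Fin (n + 1) → ℝ)}, MeasurableSet A →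
      P {ω | eulerGrid W x₀ T β₁ n ω ∈ A} ≤ P {ω | eulerGrid W x₀ T β₂ n ω ∈ A} + δ := by
  obtain ⟨C, -, h_main⟩ := hW.exists_measure_eulerGrid_le h_half h_one ha0 ha1 haH hT M
  have hδ2 : 0 < δ / 2 := ENNReal.half_pos hδ
  have h_exp : Filter.Tendsto (fun K => ENNReal.ofReal (exp K - 1))
      (nhdsWithin 0 (Set.Ioi 0)) (nhds 0) := by
    have h : Continuous fun K : ℝ => ENNReal.ofReal (exp K - 1) :=
      ENNReal.continuous_ofReal.comp (by fun_prop)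
    simpa using (h.tendsto 0).mono_left nhdsWithin_le_nhds
  obtain ⟨K, hKδ, hK⟩ := ((h_exp.eventually_le_const hδ2).and self_mem_nhdsWithin).exists
  set κ := ENNReal.ofReal (expRemainder K)⁻¹
  have h_err : Filter.Tendsto (fun m => ENNReal.ofReal (C * m ^ 2) * κ)
      (nhdsWithin 0 (Set.Ioi 0)) (nhds 0) := by
    have h : Continuous fun m : ℝ => ENNReal.ofReal (C * m ^ 2) :=
      ENNReal.continuous_ofReal.comp (by fun_prop)
    simpa using ENNReal.Tendsto.mul_const ((h.tendsto 0).mono_left nhdsWithin_le_nhds)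
      (Or.inr (ENNReal.ofReal_ne_top : κ ≠ ∞))
  obtain ⟨m, hmδ, hm⟩ := ((h_err.eventually_le_const hδ2).and self_mem_nhdsWithin).exists
  refine ⟨m, hm, fun {n} hn x₀ β₁ β₂ hβ₁ hβ₂ hM hβ A hA => ?_⟩
  have h_exp_eq : ENNReal.ofReal (exp K) = 1 + ENNReal.ofReal (exp K - 1) := by
    rw [← ENNReal.ofReal_one, ← ENNReal.ofReal_add zero_le_one
      (sub_nonneg.2 (one_le_exp (Set.mem_Ioi.1 hK).le)), add_sub_cancel]
  calc P {ω | eulerGrid W x₀ T β₁ n ω ∈ A}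
      ≤ (1 + ENNReal.ofReal (exp K - 1)) * P {ω | eulerGrid W x₀ T β₂ n ω ∈ A} +
        ENNReal.ofReal (C * m ^ 2) * κ := h_exp_eq ▸ h_main hn x₀ hβ₁ hβ₂ hM hβ hA hK
    _ ≤ P {ω | eulerGrid W x₀ T β₂ n ω ∈ A} + δ / 2 * 1 + δ / 2 := by
      rw [one_add_mul]
      gcongr
      exact prob_le_one
    _ = P {ω | eulerGrid W x₀ T β₂ n ω ∈ A} + δ := by rw [mul_one, add_assoc, ENNReal.add_halves]

end EulerGrid

/-! ### Transfer of threshold events -/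

section ThresholdEvents

variable {ι κ : Type*}

/-- The event `A` depends on a path `x` only through the finitely many comparisons `x i ≤ r`,
`(i, r) ∈ E`. -/
def DecidedByThresholds (E : Finset (ι × ℝ)) (A : Set (ι → ℝ)) : Prop :=
  ∀ x y : ι → ℝ, (∀ p ∈ E, x p.1 ≤ p.2 ↔ y p.1 ≤ p.2) → (x ∈ A ↔ y ∈ A)

theorem DecidedByThresholds.exists_card_le_preimage_comp {E : Finset (ι × ℝ)} {A : Set (ι → ℝ)}
    (hA : DecidedByThresholds E A) (f : ι → κ) :
    ∃ F : Finset (κ × ℝ), F.card ≤ E.card ∧ DecidedByThresholds F {x : κ → ℝ | x ∘ f ∈ A} := by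
  classical
  exact ⟨E.image (Prod.map f id), Finset.card_image_le, fun _ _ hxy =>
    hA _ _ fun p hp => hxy (Prod.map f id p) (Finset.mem_image_of_mem _ hp)⟩

/-- The measurable events that are decided by finitely many thresholds. -/
def thresholdEvents (ι : Type*) : Set (Set (ι → ℝ)) :=
  {A | MeasurableSet A ∧ ∃ E, DecidedByThresholds E A}

theorem isSetAlgebra_thresholdEvents (ι : Type*) : IsSetAlgebra (thresholdEvents ι) where
  empty_mem := ⟨.empty, ∅, fun _ _ _ => Iff.rfl⟩
  compl_mem := fun _ ⟨hA, E, hE⟩ => ⟨hA.compl, E, fun x y hxy => not_congr (hE x y hxy)⟩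
  union_mem := by
    classical
    rintro A B ⟨hA, E, hE⟩ ⟨hB, F, hF⟩
    exact ⟨hA.union hB, E ∪ F, fun x y hxy => or_congr
      (hE x y fun p hp => hxy p (Finset.mem_union_left _ hp))
      (hF x y fun p hp => hxy p (Finset.mem_union_right _ hp))⟩

theorem generateFrom_thresholdEvents (ι : Type*) :
    MeasurableSpace.generateFrom (thresholdEvents ι) = MeasurableSpace.pi := by
  refine le_antisymm (MeasurableSpace.generateFrom_le fun A hA => hA.1) (iSup_le fun i => ?_)
  refine Measurable.comap_le (measurable_of_Iic fun r => ?_)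
  refine MeasurableSpace.measurableSet_generateFrom ⟨measurableSet_Iic.preimage
    (measurable_pi_apply i), {(i, r)}, fun x y hxy => ?_⟩
  exact hxy (i, r) (Finset.mem_singleton_self _)

theorem absolutelyContinuous_of_isSetAlgebra {α : Type*} {m : MeasurableSpace α} {μ ν : Measure α}
    [IsFiniteMeasure μ] [IsFiniteMeasure ν] {𝒜 : Set (Set α)} (h𝒜 : IsSetAlgebra 𝒜)
    (h_gen : m = MeasurableSpace.generateFrom 𝒜)
    (h : ∀ τ : ℝ≥0∞, τ ≠ 0 → ∃ C : ℝ≥0∞, C ≠ ∞ ∧ ∀ A ∈ 𝒜, μ A ≤ C * ν A + τ) : μ ≪ ν := by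
  refine Measure.AbsolutelyContinuous.mk fun A hA hνA => ?_
  refine le_antisymm (ENNReal.le_of_forall_pos_le_add fun τ hτ _ => ?_) bot_le
  have hτ2 : (τ / 2 : ℝ≥0∞) ≠ 0 := by simp [hτ.ne']
  obtain ⟨C, hC, hμν⟩ := h (τ / 2) hτ2
  obtain ⟨ε, hε, hεC⟩ := ENNReal.exists_nnreal_pos_mul_lt (a := C + 1) (by finiteness) hτ2
  obtain ⟨B, hB, hAB⟩ := (Measure.MeasureDense.of_generateFrom_isSetAlgebra_finite (μ + ν) h𝒜
    h_gen).approx A hA (measure_ne_top _ _) ε hε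
  have h_symm : μ (symmDiff A B) + ν (symmDiff A B) ≤ ε := by simpa using hAB.le
  have hμA : μ A ≤ μ B + ε := by
    refine (measure_mono (le_symmDiff_sup_right A B)).trans ((measure_union_le _ _).trans ?_)
    rw [add_comm]
    gcongr
    exact le_self_add.trans h_symm
  have hνB : ν B ≤ ε := by
    refine (measure_mono (le_symmDiff_sup_right B A)).trans ((measure_union_le _ _).trans ?_)
    rw [hνA, add_zero, symmDiff_comm]
    exact le_add_self.trans h_symm
  calc μ A ≤ C * ν B + τ / 2 + ε := hμA.trans (by gcongr; exact hμν B hB)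
    _ ≤ C * ε + τ / 2 + ε := by gcongr
    _ = ε * (C + 1) + τ / 2 := by ring
    _ ≤ τ / 2 + τ / 2 := by gcongr
    _ = 0 + τ := by rw [ENNReal.add_halves, zero_add]

theorem absolutelyContinuous_map_of_thresholdEvents {Ω ι : Type*} [MeasurableSpace Ω]
    {P : Measure Ω} [IsFiniteMeasure P] {x y : Ω → ι → ℝ} (hx : Measurable x) (hy : Measurable y)
    (h : ∀ τ : ℝ≥0∞, τ ≠ 0 → ∃ C : ℝ≥0∞, C ≠ ∞ ∧ ∀ A ∈ thresholdEvents ι,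
      P {ω | x ω ∈ A} ≤ C * P {ω | y ω ∈ A} + τ) : P.map x ≪ P.map y := by
  refine absolutelyContinuous_of_isSetAlgebra (isSetAlgebra_thresholdEvents ι)
    (generateFrom_thresholdEvents ι).symm fun τ hτ => ?_
  obtain ⟨C, hC, hxy⟩ := h τ hτ
  refine ⟨C, hC, fun A hA => ?_⟩
  rw [Measure.map_apply hx hA.1, Measure.map_apply hy hA.1]
  exact hxy A hA

end ThresholdEvents

section Bracket

variable {Ω ι : Type*} [MeasurableSpace Ω] {P : Measure Ω} {l x u y : Ω → ι → ℝ} {R : ℝ}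
  {C δ τ : ℝ≥0∞} {E : Finset (ι × ℝ)} {A : Set (ι → ℝ)}

/-- The random path `x` lies between `l` and `u`, whose laws differ by at most `δ`, except on an
event of probability `δ` and as long as no bracketed value of `x` leaves `[-R, R]`. -/
structure IsBracket (P : Measure Ω) (l x u : Ω → ι → ℝ) (R : ℝ) (δ : ℝ≥0∞) : Prop where
  measurable_lower : Measurable l
  measurable_upper : Measurable u
  lower_le_upper : ∀ ω, l ω ≤ u ω
  measure_upper_le : ∀ A, MeasurableSet A → P {ω | u ω ∈ A} ≤ P {ω | l ω ∈ A} + δ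
  measure_escape_le : P {ω | (∀ i, l ω i ≤ x ω i → x ω i ≤ u ω i → |x ω i| ≤ R) ∧
    ¬(l ω ≤ x ω ∧ x ω ≤ u ω)} ≤ δ

theorem IsBracket.measure_upperSet_le [IsFiniteMeasure P] (h : IsBracket P l x u R δ)
    {U : Set (ι → ℝ)} (hU : IsUpperSet U) (hUm : MeasurableSet U) :
    P {ω | u ω ∈ U ∧ l ω ∉ U} ≤ δ :=
  (measure_sdiff_le_iff_le_add (h.measurable_lower hUm).nullMeasurableSet
    (fun ω hω => hU (h.lower_le_upper ω) hω) (measure_ne_top _ _)).2 (h.measure_upper_le U hUm)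

theorem IsBracket.measure_undecided_le [IsFiniteMeasure P] (h : IsBracket P l x u R δ)
    (hA : DecidedByThresholds E A) :
    P {ω | l ω ≤ x ω ∧ x ω ≤ u ω ∧ ¬(x ω ∈ A ↔ u ω ∈ A)} ≤ E.card * δ := by
  calc P {ω | l ω ≤ x ω ∧ x ω ≤ u ω ∧ ¬(x ω ∈ A ↔ u ω ∈ A)}
      ≤ P (⋃ p ∈ E, {ω | u ω ∈ {y | p.2 < y p.1} ∧ l ω ∉ {y | p.2 < y p.1}}) := by
        refine measure_mono fun ω ⟨hlx, hxu, hω⟩ => ?_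
        contrapose! hω
        simp only [Set.mem_iUnion, not_exists] at hω
        refine hA _ _ fun p hp => ⟨fun hx => ?_, (hxu p.1).trans⟩
        by_contra! h_lt
        exact hω p hp ⟨h_lt, not_lt.2 ((hlx p.1).trans hx)⟩
    _ ≤ ∑ p ∈ E, P {ω | u ω ∈ {y | p.2 < y p.1} ∧ l ω ∉ {y | p.2 < y p.1}} :=
      measure_biUnion_finset_le _ _
    _ ≤ E.card * δ := by
      refine (Finset.sum_le_card_nsmul _ _ δ fun p _ => h.measure_upperSet_le
        (fun y z hyz hy => hy.trans_le (hyz p.1)) ?_).trans_eq (nsmul_eq_mul _ _)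
      exact measurableSet_lt measurable_const (measurable_pi_apply p.1)

theorem IsBracket.measure_mem_le [IsFiniteMeasure P] (h : IsBracket P l x u R δ)
    (hA : DecidedByThresholds E A) :
    P {ω | x ω ∈ A} ≤ P {ω | u ω ∈ A} + P {ω | ∃ i, R < |x ω i|} + (E.card + 1) * δ := by
  rw [add_one_mul]
  refine le_trans (measure_mono fun ω hω => ?_) <| (measure_union_le _ _).trans <|
    add_le_add (measure_union_le _ _) <| (measure_union_le _ _).trans <|
      add_le_add (h.measure_undecided_le hA) h.measure_escape_le
  by_contra h_not
  simp only [Set.mem_union, not_or] at h_not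
  obtain ⟨⟨hu, hR⟩, h_dec, h_esc⟩ := h_not
  have h_between : l ω ≤ x ω ∧ x ω ≤ u ω := by
    by_contra h_out
    exact h_esc ⟨fun i _ _ => not_lt.1 fun hi => hR ⟨i, hi⟩, h_out⟩
  exact h_dec ⟨h_between.1, h_between.2, fun h_iff => hu (h_iff.1 hω)⟩

theorem IsBracket.measure_upper_mem_le [IsFiniteMeasure P] [Countable ι]
    (h : IsBracket P l x u R δ) (hA : DecidedByThresholds E A) :
    P {ω | u ω ∈ A ∧ ∀ i, |u ω i| ≤ R} ≤ P {ω | x ω ∈ A} + (E.card + 2) * δ := by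
  have h_floor : P {ω | u ω ∈ Set.Ici (fun _ => -R) ∧ l ω ∉ Set.Ici (fun _ => -R)} ≤ δ :=
    h.measure_upperSet_le (isUpperSet_Ici _) measurableSet_Ici
  rw [← one_add_one_eq_two, ← add_assoc, add_one_mul, add_one_mul]
  refine le_trans (measure_mono fun ω ⟨huA, huR⟩ => ?_) <| (measure_union_le _ _).trans <|
    add_le_add_right ((measure_union_le _ _).trans <| add_le_add ((measure_union_le _ _).trans <|
      add_le_add (h.measure_undecided_le hA) h.measure_escape_le) h_floor) _
  by_contra h_not
  simp only [Set.mem_union, not_or] at h_not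
  obtain ⟨hx, ⟨h_dec, h_esc⟩, h_low⟩ := h_not
  have hlR : l ω ∈ Set.Ici fun _ => -R := by
    by_contra hl
    exact h_low ⟨fun i => (abs_le.1 (huR i)).1, hl⟩
  have h_between : l ω ≤ x ω ∧ x ω ≤ u ω := by
    by_contra h_out
    exact h_esc ⟨fun i hlx hxu => abs_le.2
      ⟨(hlR i).trans hlx, hxu.trans (abs_le.1 (huR i)).2⟩, h_out⟩
  exact h_dec ⟨h_between.1, h_between.2, fun h_iff => hx (h_iff.2 huA)⟩

theorem IsBracket.measure_mem_le_mul_add [IsFiniteMeasure P] (h : IsBracket P l x u R δ)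
    (hA : DecidedByThresholds E A) (h_law : P {ω | u ω ∈ A} ≤ C * P {ω | y ω ∈ A} + τ)
    (h_tail : P {ω | ∃ i, R < |x ω i|} ≤ τ) (hδ : (C + 1) * ((E.card + 2) * δ) ≤ τ) :
    P {ω | x ω ∈ A} ≤ C * P {ω | y ω ∈ A} + (τ + τ + τ) := by
  have h_dec : (E.card + 1) * δ ≤ τ :=
    calc (E.card + 1) * δ ≤ (E.card + 2) * δ := by gcongr; exact one_le_two
      _ ≤ (C + 1) * ((E.card + 2) * δ) := le_mul_of_one_le_left' le_add_self
      _ ≤ τ := hδ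
  calc P {ω | x ω ∈ A}
      ≤ P {ω | u ω ∈ A} + P {ω | ∃ i, R < |x ω i|} + (E.card + 1) * δ := h.measure_mem_le hA
    _ ≤ C * P {ω | y ω ∈ A} + τ + τ + τ := by gcongr
    _ = C * P {ω | y ω ∈ A} + (τ + τ + τ) := by ring

theorem IsBracket.measure_le_mul_mem_add [IsFiniteMeasure P] [Countable ι]
    (h : IsBracket P l x u R δ) (hA : DecidedByThresholds E A) (hAm : MeasurableSet A)
    (h_law : ∀ B, MeasurableSet B → P {ω | y ω ∈ B} ≤ C * P {ω | u ω ∈ B} + τ)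
    (h_tail : P {ω | ∃ i, R < |y ω i|} ≤ τ) (hδ : (C + 1) * ((E.card + 2) * δ) ≤ τ) :
    P {ω | y ω ∈ A} ≤ C * P {ω | x ω ∈ A} + (τ + τ + τ) := by
  have h_box : MeasurableSet {z : ι → ℝ | z ∈ A ∧ ∀ i, |z i| ≤ R} := by
    have h_le (i : ι) : MeasurableSet {z : ι → ℝ | |z i| ≤ R} :=
      measurableSet_le (measurable_pi_apply i).abs measurable_const
    measurability
  have h_split : P {ω | y ω ∈ A} ≤
      P {ω | y ω ∈ A ∧ ∀ i, |y ω i| ≤ R} + P {ω | ∃ i, R < |y ω i|} := by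
    refine (measure_mono fun ω hω => ?_).trans (measure_union_le _ _)
    by_cases hR : ∀ i, |y ω i| ≤ R
    · exact Or.inl ⟨hω, hR⟩
    · exact Or.inr (by simpa using hR)
  have h_dec : C * ((E.card + 2) * δ) ≤ τ := le_trans (by gcongr; exact le_self_add) hδ
  calc P {ω | y ω ∈ A}
      ≤ C * P {ω | u ω ∈ A ∧ ∀ i, |u ω i| ≤ R} + τ + τ :=
        h_split.trans (add_le_add (h_law _ h_box) h_tail)
    _ ≤ C * (P {ω | x ω ∈ A} + (E.card + 2) * δ) + τ + τ := by
        gcongr; exact h.measure_upper_mem_le hA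
    _ = C * P {ω | x ω ∈ A} + (C * ((E.card + 2) * δ) + τ + τ) := by ring
    _ ≤ C * P {ω | x ω ∈ A} + (τ + τ + τ) := by gcongr

end Bracket

/-! ### The law of the solution -/

section SampledPaths

variable {Ω : Type*} [MeasurableSpace Ω] {P : Measure Ω} {T : ℝ} {X Y Z : ℝ → Ω → ℝ} {S : Set ℝ}

theorem eventually_measure_le_of_ae_eventually_notMem [IsFiniteMeasure P] {ι : Type*}
    {L : Filter ι} [L.IsCountablyGenerated] {s : ι → Set Ω} (hs : ∀ i, MeasurableSet (s i))
    (h : ∀ᵐ ω ∂P, ∀ᶠ i in L, ω ∉ s i) {δ : ℝ≥0∞} (hδ : δ ≠ 0) : ∀ᶠ i in L, P (s i) ≤ δ := by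
  have h_lim := tendsto_measure_of_ae_tendsto_indicator_of_isFiniteMeasure (A := ∅) L .empty hs
    (h.mono fun ω hω => hω.mono fun i hi => iff_of_false hi (Set.notMem_empty ω))
  rw [measure_empty] at h_lim
  exact h_lim.eventually_le_const hδ.bot_lt

theorem eventually_measure_exists_lt_abs_le [IsFiniteMeasure P] (hS : S.Countable)
    (hST : S ⊆ Set.Icc 0 T) (hZ : ∀ t, Measurable (Z t))
    (hZc : ∀ᵐ ω ∂P, ContinuousOn (fun t => Z t ω) (Set.Icc 0 T)) {τ : ℝ≥0∞} (hτ : τ ≠ 0) :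
    ∀ᶠ R in Filter.atTop, P {ω | ∃ t ∈ S, R < |Z t ω|} ≤ τ := by
  refine eventually_measure_le_of_ae_eventually_notMem (fun R => ?_) (hZc.mono fun ω hω => ?_) hτ
  · have h_union : {ω | ∃ t ∈ S, R < |Z t ω|} = ⋃ t ∈ S, {ω | R < |Z t ω|} := by ext; simp
    exact h_union ▸ .biUnion hS fun t _ => measurableSet_lt measurable_const (hZ t).abs
  · obtain ⟨M, hM⟩ := isCompact_Icc.exists_bound_of_continuousOn hω
    filter_upwards [Filter.eventually_ge_atTop M] with R hR
    rintro ⟨t, ht, h_lt⟩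
    exact (hR.trans_lt h_lt).not_ge (hM t (hST ht))

theorem exists_measurable_extension (hST : S ⊆ Set.Icc 0 T) (hTS : Set.Icc 0 T ⊆ closure S) :
    ∃ φ : (S → ℝ) → Set.Icc (0 : ℝ) T → ℝ, Measurable φ ∧ ∀ f : ℝ → ℝ,
      ContinuousOn f (Set.Icc 0 T) → φ (fun s => f s) = fun t : Set.Icc (0 : ℝ) T => f t := by
  have h_seq (t : Set.Icc (0 : ℝ) T) :
      ∃ s : ℕ → S, Filter.Tendsto (fun k => (s k : ℝ)) Filter.atTop (nhds t) := by
    obtain ⟨s, hs, hst⟩ := mem_closure_iff_seq_limit.1 (hTS t.2)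
    exact ⟨fun k => ⟨s k, hs k⟩, hst⟩
  choose s hs using h_seq
  refine ⟨fun x t => Filter.limsup (fun k => x (s t k)) Filter.atTop,
    measurable_pi_iff.2 fun t => .limsup fun k => measurable_pi_apply _, fun f hf => ?_⟩
  funext t
  exact Filter.Tendsto.limsup_eq ((hf t t.2).tendsto.comp
    (tendsto_nhdsWithin_iff.2 ⟨hs t, .of_forall fun k => hST (s t k).2⟩))

theorem absolutelyContinuous_processLaw (hST : S ⊆ Set.Icc 0 T) (hTS : Set.Icc 0 T ⊆ closure S)
    (hX : ∀ t, Measurable (X t)) (hY : ∀ t, Measurable (Y t))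
    (hXc : ∀ᵐ ω ∂P, ContinuousOn (fun t => X t ω) (Set.Icc 0 T))
    (hYc : ∀ᵐ ω ∂P, ContinuousOn (fun t => Y t ω) (Set.Icc 0 T))
    (h : P.map (fun ω (s : S) => X s ω) ≪ P.map (fun ω (s : S) => Y s ω)) :
    processLaw P T X ≪ processLaw P T Y := by
  obtain ⟨φ, hφ, h_ext⟩ := exists_measurable_extension hST hTS
  have h_law {Z : ℝ → Ω → ℝ} (hZ : ∀ t, Measurable (Z t))
      (hZc : ∀ᵐ ω ∂P, ContinuousOn (fun t => Z t ω) (Set.Icc 0 T)) :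
      processLaw P T Z = (P.map fun ω (s : S) => Z s ω).map φ := by
    rw [Measure.map_map hφ (measurable_pi_iff.2 fun s => hZ s)]
    exact Measure.map_congr (hZc.mono fun ω hω => (h_ext _ hω).symm)
  rw [h_law hX hXc, h_law hY hYc]
  exact h.map hφ

end SampledPaths

section DyadicTimes

variable {T : ℝ}

/-- The times `i T / 2 ^ k` in `[0, T]`. They are dense and exhausted by nested uniform grids. -/
def dyadicTimes (T : ℝ) : Set ℝ := {t | ∃ k i : ℕ, i ≤ 2 ^ k ∧ t = i * (T / (2 ^ k : ℕ))}

theorem countable_dyadicTimes (T : ℝ) : (dyadicTimes T).Countable := by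
  refine (Set.countable_range fun p : ℕ × ℕ => (p.2 : ℝ) * (T / (2 ^ p.1 : ℕ))).mono ?_
  rintro _ ⟨k, i, -, rfl⟩
  exact ⟨(k, i), rfl⟩

theorem dyadicTimes_subset_Icc (hT : 0 ≤ T) : dyadicTimes T ⊆ Set.Icc 0 T := by
  rintro _ ⟨k, i, hi, rfl⟩
  refine ⟨by positivity, ?_⟩
  rw [mul_div_left_comm]
  exact mul_le_of_le_one_right hT (div_le_one_of_le₀ (by exact_mod_cast hi) (by positivity))

theorem Icc_subset_closure_dyadicTimes (T : ℝ) : Set.Icc 0 T ⊆ closure (dyadicTimes T) := by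
  intro t ht
  rcases eq_or_lt_of_le (ht.1.trans ht.2) with rfl | hT
  · exact subset_closure ⟨0, 0, by simp, by simp [le_antisymm ht.2 ht.1]⟩
  have h_pow : Filter.Tendsto (fun k : ℕ => (2 ^ k : ℕ) : ℕ → ℕ) Filter.atTop Filter.atTop :=
    tendsto_pow_atTop_atTop_of_one_lt one_lt_two
  have h_floor := ((tendsto_nat_floor_mul_div_atTop (div_nonneg ht.1 hT.le)).comp
    (tendsto_natCast_atTop_atTop.comp h_pow)).mul_const T
  rw [div_mul_cancel₀ t hT.ne'] at h_floor
  refine mem_closure_of_tendsto h_floor (.of_forall fun k =>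
    ⟨k, ⌊t / T * (2 ^ k : ℕ)⌋₊, Nat.floor_le_of_le ?_, ?_⟩)
  · exact mul_le_of_le_one_left (by positivity) ((div_le_one hT).2 ht.2)
  · simp only [Function.comp_apply]
    ring

theorem eventually_exists_eq_mul_of_mem_dyadicTimes {t : ℝ} (ht : t ∈ dyadicTimes T) :
    ∀ᶠ k : ℕ in Filter.atTop, ∃ i : Fin (2 ^ k + 1), t = i * (T / (2 ^ k : ℕ)) := by
  obtain ⟨k, i, hi, rfl⟩ := ht
  filter_upwards [Filter.eventually_ge_atTop k] with m hm
  obtain ⟨j, rfl⟩ := Nat.exists_eq_add_of_le hm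
  refine ⟨⟨i * 2 ^ j, ?_⟩, ?_⟩
  · rw [pow_add, Nat.lt_succ_iff]
    gcongr
  · push_cast
    field_simp
    ring

end DyadicTimes

section Solution

variable {Ω : Type*} [MeasurableSpace Ω] {P : Measure Ω}
variable {W X : ℝ → Ω → ℝ} {b β₁ β₂ : ℝ → ℝ} {H x₀ T R ε : ℝ} {L : ℝ≥0}

/-- `X` is a continuous pathwise solution on `[0, T]` of `dX = b(X) dt + dW`, `X₀ = x₀`. -/
structure IsSDESolution (P : Measure Ω) (W : ℝ → Ω → ℝ) (x₀ T : ℝ) (b : ℝ → ℝ)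
    (X : ℝ → Ω → ℝ) : Prop where
  measurable : ∀ t, Measurable (X t)
  continuousOn : ∀ᵐ ω ∂P, ContinuousOn (fun t => X t ω) (Set.Icc (0 : ℝ) T)
  eq_add_integral : ∀ᵐ ω ∂P, ∀ t ∈ Set.Icc (0 : ℝ) T,
    X t ω = x₀ + W t ω + ∫ s in (0 : ℝ)..t, b (X s ω)

/-- The values of a process on the uniform grid of `[0, T]` with `n` steps. -/
noncomputable def gridSample (Z : ℝ → Ω → ℝ) (T : ℝ) (n : ℕ) (ω : Ω) (i : Fin (n + 1)) : ℝ :=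
  Z (i * (T / n)) ω

theorem measurableSet_escape {ι : Type*} [Countable ι] {l x u : Ω → ι → ℝ} (hl : Measurable l)
    (hx : Measurable x) (hu : Measurable u) :
    MeasurableSet {ω | (∀ i, l ω i ≤ x ω i → x ω i ≤ u ω i → |x ω i| ≤ R) ∧
      ¬(l ω ≤ x ω ∧ x ω ≤ u ω)} := by
  simp only [measurable_pi_iff] at hl hx hu
  have hlx (i : ι) := measurableSet_le (hl i) (hx i)
  have hxu (i : ι) := measurableSet_le (hx i) (hu i)
  have hxR (i : ι) := measurableSet_le (hx i).abs (measurable_const (a := R))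
  simp only [Pi.le_def]
  measurability

theorem IsFractionalBM.ae_eulerGrid_zero_drift (hW : IsFractionalBM P H W) (x₀ T : ℝ) (n : ℕ) :
    ∀ᵐ ω ∂P, eulerGrid W x₀ T (fun _ => 0) n ω = gridSample (fun t ω => x₀ + W t ω) T n ω := by
  filter_upwards [hW.2.1] with ω hω
  funext i
  rw [eulerGrid, eulerPath_zero_drift_gridIncrement, hω.2, sub_zero, gridSample]

theorem IsSDESolution.ae_eventually_eulerGrid_bracket (hX : IsSDESolution P W x₀ T b X)
    (hW : IsFractionalBM P H W) (hT : 0 < T) (hε : 0 < ε) (hb : Continuous b)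
    (hβ₁ : LipschitzWith L β₁) (hβ₂ : LipschitzWith L β₂)
    (hb₁ : ∀ y, |y| ≤ R → β₁ y ≤ b y - ε) (hb₂ : ∀ y, |y| ≤ R → b y + ε ≤ β₂ y) :
    ∀ᵐ ω ∂P, ∀ᶠ n in Filter.atTop,
      (∀ i, eulerGrid W x₀ T β₁ n ω i ≤ gridSample X T n ω i →
        gridSample X T n ω i ≤ eulerGrid W x₀ T β₂ n ω i → |gridSample X T n ω i| ≤ R) →
      eulerGrid W x₀ T β₁ n ω ≤ gridSample X T n ω ∧
        gridSample X T n ω ≤ eulerGrid W x₀ T β₂ n ω := by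
  filter_upwards [hX.continuousOn, hX.eq_add_integral, hW.2.1] with ω hXc hX_eq hWω
  filter_upwards [eventually_eulerPath_le_and_le_eulerPath hT hε hb hXc hWω.2 hX_eq hβ₁ hβ₂ hb₁
    hb₂] with n hn h_bdd
  have h_main := hn (gridIncrement W (T / n) ω) (fun _ => rfl) fun i hi =>
    h_bdd ⟨i, Nat.lt_succ_of_le hi⟩
  exact ⟨fun i => (h_main i (Nat.lt_succ_iff.1 i.2)).1,
    fun i => (h_main i (Nat.lt_succ_iff.1 i.2)).2⟩

theorem IsSDESolution.eventually_isBracket_eulerGrid [IsFiniteMeasure P]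
    (hX : IsSDESolution P W x₀ T b X)
    (hW : IsFractionalBM P H W) (hT : 0 < T) (hε : 0 < ε) (hb : Continuous b)
    (hβ₁ : LipschitzWith L β₁) (hβ₂ : LipschitzWith L β₂) (hβ : ∀ y, β₁ y ≤ β₂ y)
    (hb₁ : ∀ y, |y| ≤ R → β₁ y ≤ b y - ε) (hb₂ : ∀ y, |y| ≤ R → b y + ε ≤ β₂ y)
    {δ : ℝ≥0∞} (hδ : δ ≠ 0) (h_law : ∀ n ≠ 0, ∀ A : Set (Fin (n + 1) → ℝ), MeasurableSet A →
      P {ω | eulerGrid W x₀ T β₂ n ω ∈ A} ≤ P {ω | eulerGrid W x₀ T β₁ n ω ∈ A} + δ) :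
    ∀ᶠ n in Filter.atTop, IsBracket P (eulerGrid W x₀ T β₁ n) (gridSample X T n)
      (eulerGrid W x₀ T β₂ n) R δ := by
  have hm₁ := hW.measurable_eulerGrid hβ₁.continuous.measurable x₀ T
  have hm₂ := hW.measurable_eulerGrid hβ₂.continuous.measurable x₀ T
  have hmX (n : ℕ) : Measurable (gridSample X T n) := measurable_pi_iff.2 fun i => hX.measurable _
  have h_escape := eventually_measure_le_of_ae_eventually_notMem
    (fun n => measurableSet_escape (R := R) (hm₁ n) (hmX n) (hm₂ n))
    ((hX.ae_eventually_eulerGrid_bracket hW hT hε hb hβ₁ hβ₂ hb₁ hb₂).mono fun ω hω =>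
      hω.mono fun n hn h_out => h_out.2 (hn h_out.1)) hδ
  filter_upwards [h_escape, Filter.eventually_ne_atTop 0, eventually_mesh_mul_le_one T L]
    with n hn hn0 h_mesh
  exact ⟨hm₁ n, hm₂ n, fun ω i => eulerPath_mono (by positivity)
    (monotone_add_mul_of_lipschitzWith hβ₂ (by positivity) h_mesh) hβ i, h_law n hn0, hn⟩

theorem exists_holder_exponents (h_half : 1 / 2 < H) {α : ℝ} (hα : 1 - 1 / (2 * H) < α) :
    ∃ a₁ a₂ : ℝ, 0 < a₂ ∧ a₂ ≤ 1 ∧ a₂ < a₁ ∧ a₁ < α ∧ 2 * H - 2 * (H * a₂) < 1 := by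
  have hH : 0 < 2 * H := by linarith
  obtain ⟨a₂, h_low, h_high⟩ := exists_between (lt_min hα (sub_lt_self 1 (one_div_pos.2 hH)))
  obtain ⟨a₁, h₁₂, h₁⟩ := exists_between (h_high.trans_le (min_le_left _ _))
  have h_inv : 1 / (2 * H) < 1 := (div_lt_one hH).2 (by linarith)
  refine ⟨a₁, a₂, by linarith, h_high.le.trans (min_le_right _ _), h₁₂, h₁, ?_⟩
  rw [sub_lt_comm, lt_div_iff₀ hH] at h_low
  linarith

theorem IsSDESolution.exists_eventually_isBracket [IsProbabilityMeasure P]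
    (hX : IsSDESolution P W x₀ T b X) (hW : IsFractionalBM P H W) (h_half : 1 / 2 < H)
    (h_one : H < 1) (hT : 0 < T) {α : ℝ} (hα : 1 - 1 / (2 * H) < α)
    (hb : ∀ K : Set ℝ, IsCompact K → ∃ c : ℝ, 0 ≤ c ∧
      ∀ x ∈ K, ∀ y ∈ K, |b x - b y| ≤ c * |x - y| ^ α) (hR : 0 ≤ R) {τ : ℝ≥0∞} (hτ : τ ≠ 0) :
    ∃ C : ℝ≥0∞, C ≠ ∞ ∧ ∀ δ : ℝ≥0∞, δ ≠ 0 → ∀ᶠ n in Filter.atTop,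
      ∃ l u : Ω → Fin (n + 1) → ℝ, IsBracket P l (gridSample X T n) u R δ ∧
        ∀ A, MeasurableSet A →
          P {ω | u ω ∈ A} ≤ C * P {ω | gridSample (fun t ω => x₀ + W t ω) T n ω ∈ A} + τ ∧
          P {ω | gridSample (fun t ω => x₀ + W t ω) T n ω ∈ A} ≤ C * P {ω | u ω ∈ A} + τ := by
  obtain ⟨a₁, a₂, ha₂, ha₂1, ha, haα, haH⟩ := exists_holder_exponents h_half hα
  have ha₁ : 0 < a₁ := ha₂.trans ha
  obtain ⟨f, M, c, hc, hfM, hfc, hfb⟩ := exists_clamp_holder hR ha₁ haα hb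
  obtain ⟨D, hD, h_bracket⟩ := exists_holderNorm_lipschitz_bracket hfM hc ha₂ ha hfc
  obtain ⟨C, hC, h_equiv⟩ := hW.exists_measure_eulerGrid_le_mul_add h_half h_one ha₂ ha₂1 haH hT
    D D hτ
  refine ⟨C, hC, fun δ hδ => ?_⟩
  obtain ⟨η, hη, h_close⟩ := hW.exists_measure_eulerGrid_le_add h_half h_one ha₂ ha₂1 haH hT D hδ
  obtain ⟨ε, hε, L, β₁, β₂, hβ₁, hβ₂, hβ₂D, hβη, h_low, h_up⟩ := h_bracket η hη
  have hm₁ := hβ₁.continuous.measurable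
  have hm₂ := hβ₂.continuous.measurable
  filter_upwards [Filter.eventually_ne_atTop 0, hX.eventually_isBracket_eulerGrid hW hT hε
    (continuous_of_locally_holder (ha₁.trans haα) hb) hβ₁ hβ₂
    (fun y => by linarith [h_low y, h_up y]) (fun y hy => hfb y hy ▸ h_low y)
    (fun y hy => hfb y hy ▸ h_up y) hδ fun n hn A hA => h_close hn x₀ hm₂ hm₁ hβ₂D.1 hβη hA]
    with n hn h
  refine ⟨_, _, h, fun A hA => ?_⟩
  have h_zero : P {ω | gridSample (fun t ω => x₀ + W t ω) T n ω ∈ A} =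
      P {ω | eulerGrid W x₀ T (fun _ => 0) n ω ∈ A} :=
    measure_congr <| Filter.eventuallyEq_set.2 <|
      (hW.ae_eulerGrid_zero_drift x₀ T n).mono fun ω hω => by
        rw [Set.mem_ofPred_eq, Set.mem_ofPred_eq, hω]
  rw [h_zero]
  exact ⟨h_equiv hn x₀ hm₂ measurable_const hβ₂D.1 (by simpa using hβ₂D) hA,
    h_equiv hn x₀ measurable_const hm₂ (by simpa using hD) (by simpa using hβ₂D.neg) hA⟩

end Solution

section GridIndex

variable {Ω : Type*} {T : ℝ}

theorem eventually_exists_index_of_dyadicTimes (S : Finset (dyadicTimes T)) :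
    ∀ᶠ k : ℕ in Filter.atTop, ∃ f : dyadicTimes T → Fin (2 ^ k + 1),
      ∀ s ∈ S, (s : ℝ) = f s * (T / (2 ^ k : ℕ)) := by
  filter_upwards [(Filter.eventually_all_finset S).2 fun s _ =>
    eventually_exists_eq_mul_of_mem_dyadicTimes s.2] with k hk
  choose! f hf using hk
  exact ⟨f, hf⟩

theorem DecidedByThresholds.gridSample_comp_mem_iff {S : Set ℝ} {E : Finset (S × ℝ)}
    {A : Set (S → ℝ)} (hA : DecidedByThresholds E A) {n : ℕ} {f : S → Fin (n + 1)}
    (hf : ∀ p ∈ E, (p.1 : ℝ) = f p.1 * (T / n)) (Z : ℝ → Ω → ℝ) (ω : Ω) :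
    gridSample Z T n ω ∘ f ∈ A ↔ (fun s : S => Z s ω) ∈ A :=
  hA _ _ fun p hp => by rw [Function.comp_apply, gridSample, ← hf p hp]

end GridIndex

section Law

variable {Ω : Type*} [MeasurableSpace Ω] {P : Measure Ω} {W X Y Z : ℝ → Ω → ℝ} {b : ℝ → ℝ}
  {H x₀ T R α : ℝ} {τ : ℝ≥0∞}

theorem IsFractionalBM.ae_continuousOn_const_add (hW : IsFractionalBM P H W) (x₀ T : ℝ) :
    ∀ᵐ ω ∂P, ContinuousOn (fun t => x₀ + W t ω) (Set.Icc 0 T) :=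
  hW.2.1.mono fun _ hω => continuousOn_const.add (hω.1.mono Set.Icc_subset_Ici_self)

theorem measure_exists_lt_abs_gridSample_le (Z : ℝ → Ω → ℝ) (T R : ℝ) (k : ℕ) :
    P {ω | ∃ i, R < |gridSample Z T (2 ^ k) ω i|} ≤ P {ω | ∃ t ∈ dyadicTimes T, R < |Z t ω|} :=
  measure_mono fun _ ⟨i, hi⟩ => ⟨_, ⟨k, i, Nat.lt_succ_iff.1 i.2, rfl⟩, hi⟩

theorem exists_forall_measure_lt_abs_gridSample_le [IsFiniteMeasure P] (hT : 0 ≤ T)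
    (hX : ∀ t, Measurable (X t)) (hY : ∀ t, Measurable (Y t))
    (hXc : ∀ᵐ ω ∂P, ContinuousOn (fun t => X t ω) (Set.Icc 0 T))
    (hYc : ∀ᵐ ω ∂P, ContinuousOn (fun t => Y t ω) (Set.Icc 0 T)) (hτ : τ ≠ 0) :
    ∃ R, 0 ≤ R ∧ ∀ k : ℕ, P {ω | ∃ i, R < |gridSample X T (2 ^ k) ω i|} ≤ τ ∧
      P {ω | ∃ i, R < |gridSample Y T (2 ^ k) ω i|} ≤ τ := by
  have h_tail {Z : ℝ → Ω → ℝ} (hZ : ∀ t, Measurable (Z t))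
      (hZc : ∀ᵐ ω ∂P, ContinuousOn (fun t => Z t ω) (Set.Icc 0 T)) :=
    eventually_measure_exists_lt_abs_le (countable_dyadicTimes T) (dyadicTimes_subset_Icc hT) hZ
      hZc hτ
  obtain ⟨R, hR, hXR, hYR⟩ :=
    ((Filter.eventually_ge_atTop 0).and ((h_tail hX hXc).and (h_tail hY hYc))).exists
  exact ⟨R, hR, fun k => ⟨(measure_exists_lt_abs_gridSample_le X T R k).trans hXR,
    (measure_exists_lt_abs_gridSample_le Y T R k).trans hYR⟩⟩

theorem IsSDESolution.exists_measure_thresholdEvent_le [IsProbabilityMeasure P]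
    (hX : IsSDESolution P W x₀ T b X) (hW : IsFractionalBM P H W) (h_half : 1 / 2 < H)
    (h_one : H < 1) (hT : 0 < T) (hα : 1 - 1 / (2 * H) < α)
    (hb : ∀ K : Set ℝ, IsCompact K → ∃ c : ℝ, 0 ≤ c ∧
      ∀ x ∈ K, ∀ y ∈ K, |b x - b y| ≤ c * |x - y| ^ α) (hτ : τ ≠ 0) :
    ∃ C : ℝ≥0∞, C ≠ ∞ ∧ ∀ A ∈ thresholdEvents (dyadicTimes T),
      P {ω | (fun s : dyadicTimes T => X s ω) ∈ A} ≤
        C * P {ω | (fun s : dyadicTimes T => x₀ + W s ω) ∈ A} + τ ∧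
      P {ω | (fun s : dyadicTimes T => x₀ + W s ω) ∈ A} ≤
        C * P {ω | (fun s : dyadicTimes T => X s ω) ∈ A} + τ := by
  have hτ3 : τ / 3 ≠ 0 := ENNReal.div_ne_zero.2 ⟨hτ, by finiteness⟩
  obtain ⟨R, hR, h_tail⟩ := exists_forall_measure_lt_abs_gridSample_le hT.le hX.measurable
    (fun t => (hW.1 t).const_add x₀) hX.continuousOn (hW.ae_continuousOn_const_add x₀ T) hτ3
  obtain ⟨C, hC, h_bracket⟩ :=
    hX.exists_eventually_isBracket hW h_half h_one hT hα hb hR hτ3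
  refine ⟨C, hC, fun A ⟨hAm, E, hA⟩ => ?_⟩
  set δ := τ / 3 / ((C + 1) * (E.card + 2))
  have hδ : δ ≠ 0 := ENNReal.div_ne_zero.2 ⟨hτ3, by finiteness⟩
  obtain ⟨k, ⟨l, u, h, h_law⟩, f, hf⟩ :=
    (((tendsto_pow_atTop_atTop_of_one_lt one_lt_two).eventually (h_bracket δ hδ)).and
      (eventually_exists_index_of_dyadicTimes (E.image Prod.fst))).exists
  replace hf (p) (hp : p ∈ E) := hf p.1 (Finset.mem_image_of_mem _ hp)
  obtain ⟨F, hFE, hB⟩ := hA.exists_card_le_preimage_comp f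
  have hBm : MeasurableSet {x : Fin (2 ^ k + 1) → ℝ | x ∘ f ∈ A} :=
    (measurable_pi_iff.2 fun s => measurable_pi_apply (f s)) hAm
  have h_card : (C + 1) * ((F.card + 2) * δ) ≤ τ / 3 :=
    calc (C + 1) * ((F.card + 2) * δ) ≤ (C + 1) * ((E.card + 2) * δ) := by gcongr
      _ ≤ τ / 3 := by rw [← mul_assoc]; exact ENNReal.mul_div_le
  have hX_upper := h.measure_mem_le_mul_add hB (h_law _ hBm).1 (h_tail k).1 h_card
  have hX_lower := h.measure_le_mul_mem_add hB hBm (fun B hBm => (h_law B hBm).2) (h_tail k).2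
    h_card
  simp only [Set.mem_ofPred_eq, hA.gridSample_comp_mem_iff hf, ENNReal.add_thirds]
    at hX_upper hX_lower
  exact ⟨hX_upper, hX_lower⟩

theorem IsSDESolution.absolutelyContinuous_map_dyadicTimes [IsProbabilityMeasure P]
    (hX : IsSDESolution P W x₀ T b X) (hW : IsFractionalBM P H W) (h_half : 1 / 2 < H)
    (h_one : H < 1) (hT : 0 < T) (hα : 1 - 1 / (2 * H) < α)
    (hb : ∀ K : Set ℝ, IsCompact K → ∃ c : ℝ, 0 ≤ c ∧
      ∀ x ∈ K, ∀ y ∈ K, |b x - b y| ≤ c * |x - y| ^ α) :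
    P.map (fun ω (s : dyadicTimes T) => X s ω) ≪
        P.map (fun ω (s : dyadicTimes T) => x₀ + W s ω) ∧
      P.map (fun ω (s : dyadicTimes T) => x₀ + W s ω) ≪
        P.map (fun ω (s : dyadicTimes T) => X s ω) := by
  have hXm : Measurable fun ω (s : dyadicTimes T) => X s ω :=
    measurable_pi_iff.2 fun s => hX.measurable s
  have hYm : Measurable fun ω (s : dyadicTimes T) => x₀ + W s ω :=
    measurable_pi_iff.2 fun s => (hW.1 s).const_add x₀
  have h_event {τ : ℝ≥0∞} (hτ : τ ≠ 0) :=
    hX.exists_measure_thresholdEvent_le hW h_half h_one hT hα hb hτ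
  exact ⟨absolutelyContinuous_map_of_thresholdEvents hXm hYm fun τ hτ =>
      (h_event hτ).imp fun C h => ⟨h.1, fun A hA => (h.2 A hA).1⟩,
    absolutelyContinuous_map_of_thresholdEvents hYm hXm fun τ hτ =>
      (h_event hτ).imp fun C h => ⟨h.1, fun A hA => (h.2 A hA).2⟩⟩

end Law

theorem equivalence_fbm_sde_large_hurst_general
    {Ω : Type*} [MeasurableSpace Ω] (P : Measure Ω) [IsProbabilityMeasure P]
    (H : ℝ) (hH : H ∈ Set.Ioo (1 / 2 : ℝ) 1)
    (W : ℝ → Ω → ℝ) (hW : IsFractionalBM P H W)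
    (x₀ T : ℝ) (hT : 0 < T) (b : ℝ → ℝ) (α : ℝ) (hα : 1 - 1 / (2 * H) < α)
    (hbHolder : ∀ K : Set ℝ, IsCompact K → ∃ c : ℝ, 0 ≤ c ∧
      ∀ x ∈ K, ∀ y ∈ K, |b x - b y| ≤ c * |x - y| ^ α)
    (X : ℝ → Ω → ℝ) (hX : IsSDESolution P W x₀ T b X) :
    processLaw P T X ≪ processLaw P T (fun t ω => x₀ + W t ω) ∧
      processLaw P T (fun t ω => x₀ + W t ω) ≪ processLaw P T X := by
  have hST := dyadicTimes_subset_Icc hT.le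
  have hTS := Icc_subset_closure_dyadicTimes T
  have hYm (t : ℝ) := (hW.1 t).const_add x₀
  have hYc := hW.ae_continuousOn_const_add x₀ T
  obtain ⟨h_XY, h_YX⟩ := hX.absolutelyContinuous_map_dyadicTimes hW hH.1 hH.2 hT hα hbHolder
  exact ⟨absolutelyContinuous_processLaw hST hTS hX.measurable hYm hX.continuousOn hYc h_XY,
    absolutelyContinuous_processLaw hST hTS hYm hX.measurable hYc hX.continuousOn h_YX⟩

theorem equivalence_fbm_sde_large_hurst
    {Ω : Type*} [MeasurableSpace Ω] (P : Measure Ω) [IsProbabilityMeasure P]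
    (H : ℝ) (hH : H ∈ Set.Ioo (1 / 2 : ℝ) 1)
    (W : ℝ → Ω → ℝ) (hW : IsFractionalBM P H W)
    (x₀ T : ℝ) (hT : 0 < T)
    (b : ℝ → ℝ) (hbmeas : Measurable b)
    (hbloc : ∀ K : Set ℝ, IsCompact K → ∃ M : ℝ, ∀ x ∈ K, |b x| ≤ M)
    (α : ℝ) (hα : 2 - 1 / H < α)
    (hbHolder : ∀ K : Set ℝ, IsCompact K → ∃ c : ℝ, 0 ≤ c ∧
      ∀ x ∈ K, ∀ y ∈ K, |b x - b y| ≤ c * |x - y| ^ α)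
    (X : ℝ → Ω → ℝ)
    (hXcont : ∀ᵐ ω ∂P, ContinuousOn (fun t => X t ω) (Set.Icc (0 : ℝ) T))
    (hXadapted : Adapted
      (Filtration.natural W fun t => ((hW.1 t).stronglyMeasurable)) X)
    (hXeq : ∀ᵐ ω ∂P, ∀ t ∈ Set.Icc (0 : ℝ) T,
      X t ω = x₀ + W t ω + ∫ s in (0 : ℝ)..t, b (X s ω)) :
    processLaw P T X ≪ processLaw P T (fun t ω => x₀ + W t ω) ∧
      processLaw P T (fun t ω => x₀ + W t ω) ≪ processLaw P T X := by
  have h_half : 1 / (2 * H) < 1 := (div_lt_one (by linarith [hH.1])).2 (by linarith [hH.1])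
  have h_exp : 1 - 1 / (2 * H) < 2 - 1 / H := by
    have h_double : 1 / H = 2 * (1 / (2 * H)) := by field_simp
    linarith
  exact equivalence_fbm_sde_large_hurst_general P H hH W hW x₀ T hT b α (h_exp.trans hα) hbHolder X
    ⟨fun t => (hXadapted t).mono (Filtration.le _ t) le_rfl, hXcont, hXeq⟩
end

section
/- Let T > 0 and let f : [0,T] → ℝ be Hölder continuous with exponent β ∈ (0,1], i.e., there is c ≥ 0 with |f(t) − f(s)| ≤ c|t − s|^β for all s, t ∈ [0,T]. Suppose f(0) = 0 and let α ∈ (0, β). Then the function g : [0,T] → ℝ defined by g(t) := t^{−α} f(t) for t > 0 and g(0) := 0 is Hölder continuous with exponent β − α on [0,T]. -/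
open Real

/-!
For `0 ≤ s ≤ t`, split `t ^ (-α) f t - s ^ (-α) f s` as
`t ^ (-α) (f t - f s) + (t ^ (-α) - s ^ (-α)) f s`. The first term is controlled by `t - s ≤ t`.
In the second, `f 0 = 0` gives `|f s| ≤ c s ^ β`, so that up to the factor `c` it is at most
`s ^ (β - α) (1 - (s / t) ^ α) ≤ t ^ (β - α) (1 - s / t) ≤ (t - s) ^ (β - α)`, where the last two
steps use `α ≤ 1` and `β - α ≤ 1`.
-/

section Scalar

variable {α β s t : ℝ}

lemma rpow_neg_mul_rpow_le_rpow_sub (hs : 0 ≤ s) (hst : s ≤ t) (hα : 0 ≤ α) (hαβ : α ≤ β) :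
    t ^ (-α) * s ^ β ≤ s ^ (β - α) := by
  have ht : 0 ≤ t := hs.trans hst
  have hsplit : s ^ β = s ^ α * s ^ (β - α) := by
    rw [← rpow_add_of_nonneg hs hα (sub_nonneg.2 hαβ), add_sub_cancel]
  have hratio : (t ^ α)⁻¹ * s ^ α ≤ 1 :=
    inv_mul_le_one_of_le₀ (rpow_le_rpow hs hst hα) (rpow_nonneg ht α)
  calc t ^ (-α) * s ^ β = (t ^ α)⁻¹ * s ^ α * s ^ (β - α) := by
        rw [rpow_neg ht, hsplit, mul_assoc]
    _ ≤ s ^ (β - α) := mul_le_of_le_one_left (rpow_nonneg hs _) hratio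

lemma rpow_neg_sub_rpow_neg_le (hs : 0 < s) (hst : s ≤ t) (hα : α ≤ 1) :
    s ^ (-α) - t ^ (-α) ≤ s ^ (-α) * (1 - s / t) := by
  have ht : 0 < t := hs.trans_le hst
  have hratio : s / t ≤ (s / t) ^ α :=
    self_le_rpow_of_le_one (by positivity) (div_le_one_of_le₀ hst ht.le) hα
  calc s ^ (-α) - t ^ (-α) = s ^ (-α) * (1 - (s / t) ^ α) := by
        rw [div_rpow hs.le ht.le, rpow_neg hs.le, rpow_neg ht.le]
        field_simp
    _ ≤ s ^ (-α) * (1 - s / t) := by gcongr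

lemma rpow_mul_one_sub_div_le {γ : ℝ} (hs : 0 ≤ s) (ht : 0 < t) (hst : s ≤ t) (hγ : 0 ≤ γ)
    (hγ1 : γ ≤ 1) : s ^ γ * (1 - s / t) ≤ (t - s) ^ γ := by
  have hratio : 0 ≤ 1 - s / t := sub_nonneg.2 (div_le_one_of_le₀ hst ht.le)
  have hratio_le : 1 - s / t ≤ (1 - s / t) ^ γ :=
    self_le_rpow_of_le_one hratio (sub_le_self 1 (by positivity)) hγ1
  calc s ^ γ * (1 - s / t) ≤ t ^ γ * (1 - s / t) ^ γ := by gcongr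
    _ = (t - s) ^ γ := by rw [← mul_rpow ht.le hratio, mul_one_sub, mul_div_cancel₀ s ht.ne']

lemma abs_rpow_neg_sub_mul_rpow_le (hs : 0 ≤ s) (hst : s ≤ t) (hα : α ∈ Set.Icc 0 1)
    (hβ : β ∈ Set.Ioc α (α + 1)) :
    |t ^ (-α) - s ^ (-α)| * s ^ β ≤ (t - s) ^ (β - α) := by
  obtain ⟨hα0, hα1⟩ := hα
  obtain ⟨hαβ, hβα⟩ := hβ
  rcases hs.eq_or_lt with rfl | hs
  · rw [zero_rpow (hα0.trans_lt hαβ).ne', mul_zero]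
    exact rpow_nonneg (sub_nonneg.2 hst) _
  have ht : 0 < t := hs.trans_le hst
  have hanti : t ^ (-α) ≤ s ^ (-α) := rpow_le_rpow_of_nonpos hs hst (neg_nonpos.2 hα0)
  calc |t ^ (-α) - s ^ (-α)| * s ^ β = (s ^ (-α) - t ^ (-α)) * s ^ β := by
        rw [abs_sub_comm, abs_of_nonneg (sub_nonneg.2 hanti)]
    _ ≤ s ^ (-α) * (1 - s / t) * s ^ β := by
        gcongr
        exact rpow_neg_sub_rpow_neg_le hs hst hα1
    _ = s ^ (β - α) * (1 - s / t) := by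
        rw [mul_right_comm, ← rpow_add hs, neg_add_eq_sub]
    _ ≤ (t - s) ^ (β - α) :=
        rpow_mul_one_sub_div_le hs.le ht hst (sub_nonneg.2 hαβ.le) (sub_le_iff_le_add'.2 hβα)

end Scalar

section NormedSpace

variable {E : Type*} [NormedAddCommGroup E] [NormedSpace ℝ E] {α β c : ℝ}

lemma norm_rpow_neg_smul_sub_le {s t : ℝ} {x y : E} (hs : 0 ≤ s) (hst : s ≤ t)
    (hα : α ∈ Set.Icc 0 1) (hβ : β ∈ Set.Ioc α (α + 1)) (hc : 0 ≤ c)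
    (hx : ‖x‖ ≤ c * s ^ β) (hyx : ‖y - x‖ ≤ c * (t - s) ^ β) :
    ‖t ^ (-α) • y - s ^ (-α) • x‖ ≤ 2 * c * (t - s) ^ (β - α) := by
  have hsplit : t ^ (-α) • y - s ^ (-α) • x
      = t ^ (-α) • (y - x) + (t ^ (-α) - s ^ (-α)) • x := by
    module
  have hincrement : ‖t ^ (-α) • (y - x)‖ ≤ c * (t - s) ^ (β - α) :=
    have ht : 0 ≤ t ^ (-α) := rpow_nonneg (hs.trans hst) _
    calc ‖t ^ (-α) • (y - x)‖ = t ^ (-α) * ‖y - x‖ := norm_smul_of_nonneg ht _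
      _ ≤ t ^ (-α) * (c * (t - s) ^ β) := by gcongr
      _ = c * (t ^ (-α) * (t - s) ^ β) := mul_left_comm _ _ _
      _ ≤ c * (t - s) ^ (β - α) := by
          gcongr
          exact rpow_neg_mul_rpow_le_rpow_sub (sub_nonneg.2 hst) (sub_le_self t hs) hα.1 hβ.1.le
  have hweight : ‖(t ^ (-α) - s ^ (-α)) • x‖ ≤ c * (t - s) ^ (β - α) :=
    calc ‖(t ^ (-α) - s ^ (-α)) • x‖ = |t ^ (-α) - s ^ (-α)| * ‖x‖ := norm_smul _ _
      _ ≤ |t ^ (-α) - s ^ (-α)| * (c * s ^ β) := by gcongr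
      _ = c * (|t ^ (-α) - s ^ (-α)| * s ^ β) := mul_left_comm _ _ _
      _ ≤ c * (t - s) ^ (β - α) := by
          gcongr
          exact abs_rpow_neg_sub_mul_rpow_le hs hst hα hβ
  calc ‖t ^ (-α) • y - s ^ (-α) • x‖
      ≤ c * (t - s) ^ (β - α) + c * (t - s) ^ (β - α) :=
        hsplit ▸ norm_add_le_of_le hincrement hweight
    _ = 2 * c * (t - s) ^ (β - α) := by ring

theorem holder_of_rpow_smul_general {S : Set ℝ} (hS : ∀ t ∈ S, 0 ≤ t) (h0 : 0 ∈ S)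
    {f g : ℝ → E} (hα : α ∈ Set.Icc 0 1) (hβ : β ∈ Set.Ioc α (α + 1)) (hc : 0 ≤ c)
    (hf : ∀ s ∈ S, ∀ t ∈ S, ‖f t - f s‖ ≤ c * |t - s| ^ β) (hf0 : f 0 = 0)
    (hg : ∀ t ∈ S, g t = if 0 < t then t ^ (-α) • f t else 0) :
    ∀ s ∈ S, ∀ t ∈ S, ‖g t - g s‖ ≤ 2 * c * |t - s| ^ (β - α) := by
  have hg_smul : ∀ t ∈ S, g t = t ^ (-α) • f t := by
    intro t ht
    rcases (hS t ht).eq_or_lt with rfl | hpos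
    · simp [hg 0 ht, hf0]
    · rw [hg t ht, if_pos hpos]
  intro s hs t ht
  wlog hst : s ≤ t generalizing s t
  · rw [norm_sub_rev, abs_sub_comm]
    exact this t ht s hs (le_of_not_ge hst)
  have hfs : ‖f s‖ ≤ c * s ^ β := by
    simpa only [hf0, sub_zero, abs_of_nonneg (hS s hs)] using hf 0 h0 s hs
  have hfst := hf s hs t ht
  rw [abs_of_nonneg (sub_nonneg.2 hst)] at hfst ⊢
  rw [hg_smul s hs, hg_smul t ht]
  exact norm_rpow_neg_smul_sub_le (hS s hs) hst hα hβ hc hfs hfst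

end NormedSpace

/-- If `f` is Hölder continuous with exponent `β` on `[0,T]` and `f 0 = 0`, then for
`0 < α < β` the function `t ↦ t^(-α) f t` (set to `0` at `t = 0`) is Hölder continuous
with exponent `β - α` on `[0,T]`. -/
theorem holder_of_rpow_smul
    (T : ℝ) (hT : 0 < T) (f : ℝ → ℝ) (β : ℝ) (hβ : β ∈ Set.Ioc (0 : ℝ) 1)
    (c : ℝ) (hc : 0 ≤ c)
    (hf : ∀ s ∈ Set.Icc (0 : ℝ) T, ∀ t ∈ Set.Icc (0 : ℝ) T, |f t - f s| ≤ c * |t - s| ^ β)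
    (hf0 : f 0 = 0)
    (α : ℝ) (hα : α ∈ Set.Ioo (0 : ℝ) β)
    (g : ℝ → ℝ) (hg : ∀ t, g t = if 0 < t then t ^ (-α) * f t else 0) :
    ∃ c' : ℝ, 0 ≤ c' ∧ ∀ s ∈ Set.Icc (0 : ℝ) T, ∀ t ∈ Set.Icc (0 : ℝ) T,
      |g t - g s| ≤ c' * |t - s| ^ (β - α) := by
  have hβα : β ∈ Set.Ioc α (α + 1) := ⟨hα.2, by linarith [hα.1, hβ.2]⟩
  exact ⟨2 * c, by positivity, holder_of_rpow_smul_general (fun _ ht ↦ ht.1)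
    (Set.left_mem_Icc.2 hT.le) ⟨hα.1.le, hα.2.le.trans hβ.2⟩ hβα hc hf hf0 fun t _ ↦ hg t⟩
end

section
/- Let 0 < α < β ≤ 1 and let 0 < s < t. Then (s^{−α} − t^{−α}) s^β ≤ (α/(β − α)) (t^{β−α} − s^{β−α}), and in particular (s^{−α} − t^{−α}) s^β ≤ (α/(β − α)) (t − s)^{β−α}. -/
open Real

/-!
The bound `p * log x ≤ x ^ p - 1` is the tangent-line inequality of the exponential and holds for
every real `p`. With `x = t / s` it bounds the left-hand side by `α * s ^ (β - α) * log (t / s)`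
when `p = -α`, and bounds this in turn by the middle term when `p = β - α`. The last bound is the
subadditivity of `u ↦ u ^ (β - α)`.
-/

lemma mul_log_le_rpow_sub_one {x : ℝ} (hx : 0 < x) (p : ℝ) : p * log x ≤ x ^ p - 1 := by
  rw [← log_rpow hx]
  exact log_le_sub_one_of_pos (rpow_pos_of_pos hx p)

lemma rpow_mul_log_div_le_rpow_sub_rpow {x y : ℝ} (hx : 0 < x) (hy : 0 < y) (p : ℝ) :
    x ^ p * (p * log (y / x)) ≤ y ^ p - x ^ p :=
  calc
    x ^ p * (p * log (y / x)) ≤ x ^ p * ((y / x) ^ p - 1) := by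
      gcongr
      exact mul_log_le_rpow_sub_one (div_pos hy hx) p
    _ = y ^ p - x ^ p := by
      rw [mul_sub_one, ← mul_rpow hx.le (div_pos hy hx).le, mul_div_cancel₀ y hx.ne']

lemma rpow_sub_rpow_le_sub_rpow {x y p : ℝ} (hx : 0 ≤ x) (hxy : x ≤ y) (hp : 0 ≤ p)
    (hp1 : p ≤ 1) : y ^ p - x ^ p ≤ (y - x) ^ p := by
  simpa only [sub_le_iff_le_add, sub_add_cancel] using
    rpow_add_le_add_rpow (sub_nonneg.2 hxy) hx hp hp1

lemma rpow_neg_sub_rpow_neg_mul_rpow_le {α β s t : ℝ} (hα : 0 ≤ α) (hαβ : α < β) (hs : 0 < s)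
    (ht : 0 < t) :
    (s ^ (-α) - t ^ (-α)) * s ^ β ≤ α / (β - α) * (t ^ (β - α) - s ^ (β - α)) := by
  have hγ : 0 < β - α := sub_pos.2 hαβ
  calc
    (s ^ (-α) - t ^ (-α)) * s ^ β ≤ s ^ (-α) * (α * log (t / s)) * s ^ β := by
      gcongr
      linarith [rpow_mul_log_div_le_rpow_sub_rpow hs ht (-α)]
    _ = α / (β - α) * (s ^ (β - α) * ((β - α) * log (t / s))) := by
      have hpow : s ^ (-α) * s ^ β = s ^ (β - α) := by
        rw [← rpow_add hs, neg_add_eq_sub]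
      rw [← hpow]
      field_simp
    _ ≤ α / (β - α) * (t ^ (β - α) - s ^ (β - α)) := by
      gcongr
      exact rpow_mul_log_div_le_rpow_sub_rpow hs ht (β - α)

theorem rpow_difference_bound_general {α β s t : ℝ} (hα : 0 ≤ α) (hαβ : α < β) (hs : 0 < s)
    (ht : 0 < t) :
    (s ^ (-α) - t ^ (-α)) * s ^ β ≤ α / (β - α) * (t ^ (β - α) - s ^ (β - α)) ∧
      (s ≤ t → β - α ≤ 1 →
        (s ^ (-α) - t ^ (-α)) * s ^ β ≤ α / (β - α) * (t - s) ^ (β - α)) := by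
  have hγ : 0 < β - α := sub_pos.2 hαβ
  have hdiff := rpow_neg_sub_rpow_neg_mul_rpow_le hα hαβ hs ht
  refine ⟨hdiff, fun hst hγ1 ↦ hdiff.trans ?_⟩
  gcongr
  exact rpow_sub_rpow_le_sub_rpow hs.le hst hγ.le hγ1

/-- For `0 < α < β ≤ 1` and `0 < s < t`, one has
`(s^(-α) - t^(-α)) s^β ≤ (α/(β-α)) (t^(β-α) - s^(β-α)) ≤ (α/(β-α)) (t-s)^(β-α)`. -/
theorem rpow_difference_bound
    (α β : ℝ) (hα : 0 < α) (hαβ : α < β) (hβ : β ≤ 1)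
    (s t : ℝ) (hs : 0 < s) (hst : s < t) :
    (s ^ (-α) - t ^ (-α)) * s ^ β ≤ α / (β - α) * (t ^ (β - α) - s ^ (β - α)) ∧
      (s ^ (-α) - t ^ (-α)) * s ^ β ≤ α / (β - α) * (t - s) ^ (β - α) :=
  (rpow_difference_bound_general hα.le hαβ hs (hs.trans hst)).imp_right
    fun h ↦ h hst.le (by linarith)
end
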